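/- arXiv:2504.06506 — 6 statements merged into one kernel-verified Lean document; each statement's English description precedes it below -/
import Mathlib

section
/- Let S be a densely defined, closed, symmetric operator in a complex Hilbert space H whose deficiency indices n₊(S) = dim ker(S* − i) and n₋(S) = dim ker(S* + i) are both finite. Then for every k ∈ ℕ, k ≥ 1, the power S^{2k+1} is densely defined, symmetric, and closed, it satisfies ‖S^{2k+1}f ± i f‖ ≥ ‖f‖ for all f ∈ dom(S^{2k+1}) (both signs), and its deficiency indices are n₊(S^{2k+1}) = k·(n₊(S) + n₋(S)) + n₊(S) and n₋(S^{2k+1}) = k·(n₊(S) + n₋(S)) + n₋(S). -/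
open scoped InnerProductSpace
open Cardinal

noncomputable section

variable {E F G H : Type*}
  [NormedAddCommGroup E] [InnerProductSpace ℂ E] [CompleteSpace E]
  [NormedAddCommGroup F] [InnerProductSpace ℂ F] [CompleteSpace F]
  [NormedAddCommGroup G] [InnerProductSpace ℂ G] [CompleteSpace G]
  [NormedAddCommGroup H] [InnerProductSpace ℂ H] [CompleteSpace H]

/-- The product (composition) `T₂T₁` of two partially defined linear operators, with domain
`dom(T₂T₁) = {f ∈ dom T₁ | T₁ f ∈ dom T₂}` and value `(T₂T₁) f = T₂ (T₁ f)`. -/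
def pcomp {E F G : Type*}
    [NormedAddCommGroup E] [InnerProductSpace ℂ E]
    [NormedAddCommGroup F] [InnerProductSpace ℂ F]
    [NormedAddCommGroup G] [InnerProductSpace ℂ G]
    (T₂ : F →ₗ.[ℂ] G) (T₁ : E →ₗ.[ℂ] F) : E →ₗ.[ℂ] G where
  domain := (T₂.domain.comap T₁.toFun).map T₁.domain.subtype
  toFun := T₂.toFun ∘ₗ
    (T₁.toFun.restrict (p := T₂.domain.comap T₁.toFun) (q := T₂.domain) fun _ hx => hx) ∘ₗ
    (Submodule.equivMapOfInjective T₁.domain.subtype (Submodule.injective_subtype _)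
      (T₂.domain.comap T₁.toFun)).symm.toLinearMap

/-- The identity as a partially defined operator (domain all of `X`). -/
def pid (X : Type*) [NormedAddCommGroup X] [InnerProductSpace ℂ X] : X →ₗ.[ℂ] X :=
  ⟨⊤, (⊤ : Submodule ℂ X).subtype⟩

/-- Powers of a partially defined operator: `S⁰ = I`, `S¹ = S`, and recursively
`dom(S^m) = {f ∈ dom(S^{m-1}) | S^{m-1} f ∈ dom S}`, `S^m f = S (S^{m-1} f)`. -/
def pmapPow {X : Type*} [NormedAddCommGroup X] [InnerProductSpace ℂ X]
    (S : X →ₗ.[ℂ] X) : ℕ → X →ₗ.[ℂ] X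
  | 0 => pid X
  | 1 => S
  | (n + 2) => pcomp S (pmapPow S (n + 1))

/-- The kernel of `A - μ·I` as a submodule of the domain of `A`. -/
def kerAt {X : Type*} [NormedAddCommGroup X] [InnerProductSpace ℂ X]
    (A : X →ₗ.[ℂ] X) (μ : ℂ) : Submodule ℂ A.domain :=
  LinearMap.ker (A.toFun - μ • A.domain.subtype)

/-- Deficiency index `n₊(S) = dim ker(S* - i·I)`, a Hilbert-space dimension as a cardinal. -/
def nPlus (S : H →ₗ.[ℂ] H) : Cardinal := Module.rank ℂ (kerAt S.adjoint Complex.I)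

/-- Deficiency index `n₋(S) = dim ker(S* + i·I)`, a Hilbert-space dimension as a cardinal. -/
def nMinus (S : H →ₗ.[ℂ] H) : Cardinal := Module.rank ℂ (kerAt S.adjoint (-Complex.I))

/-- The symmetry condition `⟪Sf, g⟫ = ⟪f, Sg⟫` for all `f, g` in the domain of `S`. -/
def IsSymmP {X : Type*} [NormedAddCommGroup X] [InnerProductSpace ℂ X]
    (S : X →ₗ.[ℂ] X) : Prop :=
  ∀ f g : S.domain, ⟪S f, (g : X)⟫_ℂ = ⟪(f : X), S g⟫_ℂ

/-- The defect number of `T` at `0`: `def(T,0) = dim ker(T*)`, as a cardinal. -/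
def defect0 (T : E →ₗ.[ℂ] F) : Cardinal := Module.rank ℂ (LinearMap.ker T.adjoint.toFun)

/-- `0` belongs to the field of regularity of `T`: there is `c > 0` with
`‖T f‖ ≥ c ‖f‖` for all `f ∈ dom T`. -/
def ZeroRegular {X Y : Type*} [NormedAddCommGroup X] [InnerProductSpace ℂ X]
    [NormedAddCommGroup Y] [InnerProductSpace ℂ Y] (T : X →ₗ.[ℂ] Y) : Prop :=
  ∃ c : ℝ, 0 < c ∧ ∀ f : T.domain, c * ‖(f : X)‖ ≤ ‖T f‖

/-- `T` is Fredholm: densely defined, closed, with closed range, and finite-dimensional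
kernel and cokernel (= kernel of the adjoint). -/
def IsFredholmP (T : E →ₗ.[ℂ] F) : Prop :=
  Dense (T.domain : Set E) ∧ T.IsClosed ∧
    IsClosed ((LinearMap.range T.toFun : Submodule ℂ F) : Set F) ∧
    Module.rank ℂ (LinearMap.ker T.toFun) < ℵ₀ ∧
    Module.rank ℂ (LinearMap.ker T.adjoint.toFun) < ℵ₀

/-- `T` is left semi-Fredholm: densely defined, closed, with closed range and
finite-dimensional kernel. -/
def IsLeftSemiFredholmP (T : E →ₗ.[ℂ] F) : Prop :=
  Dense (T.domain : Set E) ∧ T.IsClosed ∧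
    IsClosed ((LinearMap.range T.toFun : Submodule ℂ F) : Set F) ∧
    Module.rank ℂ (LinearMap.ker T.toFun) < ℵ₀

/-- The (semi-)Fredholm index `ind(T) = dim ker T - dim ker T*` (as an integer,
via `finrank`). -/
def indP (T : E →ₗ.[ℂ] F) : ℤ :=
  (Module.finrank ℂ (LinearMap.ker T.toFun) : ℤ) -
    (Module.finrank ℂ (LinearMap.ker T.adjoint.toFun) : ℤ)


set_option linter.unusedSectionVars false

/-- A dense subspace and a closed subspace of finite codimension span everything. -/
theorem aux_dense_sup (M K : Submodule ℂ H) (hM : Dense (M : Set H))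
    (hK : IsClosed (K : Set H)) (hf : FiniteDimensional ℂ (H ⧸ K)) : M ⊔ K = ⊤ := by
  have h1 : IsClosed ((M ⊔ K : Submodule ℂ H) : Set H) :=
    Submodule.isClosed_mono_of_finiteDimensional_quotient hK le_sup_right
  have h2 : Dense ((M ⊔ K : Submodule ℂ H) : Set H) := hM.mono (by
    intro x hx; exact (le_sup_left : M ≤ M ⊔ K) hx)
  have h3 := h2.closure_eq
  rw [h1.closure_eq] at h3
  exact SetLike.coe_injective (by simpa using h3)

/-- A dense subspace meets a closed subspace of finite codimension densely. -/
theorem aux_dense_inter (M K : Submodule ℂ H) (hM : Dense (M : Set H))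
    (hK : IsClosed (K : Set H)) (hf : FiniteDimensional ℂ (H ⧸ K)) :
    (K : Set H) ⊆ closure ((M ⊓ K : Submodule ℂ H) : Set H) := by
  -- a finite-dimensional complement of K inside M
  obtain ⟨F, hF⟩ := Submodule.exists_isCompl (K.comap M.subtype)
  have hFfin : FiniteDimensional ℂ F := by
    let φ : F →ₗ[ℂ] H ⧸ K := K.mkQ ∘ₗ M.subtype ∘ₗ F.subtype
    have hφ : Function.Injective φ := by
      rw [← LinearMap.ker_eq_bot, LinearMap.ker_eq_bot']
      intro x hx
      have hx' : ((x : M) : H) ∈ K := by simpa [φ] using hx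
      have : (x : M) ∈ (K.comap M.subtype) ⊓ F := ⟨hx', x.2⟩
      rw [hF.inf_eq_bot] at this
      exact Subtype.ext (by simpa using this)
    exact FiniteDimensional.of_injective φ hφ
  let F' : Submodule ℂ H := F.map M.subtype
  have hF'M : F' ≤ M := by
    rintro _ ⟨y, _, rfl⟩; exact y.2
  let N : Submodule ℂ H := (M ⊓ K).topologicalClosure
  have hNK : N ≤ K := Submodule.topologicalClosure_minimal _ inf_le_right hK
  have hcl : IsClosed ((N ⊔ F' : Submodule ℂ H) : Set H) :=
    Submodule.isClosed_sup_finiteDimensional _ _ (Submodule.isClosed_topologicalClosure _)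
  have hMle : M ≤ N ⊔ F' := by
    intro x hx
    have : (⟨x, hx⟩ : M) ∈ (K.comap M.subtype) ⊔ F := by rw [hF.sup_eq_top]; trivial
    obtain ⟨a, ha, b, hb, hab⟩ := Submodule.mem_sup.1 this
    refine Submodule.mem_sup.2 ⟨a, ?_, b, ⟨b, hb, rfl⟩, ?_⟩
    · exact Submodule.le_topologicalClosure _ ⟨a.2, ha⟩
    · simpa using congrArg Subtype.val hab
  have htop : N ⊔ F' = ⊤ := by
    have h2 := (hM.mono (s₂ := ((N ⊔ F' : Submodule ℂ H) : Set H)) hMle).closure_eq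
    rw [hcl.closure_eq] at h2
    exact SetLike.coe_injective (by simpa using h2)
  intro x hx
  have : x ∈ N ⊔ F' := by rw [htop]; trivial
  obtain ⟨a, ha, b, ⟨c, hc, hcb⟩, hab⟩ := Submodule.mem_sup.1 this
  have hbK : b ∈ K := by
    have : b = x - a := by rw [← hab]; abel
    rw [this]; exact K.sub_mem hx (hNK ha)
  have hc0 : c ∈ (K.comap M.subtype) ⊓ F := ⟨by
    change M.subtype c ∈ K
    rw [hcb]; exact hbK, hc⟩
  rw [hF.inf_eq_bot] at hc0
  have hb0 : b = 0 := by
    rw [← hcb, (Submodule.mem_bot ℂ).1 hc0]; simp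
  have : x = a := by rw [← hab, hb0, add_zero]
  rw [this]
  exact ha

/-- Codimension of the image of a subspace under an injective map. -/
theorem aux_rank_comp (B : H →ₗ[ℂ] H) (M K : Submodule ℂ H)
    (hinj : ∀ f ∈ M, B f = 0 → f = 0) (hsup : M ⊔ K = ⊤) :
    Module.rank ℂ (H ⧸ (M ⊓ K).map B) =
      Module.rank ℂ (H ⧸ M.map B) + Module.rank ℂ (H ⧸ K) := by
  have hle : (M ⊓ K).map B ≤ M.map B := Submodule.map_mono inf_le_left
  let q : (H ⧸ (M ⊓ K).map B) →ₗ[ℂ] (H ⧸ M.map B) := Submodule.mapQ _ _ LinearMap.id hle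
  have hq : Function.Surjective q := by
    intro y
    obtain ⟨y, rfl⟩ := Submodule.mkQ_surjective _ y
    exact ⟨Submodule.mkQ _ y, by simp [q]⟩
  let K' : Submodule ℂ M := K.comap M.subtype
  have hjk : K' ≤ ((M ⊓ K).map B).comap (B ∘ₗ M.subtype) := by
    intro x hx
    have hx' : (x : H) ∈ K := hx
    exact Submodule.mem_map_of_mem (f := B) (show (x : H) ∈ M ⊓ K from ⟨x.2, hx'⟩)
  let j : (M ⧸ K') →ₗ[ℂ] (H ⧸ (M ⊓ K).map B) :=
    Submodule.mapQ _ _ (B ∘ₗ M.subtype) hjk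
  have hja : ∀ x : M, j (Submodule.mkQ _ x) = Submodule.mkQ _ (B x) := fun _ => rfl
  have hqa : ∀ x : H, q (Submodule.mkQ _ x) = Submodule.mkQ _ x := fun _ => rfl
  have hj : Function.Injective j := by
    rw [← LinearMap.ker_eq_bot, LinearMap.ker_eq_bot']
    intro x hx
    obtain ⟨x, rfl⟩ := Submodule.mkQ_surjective _ x
    rw [hja] at hx
    have : B x ∈ (M ⊓ K).map B := (Submodule.Quotient.mk_eq_zero _).1 hx
    obtain ⟨y, ⟨hyM, hyK⟩, hy⟩ := this
    have h0 := hinj ((x : H) - y) (M.sub_mem x.2 hyM) (by rw [map_sub, hy, sub_self])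
    have : (x : H) = y := sub_eq_zero.1 h0
    have hxK : x ∈ K' := by
      change (x : H) ∈ K
      rw [this]; exact hyK
    simpa using hxK
  have hker : LinearMap.ker q = LinearMap.range j := by
    ext y
    obtain ⟨y, rfl⟩ := Submodule.mkQ_surjective _ y
    constructor
    · intro hy
      have : y ∈ M.map B := by simpa [q] using hy
      obtain ⟨m, hm, rfl⟩ := this
      exact ⟨Submodule.mkQ _ ⟨m, hm⟩, hja _⟩
    · rintro ⟨x, hx⟩
      obtain ⟨x, rfl⟩ := Submodule.mkQ_surjective _ x
      rw [← hx, hja, LinearMap.mem_ker, hqa]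
      exact (Submodule.Quotient.mk_eq_zero _).2 ⟨x, x.2, rfl⟩
  let r : (M ⧸ K') →ₗ[ℂ] (H ⧸ K) := Submodule.mapQ _ _ M.subtype le_rfl
  have hr : Function.Bijective r := by
    constructor
    · rw [← LinearMap.ker_eq_bot, LinearMap.ker_eq_bot']
      intro x hx
      obtain ⟨x, rfl⟩ := Submodule.mkQ_surjective _ x
      have : (x : H) ∈ K := by simpa [r] using hx
      have hxK : x ∈ K' := this
      simpa using hxK
    · intro y
      obtain ⟨y, rfl⟩ := Submodule.mkQ_surjective _ y
      have : y ∈ M ⊔ K := by rw [hsup]; trivial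
      obtain ⟨a, ha, b, hb, rfl⟩ := Submodule.mem_sup.1 this
      refine ⟨Submodule.mkQ _ ⟨a, ha⟩, ?_⟩
      simp only [r, Submodule.mkQ_apply, Submodule.mapQ_apply]
      rw [Submodule.Quotient.eq]
      simpa using hb
  have e1 := LinearMap.rank_range_add_rank_ker q
  rw [rank_range_of_surjective q hq, hker, ← (LinearEquiv.ofInjective j hj).rank_eq] at e1
  rw [← e1, (LinearEquiv.ofBijective r hr).rank_eq]

/-- The basic estimate for symmetric operators. -/
theorem aux_bound (A : H →ₗ[ℂ] H) (M : Submodule ℂ H)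
    (hs : ∀ f ∈ M, ∀ g ∈ M, ⟪A f, g⟫_ℂ = ⟪f, A g⟫_ℂ) (z : ℂ) (f : H) (hf : f ∈ M) :
    |z.im| * ‖f‖ ≤ ‖(A - z • (1 : H →ₗ[ℂ] H)) f‖ := by
  have h1 : (⟪f, A f⟫_ℂ).im = 0 := by
    have := hs f hf f hf
    rw [← inner_conj_symm] at this
    exact Complex.conj_eq_iff_im.1 this
  have h2 : (⟪f, (A - z • (1 : H →ₗ[ℂ] H)) f⟫_ℂ).im = - (z.im * ‖f‖ ^ 2) := by
    have h3 : ⟪f, f⟫_ℂ = ((‖f‖ ^ 2 : ℝ) : ℂ) := by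
      rw [inner_self_eq_norm_sq_to_K]; simp
    simp only [LinearMap.sub_apply, LinearMap.smul_apply, Module.End.one_apply, inner_sub_right,
      inner_smul_right, h3, Complex.sub_im, h1, Complex.im_mul_ofReal]
    ring
  have h4 : |z.im| * ‖f‖ ^ 2 ≤ ‖f‖ * ‖(A - z • (1 : H →ₗ[ℂ] H)) f‖ := by
    calc |z.im| * ‖f‖ ^ 2 = |(⟪f, (A - z • (1 : H →ₗ[ℂ] H)) f⟫_ℂ).im| := by
          rw [h2, abs_neg, abs_mul, abs_of_nonneg (sq_nonneg ‖f‖)]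
      _ ≤ ‖⟪f, (A - z • (1 : H →ₗ[ℂ] H)) f⟫_ℂ‖ := Complex.abs_im_le_norm _
      _ ≤ _ := norm_inner_le_norm _ _
  rcases eq_or_lt_of_le (norm_nonneg f) with h | h
  · rw [← h]; simp
  · nlinarith

theorem aux_inj (A : H →ₗ[ℂ] H) (M : Submodule ℂ H)
    (hs : ∀ f ∈ M, ∀ g ∈ M, ⟪A f, g⟫_ℂ = ⟪f, A g⟫_ℂ) (z : ℂ) (hz : z.im ≠ 0) (f : H)
    (hf : f ∈ M) (h0 : (A - z • (1 : H →ₗ[ℂ] H)) f = 0) : f = 0 := by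
  have := aux_bound A M hs z f hf
  rw [h0, norm_zero] at this
  have h1 : 0 < |z.im| := abs_pos.2 hz
  have : ‖f‖ ≤ 0 := by nlinarith
  exact norm_le_zero_iff.1 this

/-- Images of closed subspaces under `A - z` are closed. -/
theorem aux_closed_map (A : H →ₗ[ℂ] H) (M K : Submodule ℂ H)
    (hs : ∀ f ∈ M, ∀ g ∈ M, ⟪A f, g⟫_ℂ = ⟪f, A g⟫_ℂ)
    (hc : IsClosed {x : H × H | x.1 ∈ M ∧ x.2 = A x.1})
    (z : ℂ) (hz : z.im ≠ 0) (hK : IsClosed (K : Set H)) :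
    IsClosed (((M ⊓ K).map (A - z • (1 : H →ₗ[ℂ] H)) : Submodule ℂ H) : Set H) := by
  rw [← isSeqClosed_iff_isClosed]
  intro y y0 hy hlim
  choose g hg hgy using hy
  have hzp : 0 < |z.im| := abs_pos.2 hz
  have hcau : CauchySeq g := by
    have hyc := hlim.cauchySeq
    rw [Metric.cauchySeq_iff] at hyc ⊢
    intro ε hε
    obtain ⟨N, hN⟩ := hyc (|z.im| * ε) (by positivity)
    refine ⟨N, fun m hm n hn => ?_⟩
    have h1 := hN m hm n hn
    have h2 := aux_bound A M hs z (g m - g n) (M.sub_mem (hg m).1 (hg n).1)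
    rw [map_sub, hgy, hgy] at h2
    rw [dist_eq_norm] at h1 ⊢
    exact lt_of_mul_lt_mul_left (h2.trans_lt h1) hzp.le
  obtain ⟨g0, hg0⟩ := cauchySeq_tendsto_of_complete hcau
  have hA : Filter.Tendsto (fun n => (g n, A (g n))) Filter.atTop (nhds (g0, y0 + z • g0)) := by
    refine hg0.prodMk_nhds ?_
    have h1 : (fun n => A (g n)) = fun n => y n + z • g n := by
      funext n
      rw [← hgy n]; simp
    rw [h1]
    exact hlim.add (hg0.const_smul z)
  have hmem := hc.mem_of_tendsto hA (Filter.Eventually.of_forall fun n => ⟨(hg n).1, rfl⟩)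
  have hK0 : g0 ∈ K := hK.mem_of_tendsto hg0 (Filter.Eventually.of_forall fun n => (hg n).2)
  refine ⟨g0, ⟨hmem.1, hK0⟩, ?_⟩
  have h2 : y0 + z • g0 = A g0 := hmem.2
  simp [← h2]

/-- A symmetric operator with a closed range of `A - z` is closed. -/
theorem aux_closed_graph (A : H →ₗ[ℂ] H) (M : Submodule ℂ H)
    (hs : ∀ f ∈ M, ∀ g ∈ M, ⟪A f, g⟫_ℂ = ⟪f, A g⟫_ℂ)
    (z : ℂ) (hz : z.im ≠ 0)
    (hr : IsClosed ((M.map (A - z • (1 : H →ₗ[ℂ] H)) : Submodule ℂ H) : Set H)) :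
    IsClosed {x : H × H | x.1 ∈ M ∧ x.2 = A x.1} := by
  rw [← isSeqClosed_iff_isClosed]
  intro x x0 hx hlim
  have hzp : 0 < |z.im| := abs_pos.2 hz
  have hl1 : Filter.Tendsto (fun n => (x n).1) Filter.atTop (nhds x0.1) :=
    (continuous_fst.tendsto _).comp hlim
  have hl2 : Filter.Tendsto (fun n => (x n).2) Filter.atTop (nhds x0.2) :=
    (continuous_snd.tendsto _).comp hlim
  have hl3 := hl2.sub (hl1.const_smul z)
  have hB : ∀ n, (x n).2 - z • (x n).1 = (A - z • (1 : H →ₗ[ℂ] H)) (x n).1 := by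
    intro n; rw [(hx n).2]; simp
  obtain ⟨h, hh, hhe⟩ := hr.mem_of_tendsto hl3
    (Filter.Eventually.of_forall fun n => ⟨(x n).1, (hx n).1, (hB n).symm⟩)
  have hl4 : Filter.Tendsto (fun n => (x n).1) Filter.atTop (nhds h) := by
    rw [tendsto_iff_norm_sub_tendsto_zero]
    have h5 : Filter.Tendsto (fun n => |z.im|⁻¹ * ‖((x n).2 - z • (x n).1) - (x0.2 - z • x0.1)‖)
        Filter.atTop (nhds 0) := by
      simpa using (tendsto_iff_norm_sub_tendsto_zero.1 hl3).const_mul (|z.im|⁻¹)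
    refine squeeze_zero (fun _ => norm_nonneg _) (fun n => ?_) h5
    have := aux_bound A M hs z ((x n).1 - h) (M.sub_mem (hx n).1 hh)
    rw [map_sub, ← hB, hhe] at this
    rw [inv_mul_eq_div, le_div_iff₀ hzp, mul_comm]
    exact this
  have heq := tendsto_nhds_unique hl1 hl4
  refine ⟨by rw [heq]; exact hh, ?_⟩
  rw [← heq] at hhe
  have : A x0.1 - z • x0.1 = x0.2 - z • x0.1 := by simpa using hhe
  exact (sub_left_inj.1 this).symm

theorem aux_rank_perp (K : Submodule ℂ H) (hK : IsClosed (K : Set H)) :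
    Module.rank ℂ (H ⧸ K) = Module.rank ℂ Kᗮ := by
  have : CompleteSpace K := hK.completeSpace_coe
  exact (Submodule.quotientEquivOfIsCompl K Kᗮ
    K.isCompl_orthogonal).rank_eq

/-- Local comparison of codimensions. -/
theorem aux_loc (A : H →ₗ[ℂ] H) (M : Submodule ℂ H)
    (hs : ∀ f ∈ M, ∀ g ∈ M, ⟪A f, g⟫_ℂ = ⟪f, A g⟫_ℂ)
    (hc : IsClosed {x : H × H | x.1 ∈ M ∧ x.2 = A x.1})
    (z w : ℂ) (hw : w.im ≠ 0) (hzw : ‖z - w‖ < |z.im|) :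
    Module.rank ℂ (H ⧸ M.map (A - w • (1 : H →ₗ[ℂ] H))) ≤
      Module.rank ℂ (H ⧸ M.map (A - z • (1 : H →ₗ[ℂ] H))) := by
  have hcw : IsClosed ((M.map (A - w • (1 : H →ₗ[ℂ] H)) : Submodule ℂ H) : Set H) := by
    simpa using aux_closed_map A M ⊤ hs hc w hw (by simp)
  rw [aux_rank_perp _ hcw]
  let φ : ((M.map (A - w • (1 : H →ₗ[ℂ] H)))ᗮ : Submodule ℂ H) →ₗ[ℂ]
      (H ⧸ M.map (A - z • (1 : H →ₗ[ℂ] H))) := Submodule.mkQ _ ∘ₗ Submodule.subtype _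
  refine LinearMap.rank_le_of_injective φ ?_
  rw [← LinearMap.ker_eq_bot, LinearMap.ker_eq_bot']
  rintro ⟨x, hx⟩ hx0
  have hx1 : x ∈ M.map (A - z • (1 : H →ₗ[ℂ] H)) := (Submodule.Quotient.mk_eq_zero _).1 hx0
  obtain ⟨f, hf, hfx⟩ := hx1
  have hb := aux_bound A M hs z f hf
  rw [hfx] at hb
  have h1 : ⟪(A - w • (1 : H →ₗ[ℂ] H)) f, x⟫_ℂ = 0 :=
    (Submodule.mem_orthogonal _ _).1 hx _ ⟨f, hf, rfl⟩
  have h2 : (A - w • (1 : H →ₗ[ℂ] H)) f = x + (z - w) • f := by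
    rw [← hfx]; simp [sub_smul]
  rw [h2, inner_add_left] at h1
  have h3 : ⟪x, x⟫_ℂ = - ⟪(z - w) • f, x⟫_ℂ := eq_neg_of_add_eq_zero_left h1
  have h4 : ‖x‖ ^ 2 ≤ ‖z - w‖ * ‖f‖ * ‖x‖ := by
    have h5 : ‖⟪x, x⟫_ℂ‖ = ‖x‖ ^ 2 := by
      rw [inner_self_eq_norm_sq_to_K]; simp
    rw [← h5, h3, norm_neg, ← norm_smul]
    exact norm_inner_le_norm _ _
  have hx00 : x = 0 := by
    by_contra hne
    have hxp : 0 < ‖x‖ := norm_pos_iff.2 hne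
    have h6 : ‖x‖ ≤ ‖z - w‖ * ‖f‖ := by nlinarith
    have hfp : 0 < ‖f‖ := by
      rcases eq_or_lt_of_le (norm_nonneg f) with h | h
      · rw [← h, mul_zero] at h6; linarith
      · exact h
    nlinarith
  exact Subtype.ext hx00

/-- Constancy of the codimension on each half plane (given by a sign `s`). -/
theorem aux_const (A : H →ₗ[ℂ] H) (M : Submodule ℂ H)
    (hs : ∀ f ∈ M, ∀ g ∈ M, ⟪A f, g⟫_ℂ = ⟪f, A g⟫_ℂ)
    (hc : IsClosed {x : H × H | x.1 ∈ M ∧ x.2 = A x.1})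
    (s : ℝ) (z w : ℂ) (hz : 0 < s * z.im) (hw : 0 < s * w.im) :
    Module.rank ℂ (H ⧸ M.map (A - z • (1 : H →ₗ[ℂ] H))) =
      Module.rank ℂ (H ⧸ M.map (A - w • (1 : H →ₗ[ℂ] H))) := by
  let U : Set ℂ := {z | 0 < s * z.im}
  have hU : Convex ℝ U := by
    intro x hx y hy a b ha hb hab
    have hx' : 0 < s * x.im := hx
    have hy' : 0 < s * y.im := hy
    change 0 < s * (a • x + b • y).im
    have : s * (a • x + b • y).im = a * (s * x.im) + b * (s * y.im) := by
      simp; ring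
    rw [this]
    rcases eq_or_lt_of_le ha with h | h
    · have : b = 1 := by linarith
      rw [← h, this]; linarith
    · have := mul_pos h hx'
      have := mul_nonneg hb hy'.le
      linarith
  have : PreconnectedSpace U := Subtype.preconnectedSpace hU.isPreconnected
  let d : U → Cardinal := fun z => Module.rank ℂ (H ⧸ M.map (A - (z : ℂ) • (1 : H →ₗ[ℂ] H)))
  have hd : IsLocallyConstant d := by
    rw [IsLocallyConstant.iff_eventually_eq]
    intro x
    have hne : ∀ u : U, (u : ℂ).im ≠ 0 := by
      intro u h
      have h2 : 0 < s * (u : ℂ).im := u.2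
      rw [h, mul_zero] at h2
      exact lt_irrefl _ h2
    have hxp : 0 < |(x : ℂ).im| / 2 := by
      have := abs_pos.2 (hne x); positivity
    filter_upwards [Metric.ball_mem_nhds x hxp] with y hy
    have hy' : ‖(y : ℂ) - x‖ < |(x : ℂ).im| / 2 := by
      have : dist y x < |(x : ℂ).im| / 2 := hy
      rwa [Subtype.dist_eq, dist_eq_norm] at this
    have him : |(x : ℂ).im| - |(y : ℂ).im| ≤ ‖(y : ℂ) - x‖ := by
      refine (abs_sub_abs_le_abs_sub _ _).trans ?_
      rw [abs_sub_comm, ← Complex.sub_im]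
      exact Complex.abs_im_le_norm _
    apply le_antisymm
    · refine aux_loc A M hs hc x y (hne y) ?_
      rw [norm_sub_rev]; linarith
    · refine aux_loc A M hs hc y x (hne x) ?_
      linarith
  exact hd.apply_eq_of_preconnectedSpace (⟨z, hz⟩ : U) ⟨w, hw⟩

/-- Domain of the `n`-th power. -/
def powDom {X : Type*} [AddCommGroup X] [Module ℂ X] (A : X →ₗ[ℂ] X) (M : Submodule ℂ X)
    (n : ℕ) : Submodule ℂ X where
  carrier := {f | ∀ j < n, (A ^ j) f ∈ M}
  zero_mem' := by intro j _; simp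
  add_mem' := by
    intro a b ha hb j hj
    rw [map_add]; exact M.add_mem (ha j hj) (hb j hj)
  smul_mem' := by
    intro c a ha j hj
    rw [map_smul]; exact M.smul_mem c (ha j hj)

theorem mem_powDom (A : H →ₗ[ℂ] H) (M : Submodule ℂ H) (n : ℕ) (f : H) :
    f ∈ powDom A M n ↔ ∀ j < n, (A ^ j) f ∈ M := Iff.rfl

theorem mem_powDom_succ (A : H →ₗ[ℂ] H) (M : Submodule ℂ H) (n : ℕ) (f : H) :
    f ∈ powDom A M (n + 1) ↔ f ∈ powDom A M n ∧ (A ^ n) f ∈ M := by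
  simp only [mem_powDom]
  constructor
  · intro h; exact ⟨fun j hj => h j (by omega), h n (by omega)⟩
  · rintro ⟨h1, h2⟩ j hj
    rcases Nat.lt_succ_iff_lt_or_eq.1 hj with h | h
    · exact h1 j h
    · rw [h]; exact h2

theorem powDom_symm (A : H →ₗ[ℂ] H) (M : Submodule ℂ H)
    (hs : ∀ f ∈ M, ∀ g ∈ M, ⟪A f, g⟫_ℂ = ⟪f, A g⟫_ℂ) (n : ℕ) :
    ∀ f ∈ powDom A M n, ∀ g ∈ powDom A M n, ⟪(A ^ n) f, g⟫_ℂ = ⟪f, (A ^ n) g⟫_ℂ := by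
  induction n with
  | zero => intro f _ g _; simp
  | succ n ih =>
    intro f hf g hg
    have hf' := (mem_powDom_succ A M n f).1 hf
    have hg0 : g ∈ M := by simpa using hg 0 (by omega)
    have hAg : A g ∈ powDom A M n := by
      intro j hj
      have := hg (j + 1) (by omega)
      rwa [pow_succ] at this
    rw [pow_succ', Module.End.mul_apply, hs _ hf'.2 _ hg0, ih f hf'.1 _ hAg, ← Module.End.mul_apply,
      ← pow_succ, pow_succ']

/-- The product of the operators `A - z j`, `j < m`. -/
def prodOp {X : Type*} [AddCommGroup X] [Module ℂ X] (A : X →ₗ[ℂ] X) (z : ℕ → ℂ) :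
    ℕ → (X →ₗ[ℂ] X)
  | 0 => 1
  | (m + 1) => (A - z m • (1 : X →ₗ[ℂ] X)) * prodOp A z m

theorem prodOp_eq_aeval (A : H →ₗ[ℂ] H) (z : ℕ → ℂ) (m : ℕ) :
    prodOp A z m = Polynomial.aeval A
      (∏ j ∈ Finset.range m, (Polynomial.X - Polynomial.C (z j))) := by
  induction m with
  | zero => simp [prodOp]
  | succ m ih =>
    rw [Finset.prod_range_succ, mul_comm, map_mul, ← ih, prodOp]
    congr 1
    simp [Algebra.algebraMap_eq_smul_one]

theorem prodOp_sub_mem (A : H →ₗ[ℂ] H) (z : ℕ → ℂ) (f : H) (m : ℕ) :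
    prodOp A z m f - (A ^ m) f ∈ Submodule.span ℂ ((fun j => (A ^ j) f) '' Set.Iio m) := by
  induction m with
  | zero => simp [prodOp]
  | succ m ih =>
    let V : ℕ → Submodule ℂ H := fun m => Submodule.span ℂ ((fun j => (A ^ j) f) '' Set.Iio m)
    have hmono : V m ≤ V (m + 1) := Submodule.span_mono (Set.image_mono (by
      intro j hj; simp only [Set.mem_Iio] at *; omega))
    have hA : V m ≤ (V (m + 1)).comap A := by
      refine Submodule.span_le.2 ?_
      rintro _ ⟨j, hj, rfl⟩
      refine Submodule.subset_span ⟨j + 1, ?_, ?_⟩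
      · simp only [Set.mem_Iio] at *; omega
      · simp only [pow_succ', Module.End.mul_apply]
    have hm : (A ^ m) f ∈ V (m + 1) := Submodule.subset_span ⟨m, by simp, rfl⟩
    have h1 : A (prodOp A z m f - (A ^ m) f) ∈ V (m + 1) := hA ih
    have h2 : prodOp A z m f ∈ V (m + 1) := by
      have := (V (m + 1)).add_mem (hmono ih) hm
      simpa using this
    have h3 := (V (m + 1)).sub_mem h1 ((V (m + 1)).smul_mem (z m) h2)
    have h4 : prodOp A z (m + 1) f - (A ^ (m + 1)) f =
        A (prodOp A z m f - (A ^ m) f) - z m • prodOp A z m f := by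
      simp only [prodOp, pow_succ', Module.End.mul_apply, LinearMap.sub_apply,
        LinearMap.smul_apply, Module.End.one_apply, map_sub]
      abel
    rw [h4]
    exact h3

theorem mem_powDom_succ_prod (A : H →ₗ[ℂ] H) (M : Submodule ℂ H) (z : ℕ → ℂ) (n : ℕ) (f : H) :
    f ∈ powDom A M (n + 1) ↔ f ∈ powDom A M n ∧ prodOp A z n f ∈ M := by
  rw [mem_powDom_succ]
  refine and_congr_right fun hf => ?_
  have h1 : prodOp A z n f - (A ^ n) f ∈ M := by
    have hle : Submodule.span ℂ ((fun j => (A ^ j) f) '' Set.Iio n) ≤ M := by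
      refine Submodule.span_le.2 ?_
      rintro _ ⟨j, hj, rfl⟩
      exact hf j hj
    exact hle (prodOp_sub_mem A z f n)
  constructor
  · intro h
    simpa using M.add_mem h1 h
  · intro h
    simpa using M.sub_mem h h1

/-- The main induction. -/
theorem aux_main (A : H →ₗ[ℂ] H) (M : Submodule ℂ H) (hd : Dense (M : Set H))
    (hs : ∀ f ∈ M, ∀ g ∈ M, ⟪A f, g⟫_ℂ = ⟪f, A g⟫_ℂ)
    (hc : IsClosed {x : H × H | x.1 ∈ M ∧ x.2 = A x.1})
    (z : ℕ → ℂ) (hz : ∀ j, (z j).im ≠ 0)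
    (hfin : ∀ j, Module.rank ℂ (H ⧸ M.map (A - z j • (1 : H →ₗ[ℂ] H))) < ℵ₀) (n : ℕ) :
    IsClosed (((powDom A M n).map (prodOp A z n) : Submodule ℂ H) : Set H) ∧
    Module.rank ℂ (H ⧸ (powDom A M n).map (prodOp A z n)) =
      ∑ j ∈ Finset.range n, Module.rank ℂ (H ⧸ M.map (A - z j • (1 : H →ₗ[ℂ] H))) ∧
    Dense (powDom A M n : Set H) ∧
    ∃ C : ℝ, 0 < C ∧ ∀ f ∈ powDom A M n, ‖f‖ ≤ C * ‖prodOp A z n f‖ := by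
  induction n with
  | zero =>
    have htop : powDom A M 0 = ⊤ := by
      ext f; simp [mem_powDom]
    have hm : (powDom A M 0).map (prodOp A z 0) = ⊤ := by
      rw [htop, prodOp, Module.End.one_eq_id, Submodule.map_id]
    refine ⟨by rw [hm]; simp, ?_, by rw [htop]; simp, 1, one_pos, ?_⟩
    · rw [hm]; simp
    · intro f _; simp [prodOp]
  | succ n ih =>
    obtain ⟨ihc, ihr, ihd, C, hC, ihb⟩ := ih
    have hfd : FiniteDimensional ℂ (H ⧸ (powDom A M n).map (prodOp A z n)) := by
      apply Module.rank_lt_aleph0_iff.1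
      rw [ihr]
      clear ihr ihb ihd ihc
      induction n with
      | zero => simpa using Cardinal.aleph0_pos
      | succ m ih2 =>
        rw [Finset.sum_range_succ]
        exact Cardinal.add_lt_aleph0 ih2 (hfin m)
    have hmap : (powDom A M (n + 1)).map (prodOp A z (n + 1)) =
        (M ⊓ (powDom A M n).map (prodOp A z n)).map (A - z n • (1 : H →ₗ[ℂ] H)) := by
      ext y
      constructor
      · rintro ⟨f, hf, rfl⟩
        obtain ⟨h1, h2⟩ := (mem_powDom_succ_prod A M z n f).1 hf
        exact ⟨prodOp A z n f, ⟨h2, ⟨f, h1, rfl⟩⟩, rfl⟩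
      · rintro ⟨_, ⟨h2, ⟨f, h1, rfl⟩⟩, rfl⟩
        exact ⟨f, (mem_powDom_succ_prod A M z n f).2 ⟨h1, h2⟩, rfl⟩
    refine ⟨?_, ?_, ?_, ?_⟩
    · rw [hmap]
      exact aux_closed_map A M _ hs hc (z n) (hz n) ihc
    · rw [hmap, aux_rank_comp _ _ _ (aux_inj A M hs (z n) (hz n))
        (aux_dense_sup _ _ hd ihc hfd), ihr, Finset.sum_range_succ, add_comm]
    · rw [Metric.dense_iff]
      intro x r hr
      obtain ⟨f, hf1, hf2⟩ := Metric.dense_iff.1 ihd x (r / 2) (by positivity)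
      have h1 := aux_dense_inter _ _ hd ihc hfd (show prodOp A z n f ∈ _ from ⟨f, hf2, rfl⟩)
      obtain ⟨_, ⟨hgM, ⟨g, hg, rfl⟩⟩, hdist⟩ :=
        Metric.mem_closure_iff.1 h1 (r / 2 / C) (by positivity)
      refine ⟨g, ?_, (mem_powDom_succ_prod A M z n g).2 ⟨hg, hgM⟩⟩
      have h2 := ihb (f - g) ((powDom A M n).sub_mem hf2 hg)
      rw [map_sub, ← dist_eq_norm, ← dist_eq_norm] at h2
      rw [lt_div_iff₀ hC] at hdist
      rw [Metric.mem_ball] at hf1 ⊢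
      have h3 := dist_triangle g f x
      rw [dist_comm g f] at h3
      linarith
    · have hp : 0 < |(z n).im| := abs_pos.2 (hz n)
      refine ⟨C * |(z n).im|⁻¹, by positivity, fun f hf => ?_⟩
      obtain ⟨h1, h2⟩ := (mem_powDom_succ_prod A M z n f).1 hf
      have h3 := aux_bound A M hs (z n) _ h2
      have h4 := ihb f h1
      have h5 : ‖prodOp A z n f‖ ≤ |(z n).im|⁻¹ * ‖prodOp A z (n + 1) f‖ := by
        rw [inv_mul_eq_div, le_div_iff₀ hp, mul_comm]
        exact h3
      calc ‖f‖ ≤ C * ‖prodOp A z n f‖ := h4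
        _ ≤ C * (|(z n).im|⁻¹ * ‖prodOp A z (n + 1) f‖) := by gcongr
        _ = _ := by ring

theorem pcomp_spec (T₂ T₁ : H →ₗ.[ℂ] H) (y : T₁.domain) (hy : T₁ y ∈ T₂.domain) :
    ∃ h : (y : H) ∈ (pcomp T₂ T₁).domain, pcomp T₂ T₁ ⟨y, h⟩ = T₂ ⟨T₁ y, hy⟩ := by
  have hy' : y ∈ T₂.domain.comap T₁.toFun := hy
  have h : (y : H) ∈ (pcomp T₂ T₁).domain := ⟨y, hy', rfl⟩
  refine ⟨h, ?_⟩
  have he : (Submodule.equivMapOfInjective T₁.domain.subtype (Submodule.injective_subtype _)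
      (T₂.domain.comap T₁.toFun)).symm ⟨y, h⟩ = ⟨y, hy'⟩ := by
    rw [LinearEquiv.symm_apply_eq]
    rfl
  change T₂.toFun ((T₁.toFun.restrict (p := T₂.domain.comap T₁.toFun) (q := T₂.domain)
    fun _ hx => hx) ((Submodule.equivMapOfInjective T₁.domain.subtype
      (Submodule.injective_subtype _) (T₂.domain.comap T₁.toFun)).symm ⟨y, h⟩)) = _
  rw [he]
  rfl

theorem pmapPow_spec (S : H →ₗ.[ℂ] H) (A : H →ₗ[ℂ] H) (hA : ∀ f : S.domain, A f = S f) (n : ℕ) :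
    (pmapPow S (n + 1)).domain = powDom A S.domain (n + 1) ∧
    ∀ f : (pmapPow S (n + 1)).domain, pmapPow S (n + 1) f = (A ^ (n + 1)) f := by
  induction n with
  | zero =>
    constructor
    · ext f; simp [mem_powDom, pmapPow]
    · intro f
      simpa [pmapPow] using (hA f).symm
  | succ n ih =>
    obtain ⟨ih1, ih2⟩ := ih
    have key : ∀ f, f ∈ (pmapPow S (n + 1 + 1)).domain →
        ∃ y : (pmapPow S (n + 1)).domain, (y : H) = f ∧ pmapPow S (n + 1) y ∈ S.domain := by
      rintro f ⟨y, hy, rfl⟩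
      exact ⟨y, rfl, hy⟩
    constructor
    · ext f
      rw [mem_powDom_succ, ← ih1]
      constructor
      · intro hf
        obtain ⟨y, rfl, hy⟩ := key f hf
        exact ⟨y.2, by rw [← ih2]; exact hy⟩
      · rintro ⟨h1, h2⟩
        have h3 := ih2 ⟨f, h1⟩
        exact (pcomp_spec S (pmapPow S (n + 1)) ⟨f, h1⟩ (by rw [h3]; exact h2)).1
    · rintro ⟨f, hf⟩
      obtain ⟨y, rfl, hy⟩ := key f hf
      obtain ⟨h, he⟩ := pcomp_spec S (pmapPow S (n + 1)) y hy
      have h1 : pmapPow S (n + 1 + 1) ⟨y, hf⟩ = S ⟨pmapPow S (n + 1) y, hy⟩ := he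
      rw [h1, ← hA, pow_succ', Module.End.mul_apply]
      simp only [ih2]

/-- Deficiency spaces are orthogonal complements of ranges. -/
theorem rank_kerAt (T : H →ₗ.[ℂ] H) (A : H →ₗ[ℂ] H) (hA : ∀ f : T.domain, A f = T f)
    (hd : Dense (T.domain : Set H)) (z : ℂ)
    (hcl : IsClosed ((T.domain.map (A - z • (1 : H →ₗ[ℂ] H)) : Submodule ℂ H) : Set H)) :
    Module.rank ℂ (kerAt T.adjoint (starRingEnd ℂ z)) =
      Module.rank ℂ (H ⧸ T.domain.map (A - z • (1 : H →ₗ[ℂ] H))) := by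
  rw [aux_rank_perp _ hcl]
  let φ : kerAt T.adjoint (starRingEnd ℂ z) →ₗ[ℂ] H :=
    T.adjoint.domain.subtype ∘ₗ Submodule.subtype _
  have hφ : Function.Injective φ :=
    (Submodule.injective_subtype _).comp (Submodule.injective_subtype _)
  have hr : LinearMap.range φ = (T.domain.map (A - z • (1 : H →ₗ[ℂ] H)))ᗮ := by
    ext y
    rw [Submodule.mem_orthogonal']
    constructor
    · rintro ⟨⟨y, hy⟩, rfl⟩
      rintro _ ⟨x, hx, rfl⟩
      have h1 : T.adjoint y = (starRingEnd ℂ z) • (y : H) := by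
        have := LinearMap.mem_ker.1 hy
        rw [LinearMap.sub_apply, sub_eq_zero] at this
        exact this
      have h2 := LinearPMap.adjoint_isFormalAdjoint hd y ⟨x, hx⟩
      rw [h1, inner_smul_left, Complex.conj_conj, ← hA] at h2
      change ⟪(y : H), _⟫_ℂ = 0
      simp only [LinearMap.sub_apply, LinearMap.smul_apply, Module.End.one_apply, inner_sub_right,
        inner_smul_right]
      rw [← h2, sub_self]
    · intro h
      have h1 : ∀ x : T.domain, ⟪(starRingEnd ℂ z) • y, (x : H)⟫_ℂ = ⟪y, T x⟫_ℂ := by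
        intro x
        have h2 := h _ ⟨x, x.2, rfl⟩
        simp only [LinearMap.sub_apply, LinearMap.smul_apply, Module.End.one_apply,
          inner_sub_right, inner_smul_right, hA, sub_eq_zero] at h2
        rw [inner_smul_left, Complex.conj_conj, h2]
      have hy : y ∈ T.adjoint.domain := LinearPMap.mem_adjoint_domain_of_exists y ⟨_, h1⟩
      have h3 := LinearPMap.adjoint_apply_eq hd ⟨y, hy⟩ h1
      refine ⟨⟨⟨y, hy⟩, ?_⟩, rfl⟩
      rw [kerAt, LinearMap.mem_ker, LinearMap.sub_apply, sub_eq_zero]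
      exact h3
  rw [← hr]
  exact (LinearEquiv.ofInjective φ hφ).rank_eq

/-- The roots of `X ^ (2k+1) + s i` for a sign `s`, and their position. -/
theorem aux_roots (k : ℕ) (s : ℝ) (hs : s = 1 ∨ s = -1) :
    ∃ z : ℕ → ℂ, (∀ j, (z j).im ≠ 0) ∧
      (∏ j ∈ Finset.range (2 * k + 1), (Polynomial.X - Polynomial.C (z j))) =
        Polynomial.X ^ (2 * k + 1) - Polynomial.C (-(s : ℂ) * Complex.I) ∧
      0 < (-s) * (z 0).im ∧ (∀ j < k, 0 < s * (z (j + 1)).im) ∧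
      (∀ j < k, 0 < (-s) * (z (k + j + 1)).im) := by
  set n : ℕ := 2 * k + 1 with hn
  have hn0 : (n : ℂ) ≠ 0 := Nat.cast_ne_zero.2 (by omega)
  have hnr : (0 : ℝ) < n := by rw [hn]; positivity
  have hnk : (n : ℝ) = 2 * k + 1 := by rw [hn]; push_cast; ring
  have hss : s * s = 1 := by rcases hs with h | h <;> rw [h] <;> norm_num
  have hsn : (s : ℂ) ^ n = s := by
    rcases hs with h | h
    · rw [h]; simp
    · rw [h, hn, pow_succ, pow_mul]; simp
  let α : ℂ := s * Complex.exp (-(Real.pi / 2 / n : ℂ) * Complex.I)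
  let ζ : ℂ := Complex.exp (2 * Real.pi * Complex.I / n)
  have hζ : IsPrimitiveRoot ζ n := Complex.isPrimitiveRoot_exp n (by omega)
  have hα : α ^ n = -(s : ℂ) * Complex.I := by
    simp only [α]
    rw [mul_pow, hsn, ← Complex.exp_nat_mul]
    have : (n : ℂ) * (-(Real.pi / 2 / n : ℂ) * Complex.I) = -(Real.pi / 2 * Complex.I) := by
      field_simp
    rw [this, Complex.exp_neg, Complex.exp_pi_div_two_mul_I, Complex.inv_I]
    ring
  have him : ∀ j : ℕ, (ζ ^ j * α).im = s * Real.sin (Real.pi * (4 * j - 1) / (2 * n)) := by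
    intro j
    have h1 : ζ ^ j * α = s * Complex.exp ((Real.pi * (4 * j - 1) / (2 * n) : ℝ) * Complex.I) := by
      simp only [α, ζ]
      rw [← Complex.exp_nat_mul, mul_left_comm, ← Complex.exp_add]
      congr 2
      push_cast
      field_simp
      ring
    rw [h1, Complex.im_ofReal_mul, Complex.exp_ofReal_mul_I_im]
  refine ⟨fun j => ζ ^ j * α, ?_, (X_pow_sub_C_eq_prod hζ (by omega) hα).symm, ?_, ?_, ?_⟩
  · intro j h0
    have h1 : (ζ ^ j * α) ^ n = -(s : ℂ) * Complex.I := by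
      rw [mul_pow, hα, ← pow_mul, mul_comm j n, pow_mul, hζ.pow_eq_one, one_pow, one_mul]
    have h2 : ζ ^ j * α = (((ζ ^ j * α).re : ℝ) : ℂ) := by
      apply Complex.ext
      · simp
      · simpa using h0
    rw [h2, ← Complex.ofReal_pow] at h1
    have h3 := congrArg Complex.im h1
    simp only [Complex.ofReal_im, Complex.mul_im, Complex.neg_re, Complex.neg_im,
      Complex.ofReal_re, Complex.I_im, Complex.I_re] at h3
    have : s = 0 := by linarith
    rw [this] at hss
    norm_num at hss
  · simp only [him]
    have h1 : Real.sin (Real.pi * (4 * ((0 : ℕ) : ℝ) - 1) / (2 * n)) < 0 := by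
      have h2 : 0 < Real.sin (Real.pi / (2 * n)) := by
        apply Real.sin_pos_of_pos_of_lt_pi
        · positivity
        · rw [div_lt_iff₀ (by positivity)]
          have : (0 : ℝ) ≤ k := Nat.cast_nonneg k
          nlinarith [Real.pi_pos]
      have h3 : Real.pi * (4 * ((0 : ℕ) : ℝ) - 1) / (2 * n) = -(Real.pi / (2 * n)) := by
        push_cast; ring
      rw [h3, Real.sin_neg]; linarith
    nlinarith
  · intro j hj
    simp only [him]
    have hj' : (j : ℝ) + 1 ≤ k := by exact_mod_cast hj
    have hj0 : (0 : ℝ) ≤ j := Nat.cast_nonneg j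
    have h1 : 0 < Real.sin (Real.pi * (4 * ((j + 1 : ℕ) : ℝ) - 1) / (2 * n)) := by
      apply Real.sin_pos_of_pos_of_lt_pi
      · push_cast
        have : (0 : ℝ) < 4 * (j + 1) - 1 := by linarith
        positivity
      · rw [div_lt_iff₀ (by positivity)]
        push_cast
        apply mul_lt_mul_of_pos_left _ Real.pi_pos
        linarith
    nlinarith
  · intro j hj
    simp only [him]
    have hj' : (j : ℝ) + 1 ≤ k := by exact_mod_cast hj
    have hj0 : (0 : ℝ) ≤ j := Nat.cast_nonneg j
    have h1 : Real.sin (Real.pi * (4 * ((k + j + 1 : ℕ) : ℝ) - 1) / (2 * n)) < 0 := by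
      rw [← Real.sin_sub_two_pi]
      apply Real.sin_neg_of_neg_of_neg_pi_lt
      · rw [sub_neg, div_lt_iff₀ (by positivity)]
        push_cast
        rw [mul_comm 2 Real.pi, mul_assoc]
        apply mul_lt_mul_of_pos_left _ Real.pi_pos
        linarith
      · rw [lt_sub_iff_add_lt, lt_div_iff₀ (by positivity)]
        push_cast
        have : (-Real.pi + 2 * Real.pi) * (2 * n) = Real.pi * (2 * n) := by ring
        rw [this]
        apply mul_lt_mul_of_pos_left _ Real.pi_pos
        linarith
    nlinarith

theorem aux_final (A : H →ₗ[ℂ] H) (M : Submodule ℂ H) (hd : Dense (M : Set H))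
    (hs : ∀ f ∈ M, ∀ g ∈ M, ⟪A f, g⟫_ℂ = ⟪f, A g⟫_ℂ)
    (hc : IsClosed {x : H × H | x.1 ∈ M ∧ x.2 = A x.1}) (s : ℝ) (hs1 : s = 1 ∨ s = -1)
    (hP : Module.rank ℂ (H ⧸ M.map (A - (-(s : ℂ) * Complex.I) • (1 : H →ₗ[ℂ] H))) < ℵ₀)
    (hN : Module.rank ℂ (H ⧸ M.map (A - ((s : ℂ) * Complex.I) • (1 : H →ₗ[ℂ] H))) < ℵ₀)
    (k : ℕ) :
    IsClosed (((powDom A M (2 * k + 1)).map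
      (A ^ (2 * k + 1) - (-(s : ℂ) * Complex.I) • (1 : H →ₗ[ℂ] H)) : Submodule ℂ H) : Set H) ∧
    Module.rank ℂ (H ⧸ (powDom A M (2 * k + 1)).map
      (A ^ (2 * k + 1) - (-(s : ℂ) * Complex.I) • (1 : H →ₗ[ℂ] H))) =
      (k : Cardinal) *
        (Module.rank ℂ (H ⧸ M.map (A - (-(s : ℂ) * Complex.I) • (1 : H →ₗ[ℂ] H))) +
        Module.rank ℂ (H ⧸ M.map (A - ((s : ℂ) * Complex.I) • (1 : H →ₗ[ℂ] H)))) +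
        Module.rank ℂ (H ⧸ M.map (A - (-(s : ℂ) * Complex.I) • (1 : H →ₗ[ℂ] H))) ∧
    Dense (powDom A M (2 * k + 1) : Set H) := by
  obtain ⟨z, hz, hprod, h0, h1, h2⟩ := aux_roots k s hs1
  have hss : s * s = 1 := by rcases hs1 with h | h <;> rw [h] <;> norm_num
  have hneg : ∀ j, 0 < (-s) * (z j).im →
      Module.rank ℂ (H ⧸ M.map (A - z j • (1 : H →ₗ[ℂ] H))) =
      Module.rank ℂ (H ⧸ M.map (A - (-(s : ℂ) * Complex.I) • (1 : H →ₗ[ℂ] H))) := by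
    intro j hj
    refine aux_const A M hs hc (-s) _ _ hj ?_
    simp [hss]
  have hpos : ∀ j, 0 < s * (z j).im →
      Module.rank ℂ (H ⧸ M.map (A - z j • (1 : H →ₗ[ℂ] H))) =
      Module.rank ℂ (H ⧸ M.map (A - ((s : ℂ) * Complex.I) • (1 : H →ₗ[ℂ] H))) := by
    intro j hj
    refine aux_const A M hs hc s _ _ hj ?_
    simp [hss]
  have hfin : ∀ j, Module.rank ℂ (H ⧸ M.map (A - z j • (1 : H →ₗ[ℂ] H))) < ℵ₀ := by
    intro j
    have hne : s * (z j).im ≠ 0 := by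
      intro h
      rcases mul_eq_zero.1 h with h | h
      · rw [h] at hss; norm_num at hss
      · exact hz j h
    rcases lt_or_gt_of_ne hne with h | h
    · rw [hneg j (by linarith)]; exact hP
    · rw [hpos j h]; exact hN
  have hop : prodOp A z (2 * k + 1) =
      A ^ (2 * k + 1) - (-(s : ℂ) * Complex.I) • (1 : H →ₗ[ℂ] H) := by
    rw [prodOp_eq_aeval, hprod, map_sub, map_pow, Polynomial.aeval_X, Polynomial.aeval_C,
      Algebra.algebraMap_eq_smul_one]
  obtain ⟨r1, r2, r3, -⟩ := aux_main A M hd hs hc z hz hfin (2 * k + 1)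
  rw [hop] at r1 r2
  refine ⟨r1, ?_, r3⟩
  rw [r2, Finset.sum_range_succ', hneg 0 h0, two_mul, Finset.sum_range_add,
    Finset.sum_congr rfl (fun j hj => hpos (j + 1) (h1 j (Finset.mem_range.1 hj))),
    Finset.sum_congr rfl (fun j hj => hneg (k + j + 1) (h2 j (Finset.mem_range.1 hj))),
    Finset.sum_const, Finset.sum_const, Finset.card_range, nsmul_eq_mul, nsmul_eq_mul]
  ring

/-- Odd powers of a densely defined, closed, symmetric operator with finite deficiency
indices: `S^{2k+1}` is densely defined, symmetric, closed,
`‖S^{2k+1} f ± i f‖ ≥ ‖f‖` on its domain, and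
`n₊(S^{2k+1}) = k(n₊(S)+n₋(S)) + n₊(S)`, `n₋(S^{2k+1}) = k(n₊(S)+n₋(S)) + n₋(S)`. -/
theorem odd_powers_deficiency_finite (S : H →ₗ.[ℂ] H)
    (hd : Dense (S.domain : Set H)) (hc : S.IsClosed) (hsym : IsSymmP S)
    (hp : nPlus S < ℵ₀) (hm : nMinus S < ℵ₀) (k : ℕ) (hk : 1 ≤ k) :
    Dense (((pmapPow S (2 * k + 1)).domain : Submodule ℂ H) : Set H) ∧
    IsSymmP (pmapPow S (2 * k + 1)) ∧ (pmapPow S (2 * k + 1)).IsClosed ∧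
    (∀ f : (pmapPow S (2 * k + 1)).domain,
      ‖pmapPow S (2 * k + 1) f + Complex.I • (f : H)‖ ≥ ‖(f : H)‖ ∧
      ‖pmapPow S (2 * k + 1) f - Complex.I • (f : H)‖ ≥ ‖(f : H)‖) ∧
    nPlus (pmapPow S (2 * k + 1)) = (k : Cardinal) * (nPlus S + nMinus S) + nPlus S ∧
    nMinus (pmapPow S (2 * k + 1)) = (k : Cardinal) * (nPlus S + nMinus S) + nMinus S := by
  obtain ⟨A, hA0⟩ := LinearMap.exists_extend S.toFun
  have hA : ∀ f : S.domain, A f = S f := fun f => LinearMap.congr_fun hA0 f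
  have hs : ∀ f ∈ S.domain, ∀ g ∈ S.domain, ⟪A f, g⟫_ℂ = ⟪f, A g⟫_ℂ := by
    intro f hf g hg
    have := hsym ⟨f, hf⟩ ⟨g, hg⟩
    rw [← hA, ← hA] at this
    exact this
  have hc' : IsClosed {x : H × H | x.1 ∈ S.domain ∧ x.2 = A x.1} := by
    have he : {x : H × H | x.1 ∈ S.domain ∧ x.2 = A x.1} = (S.graph : Set (H × H)) := by
      ext x
      rw [SetLike.mem_coe, LinearPMap.mem_graph_iff]
      constructor
      · rintro ⟨h1, h2⟩
        exact ⟨⟨x.1, h1⟩, rfl, by rw [← hA, h2]⟩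
      · rintro ⟨y, h1, h2⟩
        exact ⟨by rw [← h1]; exact y.2, by rw [← h1, ← h2, hA]⟩
    rw [he]
    exact hc
  have hcS : ∀ z : ℂ, z.im ≠ 0 →
      IsClosed ((S.domain.map (A - z • (1 : H →ₗ[ℂ] H)) : Submodule ℂ H) : Set H) := by
    intro z hz
    simpa using aux_closed_map A S.domain ⊤ hs hc' z hz (by simp)
  have hI : (-(((1 : ℝ) : ℂ)) * Complex.I) = -Complex.I := by simp
  have hI2 : ((((1 : ℝ) : ℂ)) * Complex.I) = Complex.I := by simp
  have hI3 : (-(((-1 : ℝ) : ℂ)) * Complex.I) = Complex.I := by simp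
  have hI4 : ((((-1 : ℝ) : ℂ)) * Complex.I) = -Complex.I := by simp
  have c1 : (starRingEnd ℂ) (-Complex.I) = Complex.I := by simp
  have c2 : (starRingEnd ℂ) Complex.I = -Complex.I := by simp
  have hP : nPlus S = Module.rank ℂ (H ⧸ S.domain.map (A - (-Complex.I) • (1 : H →ₗ[ℂ] H))) := by
    have := rank_kerAt S A hA hd (-Complex.I) (hcS _ (by simp))
    rw [c1] at this
    exact this
  have hN : nMinus S = Module.rank ℂ (H ⧸ S.domain.map (A - Complex.I • (1 : H →ₗ[ℂ] H))) := by
    have := rank_kerAt S A hA hd Complex.I (hcS _ (by simp))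
    rw [c2] at this
    exact this
  have fp := aux_final A S.domain hd hs hc' 1 (Or.inl rfl)
    (by rw [hI, ← hP]; exact hp) (by rw [hI2, ← hN]; exact hm) k
  have fm := aux_final A S.domain hd hs hc' (-1) (Or.inr rfl)
    (by rw [hI3, ← hN]; exact hm) (by rw [hI4, ← hP]; exact hp) k
  rw [hI, hI2, ← hP, ← hN] at fp
  rw [hI3, hI4, ← hP, ← hN] at fm
  obtain ⟨e1, e2⟩ := pmapPow_spec S A hA (2 * k)
  have hsn := powDom_symm A S.domain hs (2 * k + 1)
  have hcg := aux_closed_graph _ _ hsn (-Complex.I) (by simp) fp.1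
  generalize pmapPow S (2 * k + 1) = T at *
  rw [← e1] at fp fm hsn hcg
  have hT : Dense (T.domain : Set H) := fp.2.2
  refine ⟨hT, ?_, ?_, ?_, ?_, ?_⟩
  · intro f g
    rw [e2, e2]
    exact hsn f f.2 g g.2
  · have he : {x : H × H | x.1 ∈ T.domain ∧ x.2 = (A ^ (2 * k + 1)) x.1} =
        (T.graph : Set (H × H)) := by
      ext x
      rw [SetLike.mem_coe, LinearPMap.mem_graph_iff]
      constructor
      · rintro ⟨h1, h2⟩
        exact ⟨⟨x.1, h1⟩, rfl, by rw [e2, h2]⟩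
      · rintro ⟨y, h1, h2⟩
        exact ⟨by rw [← h1]; exact y.2, by rw [← h1, ← h2, e2]⟩
    rw [he] at hcg
    exact hcg
  · intro f
    have b1 := aux_bound _ _ hsn (-Complex.I) f f.2
    have b2 := aux_bound _ _ hsn Complex.I f f.2
    rw [e2]
    constructor
    · simpa using b1
    · simpa using b2
  · have := rank_kerAt T _ (fun f => (e2 f).symm) hT (-Complex.I) fp.1
    rw [c1, fp.2.1] at this
    exact this
  · have := rank_kerAt T _ (fun f => (e2 f).symm) hT Complex.I fm.1
    rw [c2, fm.2.1, add_comm (nMinus S) (nPlus S)] at this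
    exact this
end
end

section
/- Let S be a densely defined, closed, symmetric operator in a complex Hilbert space H whose deficiency indices are finite and equal: n₊(S) = n₋(S) = n ∈ ℕ. Then for every m ∈ ℕ, m ≥ 1, the power S^m is densely defined, symmetric, and closed, and its deficiency indices satisfy n₊(S^m) = n₋(S^m) = m·n. -/
open scoped InnerProductSpace
open Cardinal

noncomputable section

variable {E F G H : Type*}
  [NormedAddCommGroup E] [InnerProductSpace ℂ E] [CompleteSpace E]
  [NormedAddCommGroup F] [InnerProductSpace ℂ F] [CompleteSpace F]
  [NormedAddCommGroup G] [InnerProductSpace ℂ G] [CompleteSpace G]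
  [NormedAddCommGroup H] [InnerProductSpace ℂ H] [CompleteSpace H]

set_option linter.unusedSectionVars false

/-! ### Ranges of `S - λ` in terms of the graph -/

/-- The linear map `(x, y) ↦ y - λ x`. -/
def shiftMap (K : Type*) [NormedAddCommGroup K] [InnerProductSpace ℂ K] (l : ℂ) :
    (K × K) →L[ℂ] K :=
  ContinuousLinearMap.snd ℂ K K - l • ContinuousLinearMap.fst ℂ K K

lemma shiftMap_apply (l : ℂ) (p : H × H) : shiftMap H l p = p.2 - l • p.1 := rfl

/-- Image of `dom ∩ W` under `S - λ`, where `Γ` is the graph of `S`. -/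
def ranAt (Γ : Submodule ℂ (H × H)) (l : ℂ) (W : Submodule ℂ H) : Submodule ℂ H :=
  (Γ ⊓ W.comap (LinearMap.fst ℂ H H)).map (shiftMap H l).toLinearMap

lemma mem_ranAt {Γ : Submodule ℂ (H × H)} {l : ℂ} {W : Submodule ℂ H} {y : H} :
    y ∈ ranAt Γ l W ↔ ∃ p : H × H, p ∈ Γ ∧ p.1 ∈ W ∧ p.2 - l • p.1 = y := by
  simp only [ranAt, Submodule.mem_map, Submodule.mem_inf, Submodule.mem_comap]
  constructor
  · rintro ⟨p, ⟨h1, h2⟩, h3⟩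
    exact ⟨p, h1, h2, h3⟩
  · rintro ⟨p, h1, h2, h3⟩
    exact ⟨p, ⟨h1, h2⟩, h3⟩

/-- Symmetry of a graph. -/
def SymmG (Γ : Submodule ℂ (H × H)) : Prop :=
  ∀ p ∈ Γ, ∀ q ∈ Γ, ⟪p.2, q.1⟫_ℂ = ⟪p.1, q.2⟫_ℂ

lemma SymmG.bound {Γ : Submodule ℂ (H × H)} (h : SymmG Γ) (l : ℂ) {p : H × H} (hp : p ∈ Γ) :
    |l.im| * ‖p.1‖ ≤ ‖p.2 - l • p.1‖ := by
  have h1 : (⟪p.1, p.2⟫_ℂ).im = 0 := by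
    have h2 := h p hp p hp
    rw [← inner_conj_symm] at h2
    have := congrArg Complex.im h2
    simp only [Complex.conj_im] at this
    linarith
  have h2 : (⟪p.1, p.2 - l • p.1⟫_ℂ).im = - l.im * ‖p.1‖ ^ 2 := by
    rw [inner_sub_right, inner_smul_right, inner_self_eq_norm_sq_to_K, Complex.sub_im, h1]
    have : ((‖p.1‖ : ℂ)) ^ 2 = ((‖p.1‖ ^ 2 : ℝ) : ℂ) := by push_cast; rfl
    simp only [Complex.coe_algebraMap, this, Complex.mul_im, Complex.ofReal_re, Complex.ofReal_im]
    ring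
  have h3 : |l.im| * ‖p.1‖ ^ 2 ≤ ‖p.1‖ * ‖p.2 - l • p.1‖ := by
    calc |l.im| * ‖p.1‖ ^ 2 = |(⟪p.1, p.2 - l • p.1⟫_ℂ).im| := by
          rw [h2, abs_mul, abs_neg, abs_of_nonneg (sq_nonneg ‖p.1‖)]
      _ ≤ ‖⟪p.1, p.2 - l • p.1⟫_ℂ‖ := Complex.abs_im_le_norm _
      _ ≤ _ := norm_inner_le_norm _ _
  rcases (norm_nonneg p.1).eq_or_lt with h0 | h0
  · rw [← h0]; simp
  · have : ‖p.1‖ * (|l.im| * ‖p.1‖) ≤ ‖p.1‖ * ‖p.2 - l • p.1‖ := by linarith [h3]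
    exact le_of_mul_le_mul_left this h0

lemma isClosed_ranAt {Γ : Submodule ℂ (H × H)} (h : SymmG Γ) (hΓ : IsClosed (Γ : Set (H × H)))
    {l : ℂ} (hl : l.im ≠ 0) {W : Submodule ℂ H} (hW : IsClosed (W : Set H)) :
    IsClosed (ranAt Γ l W : Set H) := by
  set K : Submodule ℂ (H × H) := Γ ⊓ W.comap (LinearMap.fst ℂ H H) with hK
  have hKc : IsClosed (K : Set (H × H)) := by
    rw [hK, Submodule.coe_inf]
    exact hΓ.inter (hW.preimage continuous_fst)
  have : CompleteSpace K := hKc.completeSpace_coe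
  set B : K →L[ℂ] H := (shiftMap H l).comp K.subtypeL with hB
  have hpos : 0 < |l.im| := abs_pos.mpr hl
  set C : ℝ := 1 + (1 + ‖l‖) / |l.im| with hC
  have hC0 : 0 ≤ C := by positivity
  have hanti : AntilipschitzWith ⟨C, hC0⟩ B := by
    refine ContinuousLinearMap.antilipschitz_of_bound B ?_
    rintro ⟨p, hp⟩
    have hb := h.bound l hp.1
    have hBp : B ⟨p, hp⟩ = p.2 - l • p.1 := rfl
    rw [hBp]
    set b := ‖p.2 - l • p.1‖
    have hb0 : 0 ≤ b := norm_nonneg _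
    have h1 : ‖p.1‖ ≤ b / |l.im| := by rw [le_div_iff₀ hpos]; linarith
    have h2 : ‖p.2‖ ≤ b + ‖l‖ * ‖p.1‖ := by
      calc ‖p.2‖ = ‖(p.2 - l • p.1) + l • p.1‖ := by rw [sub_add_cancel]
        _ ≤ _ := by rw [← norm_smul]; exact norm_add_le _ _
    have h3 : ‖l‖ * ‖p.1‖ ≤ ‖l‖ * (b / |l.im|) := by gcongr
    have h4 : 0 ≤ b / |l.im| := by positivity
    have h5 : 0 ≤ ‖l‖ * (b / |l.im|) := by positivity
    have h6 : C * b = b + b / |l.im| + ‖l‖ * (b / |l.im|) := by rw [hC]; ring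
    change ‖p‖ ≤ C * b
    rw [h6, Prod.norm_def]
    apply max_le <;> linarith
  have hr := hanti.isClosed_range B.uniformContinuous
  have : (ranAt Γ l W : Set H) = Set.range B := by
    ext y
    simp only [SetLike.mem_coe, mem_ranAt, Set.mem_range]
    constructor
    · rintro ⟨p, h1, h2, h3⟩
      exact ⟨⟨p, h1, h2⟩, h3⟩
    · rintro ⟨⟨p, h1, h2⟩, h3⟩
      exact ⟨p, h1, h2, h3⟩
  rw [this]; exact hr

lemma rank_orthogonal_eq {M : Submodule ℂ H} (hM : IsClosed (M : Set H)) :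
    Module.rank ℂ Mᗮ = Module.rank ℂ (H ⧸ M) := by
  have : CompleteSpace M := hM.completeSpace_coe
  exact (Submodule.quotientEquivOfIsCompl M Mᗮ (Submodule.isCompl_orthogonal _)).rank_eq.symm

/-! ### Constancy of the deficiency index -/

lemma codim_le {Γ : Submodule ℂ (H × H)} (h : SymmG Γ) (hΓ : IsClosed (Γ : Set (H × H)))
    {l k : ℂ} (hlk : ‖l - k‖ < |l.im|) :
    Module.rank ℂ (H ⧸ ranAt Γ l ⊤) ≤ Module.rank ℂ (H ⧸ ranAt Γ k ⊤) := by
  have hl : l.im ≠ 0 := abs_pos.mp (lt_of_le_of_lt (norm_nonneg _) hlk)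
  rw [← rank_orthogonal_eq (isClosed_ranAt h hΓ hl isClosed_univ)]
  refine LinearMap.rank_le_of_injective
    ((ranAt Γ k ⊤).mkQ ∘ₗ (ranAt Γ l ⊤)ᗮ.subtype) ?_
  rw [← LinearMap.ker_eq_bot, LinearMap.ker_eq_bot']
  rintro ⟨y, hy⟩ hy0
  have hy1 : y ∈ ranAt Γ k ⊤ := by simpa using hy0
  obtain ⟨p, hp, -, rfl⟩ := mem_ranAt.mp hy1
  have h1 : ⟪p.2 - l • p.1, p.2 - k • p.1⟫_ℂ = 0 :=
    (Submodule.mem_orthogonal _ _).mp hy _ (mem_ranAt.mpr ⟨p, hp, trivial, rfl⟩)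
  have hb := h.bound l hp
  have h2 : p.2 - k • p.1 = (p.2 - l • p.1) + (l - k) • p.1 := by rw [sub_smul]; abel
  set v := p.2 - l • p.1 with hv
  rw [h2, inner_add_right, inner_self_eq_norm_sq_to_K] at h1
  have h3 : ‖v‖ ^ 2 ≤ ‖v‖ * (‖l - k‖ * ‖p.1‖) := by
    have h4 := congrArg norm (eq_neg_of_add_eq_zero_left h1)
    rw [norm_neg, norm_pow] at h4
    have h5 : ‖((‖v‖ : ℝ) : ℂ)‖ = ‖v‖ := by simp
    have h6 : ‖v‖ ^ 2 = ‖⟪v, (l - k) • p.1⟫_ℂ‖ := by rw [← h4]; simp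
    rw [h6, ← norm_smul]
    exact norm_inner_le_norm _ _
  have hp1 : p.1 = 0 := by
    by_contra hne
    have hn : 0 < ‖p.1‖ := norm_pos_iff.mpr hne
    have hlt : ‖l - k‖ * ‖p.1‖ < ‖v‖ := lt_of_lt_of_le (by gcongr) hb
    have hv0 : 0 < ‖v‖ := lt_of_le_of_lt (by positivity) hlt
    nlinarith
  have hv0 : v = 0 := by
    rw [hp1] at h3
    have : ‖v‖ ^ 2 ≤ 0 := by simpa using h3
    have : ‖v‖ = 0 := by nlinarith [norm_nonneg v, sq_nonneg ‖v‖]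
    exact norm_eq_zero.mp this
  apply Subtype.ext
  change p.2 - k • p.1 = 0
  rw [h2, hv0, hp1]; simp

lemma codim_const {Γ : Submodule ℂ (H × H)} (h : SymmG Γ) (hΓ : IsClosed (Γ : Set (H × H)))
    {s : Set ℂ} (hs : IsPreconnected s) (hs0 : ∀ z ∈ s, z.im ≠ 0) {l k : ℂ}
    (hl : l ∈ s) (hk : k ∈ s) :
    Module.rank ℂ (H ⧸ ranAt Γ l ⊤) = Module.rank ℂ (H ⧸ ranAt Γ k ⊤) := by
  refine hs.induction₂ (fun l k => Module.rank ℂ (H ⧸ ranAt Γ l ⊤) = Module.rank ℂ (H ⧸ ranAt Γ k ⊤))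
    ?_ ?_ ?_ hl hk
  · intro x hx
    have hx0 : 0 < |x.im| := abs_pos.mpr (hs0 x hx)
    refine mem_nhdsWithin_of_mem_nhds ?_
    filter_upwards [Metric.ball_mem_nhds x (half_pos hx0)] with y hy
    rw [Metric.mem_ball, dist_eq_norm] at hy
    have hy1 : |y.im - x.im| ≤ ‖y - x‖ := by
      rw [← Complex.sub_im]; exact Complex.abs_im_le_norm _
    have hy2 : |x.im| ≤ |y.im| + |y.im - x.im| := by
      have := abs_sub_abs_le_abs_sub x.im y.im
      rw [abs_sub_comm] at this; linarith
    refine le_antisymm (codim_le h hΓ ?_) (codim_le h hΓ ?_)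
    · rw [norm_sub_rev]; linarith
    · linarith
  · intro x y z _ _ _ h1 h2; exact h1.trans h2
  · intro x y _ _ h1; exact h1.symm

lemma codim_all {Γ : Submodule ℂ (H × H)} (h : SymmG Γ) (hΓ : IsClosed (Γ : Set (H × H)))
    {n : Cardinal} (h1 : Module.rank ℂ (H ⧸ ranAt Γ Complex.I ⊤) = n)
    (h2 : Module.rank ℂ (H ⧸ ranAt Γ (-Complex.I) ⊤) = n) {l : ℂ} (hl : l.im ≠ 0) :
    Module.rank ℂ (H ⧸ ranAt Γ l ⊤) = n := by
  rcases lt_or_gt_of_ne hl with hneg | hpos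
  · rw [← h2]
    exact codim_const h hΓ (s := {z | z.im < 0}) (convex_halfSpace_im_lt 0).isPreconnected
      (fun z hz => ne_of_lt hz) hneg (by simp)
  · rw [← h1]
    exact codim_const h hΓ (s := {z | 0 < z.im}) (convex_halfSpace_im_gt 0).isPreconnected
      (fun z hz => ne_of_gt hz) hpos (by simp)

/-! ### Dense subspaces and closed subspaces of finite codimension -/

lemma dense_aux {D W : Submodule ℂ H} (hD : Dense (D : Set H)) (hW : IsClosed (W : Set H))
    [FiniteDimensional ℂ (H ⧸ W)] :
    (∀ x : H, ∃ d ∈ D, x - d ∈ W) ∧ ∀ x ∈ W, x ∈ closure ((D ⊓ W : Submodule ℂ H) : Set H) := by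
  have : CompleteSpace W := hW.completeSpace_coe
  have : FiniteDimensional ℂ Wᗮ := Module.Finite.equiv
    (Submodule.quotientEquivOfIsCompl W Wᗮ (Submodule.isCompl_orthogonal _))
  let Q : H →L[ℂ] Wᗮ := Wᗮ.orthogonalProjectionOnto
  have hQsurj : Function.Surjective Q := fun y =>
    ⟨y, Submodule.orthogonalProjectionOnto_mem_subspace_eq_self y⟩
  have hQker : ∀ x, Q x = 0 ↔ x ∈ W := by
    intro x
    rw [Submodule.orthogonalProjectionOnto_eq_zero_iff, Submodule.orthogonal_orthogonal]
  let q : D →ₗ[ℂ] Wᗮ := Q.toLinearMap ∘ₗ D.subtype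
  have hq : LinearMap.range q = ⊤ := by
    have h1 : Dense ((LinearMap.range q : Submodule ℂ Wᗮ) : Set Wᗮ) := by
      have h2 := hQsurj.denseRange.dense_image Q.continuous hD
      refine h2.mono ?_
      rintro _ ⟨d, hd, rfl⟩
      exact ⟨⟨d, hd⟩, rfl⟩
    have h3 : IsClosed ((LinearMap.range q : Submodule ℂ Wᗮ) : Set Wᗮ) :=
      Submodule.closed_of_finiteDimensional _
    apply SetLike.coe_injective
    rw [← h3.closure_eq, h1.closure_eq]; rfl
  obtain ⟨s, hs⟩ := q.exists_rightInverse_of_surjective hq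
  have hs' : ∀ y, Q (s y : H) = y := fun y => LinearMap.congr_fun hs y
  constructor
  · intro x
    refine ⟨s (Q x), (s (Q x)).2, ?_⟩
    rw [← hQker, map_sub, hs', sub_self]
  · intro x hx
    let s' : Wᗮ →L[ℂ] H := LinearMap.toContinuousLinearMap (D.subtype ∘ₗ s)
    let P : H →L[ℂ] H := ContinuousLinearMap.id ℂ H - s'.comp Q
    have hP : ∀ y, P y = y - (s (Q y) : H) := fun y => rfl
    have hPx : P x = x := by rw [hP, (hQker x).mpr hx]; simp
    rw [← hPx]
    refine map_mem_closure P.continuous (hD x) ?_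
    intro d hd
    refine ⟨?_, ?_⟩
    · rw [hP]; exact D.sub_mem hd (s (Q d)).2
    · change P d ∈ W
      rw [hP, ← hQker, map_sub, hs', sub_self]

lemma codim_step {Γ : Submodule ℂ (H × H)} (h : SymmG Γ)
    (hD : Dense ((Γ.map (LinearMap.fst ℂ H H) : Submodule ℂ H) : Set H))
    {l : ℂ} (hl : l.im ≠ 0) {W : Submodule ℂ H} (hW : IsClosed (W : Set H))
    [FiniteDimensional ℂ (H ⧸ W)] :
    Module.rank ℂ (H ⧸ ranAt Γ l W) =
      Module.rank ℂ (H ⧸ W) + Module.rank ℂ (H ⧸ ranAt Γ l ⊤) := by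
  have hle : ranAt Γ l W ≤ ranAt Γ l ⊤ := by
    intro y hy
    obtain ⟨p, h1, h2, h3⟩ := mem_ranAt.mp hy
    exact mem_ranAt.mpr ⟨p, h1, trivial, h3⟩
  let A : Γ →ₗ[ℂ] (H ⧸ W) := W.mkQ ∘ₗ LinearMap.fst ℂ H H ∘ₗ Γ.subtype
  let B : Γ →ₗ[ℂ] (H ⧸ ranAt Γ l W) :=
    (ranAt Γ l W).mkQ ∘ₗ (shiftMap H l).toLinearMap ∘ₗ Γ.subtype
  let C : (H ⧸ ranAt Γ l W) →ₗ[ℂ] (H ⧸ ranAt Γ l ⊤) := Submodule.factor hle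
  have hker : LinearMap.ker A = LinearMap.ker B := by
    ext ⟨p, hp⟩
    have hA : A ⟨p, hp⟩ = W.mkQ p.1 := rfl
    have hB : B ⟨p, hp⟩ = (ranAt Γ l W).mkQ (p.2 - l • p.1) := rfl
    rw [LinearMap.mem_ker, LinearMap.mem_ker, hA, hB, Submodule.mkQ_apply, Submodule.mkQ_apply,
      Submodule.Quotient.mk_eq_zero, Submodule.Quotient.mk_eq_zero]
    constructor
    · intro h1; exact mem_ranAt.mpr ⟨p, hp, h1, rfl⟩
    · intro h1
      obtain ⟨p', h2, h3, h4⟩ := mem_ranAt.mp h1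
      have hb := h.bound l (Γ.sub_mem hp h2)
      have h5 : (p - p').2 - l • (p - p').1 = 0 := by
        rw [Prod.snd_sub, Prod.fst_sub, smul_sub, sub_sub_sub_comm, h4, sub_self]
      rw [h5, norm_zero] at hb
      have h6 : ‖(p - p').1‖ = 0 := by
        have := norm_nonneg (p - p').1
        have hpos : 0 < |l.im| := abs_pos.mpr hl
        nlinarith
      have h7 : p.1 = p'.1 := sub_eq_zero.mp (norm_eq_zero.mp h6)
      rw [h7]; exact h3
  have hAs : LinearMap.range A = ⊤ := by
    rw [LinearMap.range_eq_top]
    intro y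
    obtain ⟨x, rfl⟩ := W.mkQ_surjective y
    obtain ⟨d, hd, hxd⟩ := (dense_aux hD hW).1 x
    obtain ⟨p, hp, rfl⟩ := hd
    refine ⟨⟨p, hp⟩, ?_⟩
    change W.mkQ p.1 = W.mkQ x
    rw [eq_comm, Submodule.mkQ_apply, Submodule.mkQ_apply, Submodule.Quotient.eq]
    exact hxd
  have hrB : Module.rank ℂ (LinearMap.range B) = Module.rank ℂ (H ⧸ W) := by
    rw [← (B.quotKerEquivRange).rank_eq, ← (Submodule.quotEquivOfEq _ _ hker).rank_eq,
      (A.quotKerEquivRange).rank_eq, hAs, rank_top]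
  have hkC : LinearMap.ker C = LinearMap.range B := by
    ext y
    obtain ⟨x, rfl⟩ := Submodule.mkQ_surjective _ y
    have hC : C ((ranAt Γ l W).mkQ x) = (ranAt Γ l ⊤).mkQ x := rfl
    rw [LinearMap.mem_ker, hC, Submodule.mkQ_apply, Submodule.Quotient.mk_eq_zero]
    constructor
    · intro h1
      obtain ⟨p, hp, -, rfl⟩ := mem_ranAt.mp h1
      exact ⟨⟨p, hp⟩, rfl⟩
    · rintro ⟨⟨p, hp⟩, h1⟩
      have h2 : (ranAt Γ l W).mkQ (p.2 - l • p.1) = (ranAt Γ l W).mkQ x := h1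
      rw [Submodule.mkQ_apply, Submodule.mkQ_apply, Submodule.Quotient.eq] at h2
      have h3 := hle h2
      have h4 : p.2 - l • p.1 ∈ ranAt Γ l ⊤ := mem_ranAt.mpr ⟨p, hp, trivial, rfl⟩
      simpa using (ranAt Γ l ⊤).sub_mem h4 h3
  have hCs : Function.Surjective C := by
    intro y
    obtain ⟨x, rfl⟩ := Submodule.mkQ_surjective _ y
    exact ⟨(ranAt Γ l W).mkQ x, rfl⟩
  have hfin := LinearMap.rank_range_add_rank_ker C
  rw [LinearMap.range_eq_top.mpr hCs, rank_top, hkC, hrB] at hfin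
  rw [← hfin, add_comm]

/-! ### Chains and polynomials -/

/-- `u 0, u 1, …, u m` is an orbit of the relation `Γ`. -/
def IsOrbit (Γ : Submodule ℂ (H × H)) (m : ℕ) (u : ℕ → H) : Prop :=
  ∀ k < m, (u k, u (k + 1)) ∈ Γ

/-- The linear map sending `X ^ k` to `u k`. -/
def polyEval (u : ℕ → H) : Polynomial ℂ →ₗ[ℂ] H :=
  Polynomial.lsum fun k => LinearMap.toSpanSingleton ℂ H (u k)

lemma polyEval_monomial (u : ℕ → H) (k : ℕ) (a : ℂ) :
    polyEval u (Polynomial.monomial k a) = a • u k := by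
  simp [polyEval, Polynomial.lsum_apply, Polynomial.sum_monomial_index]

lemma polyEval_eq_sum (u : ℕ → H) {p : Polynomial ℂ} {m : ℕ} (hp : p.natDegree < m) :
    polyEval u p = ∑ k ∈ Finset.range m, p.coeff k • u k := by
  conv_lhs => rw [p.as_sum_range' m hp]
  rw [map_sum]
  exact Finset.sum_congr rfl fun k _ => polyEval_monomial u k _

lemma polyEval_X_mul (u : ℕ → H) (p : Polynomial ℂ) :
    polyEval u (Polynomial.X * p) = polyEval (fun k => u (k + 1)) p := by
  induction p using Polynomial.induction_on' with
  | add p q hp hq => rw [mul_add, map_add, map_add, hp, hq]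
  | monomial k a => rw [Polynomial.X_mul_monomial, polyEval_monomial, polyEval_monomial]

lemma polyEval_mem {Γ : Submodule ℂ (H × H)} {m : ℕ} {u : ℕ → H} (hu : IsOrbit Γ m u)
    {p : Polynomial ℂ} (hp : p.natDegree < m) :
    (polyEval u p, polyEval u (Polynomial.X * p)) ∈ Γ := by
  rw [polyEval_X_mul, polyEval_eq_sum _ hp, polyEval_eq_sum _ hp]
  have : (∑ k ∈ Finset.range m, p.coeff k • u k, ∑ k ∈ Finset.range m, p.coeff k • u (k + 1)) =
      ∑ k ∈ Finset.range m, p.coeff k • (u k, u (k + 1)) := by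
    rw [Prod.ext_iff, Prod.fst_sum, Prod.snd_sum]
    exact ⟨rfl, rfl⟩
  rw [this]
  exact Γ.sum_mem fun k hk => Γ.smul_mem _ (hu k (Finset.mem_range.mp hk))

/-- The polynomial with the given list of roots. -/
def polyL (L : List ℂ) : Polynomial ℂ := (L.map fun l => Polynomial.X - Polynomial.C l).prod

lemma polyL_cons (l : ℂ) (L : List ℂ) :
    polyL (l :: L) = Polynomial.X * polyL L - l • polyL L := by
  simp [polyL, sub_mul, Polynomial.smul_eq_C_mul]

lemma polyL_monic (L : List ℂ) : (polyL L).Monic := by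
  induction L with
  | nil => simp [polyL]
  | cons l L ih =>
    have : polyL (l :: L) = (Polynomial.X - Polynomial.C l) * polyL L := by simp [polyL]
    rw [this]; exact (Polynomial.monic_X_sub_C l).mul ih

lemma polyL_natDegree (L : List ℂ) : (polyL L).natDegree = L.length := by
  induction L with
  | nil => simp [polyL]
  | cons l L ih =>
    have : polyL (l :: L) = (Polynomial.X - Polynomial.C l) * polyL L := by simp [polyL]
    rw [this, (Polynomial.monic_X_sub_C l).natDegree_mul (polyL_monic L), ih,
      Polynomial.natDegree_X_sub_C, List.length_cons, add_comm]

/-- The range of `(S - l₁) ⋯ (S - l_m)`. -/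
def ranL (Γ : Submodule ℂ (H × H)) : List ℂ → Submodule ℂ H
  | [] => ⊤
  | l :: L => ranAt Γ l (ranL Γ L)

lemma polyEval_mem_ranL {Γ : Submodule ℂ (H × H)} {m : ℕ} {u : ℕ → H} (hu : IsOrbit Γ m u)
    (L : List ℂ) (hL : L.length ≤ m) : polyEval u (polyL L) ∈ ranL Γ L := by
  induction L with
  | nil => exact trivial
  | cons l L ih =>
    rw [List.length_cons] at hL
    refine mem_ranAt.mpr ⟨(polyEval u (polyL L), polyEval u (Polynomial.X * polyL L)), ?_,
      ih (by omega), ?_⟩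
    · exact polyEval_mem hu (by rw [polyL_natDegree]; omega)
    · rw [polyL_cons, map_sub, map_smul]

lemma exists_orbit_of_mem_ranL {Γ : Submodule ℂ (H × H)}
    (hfun : ∀ p ∈ Γ, p.1 = 0 → p.2 = 0) (L : List ℂ) (y : H) (hy : y ∈ ranL Γ L) :
    ∃ u, IsOrbit Γ L.length u ∧ polyEval u (polyL L) = y := by
  induction L generalizing y with
  | nil =>
    refine ⟨fun _ => y, fun k hk => by simp at hk, ?_⟩
    have : polyL [] = Polynomial.monomial 0 (1 : ℂ) := by simp [polyL]
    rw [this, polyEval_monomial, one_smul]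
  | cons l L ih =>
    obtain ⟨p, hp, hpW, hpy⟩ := mem_ranAt.mp hy
    obtain ⟨u, hu, hup⟩ := ih p.1 hpW
    set m := L.length with hm
    have hdeg : (polyL L).natDegree < m + 1 := by rw [polyL_natDegree]; omega
    have hcoeff : (polyL L).coeff m = 1 := by
      rw [hm, ← polyL_natDegree]; exact polyL_monic L
    have hum : u m ∈ Γ.map (LinearMap.fst ℂ H H) := by
      have h1 := polyEval_eq_sum u hdeg
      rw [Finset.sum_range_succ, hcoeff, one_smul, hup] at h1
      rw [← sub_eq_iff_eq_add'.mpr h1]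
      refine Submodule.sub_mem _ ⟨p, hp, rfl⟩ (Submodule.sum_mem _ fun k hk => ?_)
      exact Submodule.smul_mem _ _ ⟨_, hu k (Finset.mem_range.mp hk), rfl⟩
    obtain ⟨q, hq, hqu⟩ := hum
    have hqu : q.1 = u m := hqu
    let v : ℕ → H := fun k => if k ≤ m then u k else q.2
    have hv : IsOrbit Γ (m + 1) v := by
      intro k hk
      rcases Nat.lt_succ_iff_lt_or_eq.mp hk with h1 | h1
      · have e1 : v k = u k := if_pos (by omega)
        have e2 : v (k + 1) = u (k + 1) := if_pos (by omega)
        rw [e1, e2]; exact hu k h1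
      · have e1 : v k = q.1 := by rw [hqu, h1]; exact if_pos le_rfl
        have e2 : v (k + 1) = q.2 := if_neg (by omega)
        rw [e1, e2]; exact hq
    have hvp : polyEval v (polyL L) = p.1 := by
      rw [← hup, polyEval_eq_sum _ hdeg, polyEval_eq_sum _ hdeg]
      refine Finset.sum_congr rfl fun k hk => ?_
      have e1 : v k = u k := if_pos (by rw [Finset.mem_range] at hk; omega)
      rw [e1]
    refine ⟨v, hv, ?_⟩
    have h2 := polyEval_mem hv hdeg
    have h3 := hfun _ (Γ.sub_mem h2 hp) (by simp [hvp])
    have h4 : polyEval v (Polynomial.X * polyL L) = p.2 := sub_eq_zero.mp h3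
    rw [polyL_cons, map_sub, map_smul, h4, hvp, hpy]

lemma ranL_props {Γ : Submodule ℂ (H × H)} (h : SymmG Γ) (hΓ : IsClosed (Γ : Set (H × H)))
    (hD : Dense ((Γ.map (LinearMap.fst ℂ H H) : Submodule ℂ H) : Set H)) {n : ℕ}
    (hn : ∀ l : ℂ, l.im ≠ 0 → Module.rank ℂ (H ⧸ ranAt Γ l ⊤) = (n : Cardinal))
    (L : List ℂ) (hL : ∀ l ∈ L, l.im ≠ 0) :
    IsClosed (ranL Γ L : Set H) ∧
      Module.rank ℂ (H ⧸ ranL Γ L) = ((L.length * n : ℕ) : Cardinal) := by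
  induction L with
  | nil =>
    refine ⟨isClosed_univ, ?_⟩
    have : Subsingleton (H ⧸ ranL Γ []) := Submodule.Quotient.subsingleton_iff.mpr rfl
    rw [rank_subsingleton']; simp
  | cons l L ih =>
    obtain ⟨h1, h2⟩ := ih fun k hk => hL k (List.mem_cons_of_mem _ hk)
    have hl := hL l List.mem_cons_self
    refine ⟨isClosed_ranAt h hΓ hl h1, ?_⟩
    have : FiniteDimensional ℂ (H ⧸ ranL Γ L) := by
      rw [FiniteDimensional, ← Module.rank_lt_aleph0_iff, h2]
      exact Cardinal.natCast_lt_aleph0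
    have h3 := codim_step h hD hl h1
    change Module.rank ℂ (H ⧸ ranAt Γ l (ranL Γ L)) = _
    rw [h3, h2, hn l hl, List.length_cons, add_mul, one_mul, Nat.cast_add]

lemma exists_roots (m : ℕ) (hm : 1 ≤ m) (z : ℂ) (hzr : ∀ r : ℝ, (r : ℂ) ^ m ≠ z) :
    ∃ L : List ℂ, L.length = m ∧ (∀ l ∈ L, l.im ≠ 0) ∧
      polyL L = Polynomial.X ^ m - Polynomial.C z := by
  set P : Polynomial ℂ := Polynomial.X ^ m - Polynomial.C z with hP
  have hmon : P.Monic := Polynomial.monic_X_pow_sub_C z (by omega)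
  have hsp : P.Splits := IsAlgClosed.splits P
  have hprod := hsp.eq_prod_roots_of_monic hmon
  refine ⟨P.roots.toList, ?_, ?_, ?_⟩
  · rw [Multiset.length_toList, ← hsp.natDegree_eq_card_roots, hP, Polynomial.natDegree_X_pow_sub_C]
  · intro l hl h0
    rw [Multiset.mem_toList, Polynomial.mem_roots hmon.ne_zero, hP] at hl
    have h1 : l ^ m = z := by simpa [sub_eq_zero] using hl
    apply hzr l.re
    rw [← h1]
    congr 1
    exact Complex.ext (by simp) (by simp [h0])
  · conv_rhs => rw [hprod]
    conv_rhs => rw [← Multiset.coe_toList P.roots]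
    rw [Multiset.map_coe, Multiset.prod_coe]
    rfl

/-! ### Powers -/

lemma mem_graph_pcomp (T₂ T₁ : H →ₗ.[ℂ] H) (p : H × H) :
    p ∈ (pcomp T₂ T₁).graph ↔ ∃ y, (p.1, y) ∈ T₁.graph ∧ (y, p.2) ∈ T₂.graph := by
  have key : ∀ (x : T₁.domain) (hx : T₁ x ∈ T₂.domain) (h' : (x : H) ∈ (pcomp T₂ T₁).domain),
      (pcomp T₂ T₁) ⟨x, h'⟩ = T₂ ⟨T₁ x, hx⟩ := by
    intro x hx h'
    have e : (Submodule.equivMapOfInjective T₁.domain.subtype (Submodule.injective_subtype _)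
      (T₂.domain.comap T₁.toFun)).symm ⟨x, h'⟩ = ⟨x, hx⟩ := by
      rw [LinearEquiv.symm_apply_eq]
      apply Subtype.ext
      simp
    change T₂.toFun ((T₁.toFun.restrict (p := T₂.domain.comap T₁.toFun) (q := T₂.domain)
      fun _ hx => hx) ((Submodule.equivMapOfInjective T₁.domain.subtype
        (Submodule.injective_subtype _) (T₂.domain.comap T₁.toFun)).symm ⟨x, h'⟩)) = _
    rw [e]
    rfl
  obtain ⟨a, b⟩ := p
  constructor
  · intro h
    rw [LinearPMap.mem_graph_iff] at h
    obtain ⟨⟨x, hx⟩, h1, h2⟩ := h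
    obtain ⟨x', hx', rfl⟩ := hx
    have hx'' : T₁ x' ∈ T₂.domain := hx'
    simp only at h1 h2
    refine ⟨T₁ x', ?_, ?_⟩
    · rw [LinearPMap.mem_graph_iff]
      exact ⟨x', h1, rfl⟩
    · rw [LinearPMap.mem_graph_iff]
      refine ⟨⟨T₁ x', hx''⟩, rfl, ?_⟩
      rw [← h2]; exact (key x' hx'' _).symm
  · rintro ⟨y, h1, h2⟩
    rw [LinearPMap.mem_graph_iff] at h1 h2
    obtain ⟨x, hx1, hx2⟩ := h1
    obtain ⟨w, hw1, hw2⟩ := h2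
    simp only at hx1 hx2 hw1 hw2
    have hx : T₁ x ∈ T₂.domain := by rw [hx2, ← hw1]; exact w.2
    have hmem : (x : H) ∈ (pcomp T₂ T₁).domain := ⟨x, hx, rfl⟩
    rw [LinearPMap.mem_graph_iff]
    refine ⟨⟨x, hmem⟩, hx1, ?_⟩
    rw [key x hx hmem, ← hw2]
    congr 1
    apply Subtype.ext
    rw [hw1]; exact hx2

lemma mem_graph_pow (S : H →ₗ.[ℂ] H) (m : ℕ) (p : H × H) :
    p ∈ (pmapPow S (m + 1)).graph ↔
      ∃ u, IsOrbit S.graph (m + 1) u ∧ u 0 = p.1 ∧ u (m + 1) = p.2 := by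
  induction m generalizing p with
  | zero =>
    constructor
    · intro h
      refine ⟨fun k => if k = 0 then p.1 else p.2, ?_, by simp, by simp⟩
      intro k hk
      have : k = 0 := by omega
      subst this
      exact h
    · rintro ⟨u, hu, h1, h2⟩
      have := hu 0 (by omega)
      rw [h1] at this
      have h2 : u (0 + 1) = p.2 := h2
      rw [h2] at this
      exact this
  | succ m ih =>
    change p ∈ (pcomp S (pmapPow S (m + 1))).graph ↔ _
    rw [mem_graph_pcomp]
    constructor
    · rintro ⟨y, h1, h2⟩
      obtain ⟨u, hu, hu0, hum⟩ := (ih _).mp h1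
      simp only at hu0 hum
      refine ⟨fun k => if k ≤ m + 1 then u k else p.2, ?_, by simpa using hu0, by simp⟩
      intro k hk
      rcases Nat.lt_succ_iff_lt_or_eq.mp hk with h3 | h3
      · have e1 : k ≤ m + 1 := by omega
        have e2 : k + 1 ≤ m + 1 := by omega
        simp only [if_pos e1, if_pos e2]
        exact hu k h3
      · have e1 : k ≤ m + 1 := by omega
        have e2 : ¬ (k + 1 ≤ m + 1) := by omega
        simp only [if_pos e1, if_neg e2]
        rw [h3, hum]; exact h2
    · rintro ⟨u, hu, hu0, hum⟩
      refine ⟨u (m + 1), (ih _).mpr ⟨u, fun k hk => hu k (by omega), hu0, rfl⟩, ?_⟩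
      rw [← hum]; exact hu (m + 1) (by omega)

lemma mem_domain_pow (S : H →ₗ.[ℂ] H) (m : ℕ) (x : H) :
    x ∈ (pmapPow S (m + 1)).domain ↔ ∃ u, IsOrbit S.graph (m + 1) u ∧ u 0 = x := by
  rw [LinearPMap.mem_domain_iff]
  constructor
  · rintro ⟨y, hy⟩
    obtain ⟨u, h1, h2, -⟩ := (mem_graph_pow S m _).mp hy
    exact ⟨u, h1, h2⟩
  · rintro ⟨u, h1, h2⟩
    exact ⟨u (m + 1), (mem_graph_pow S m _).mpr ⟨u, h1, h2, rfl⟩⟩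

lemma ranAt_pow (S : H →ₗ.[ℂ] H) (m : ℕ) (z : ℂ) (L : List ℂ) (hL : L.length = m + 1)
    (hLz : polyL L = Polynomial.X ^ (m + 1) - Polynomial.C z) :
    ranAt (pmapPow S (m + 1)).graph z ⊤ = ranL S.graph L := by
  have hev : ∀ u : ℕ → H, polyEval u (polyL L) = u (m + 1) - z • u 0 := by
    intro u
    rw [hLz, map_sub, ← Polynomial.monomial_one_right_eq_X_pow, ← Polynomial.monomial_zero_left,
      polyEval_monomial, polyEval_monomial, one_smul]
  ext y
  constructor
  · intro hy
    obtain ⟨p, hp, -, rfl⟩ := mem_ranAt.mp hy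
    obtain ⟨u, hu, h0, h1⟩ := (mem_graph_pow S m p).mp hp
    rw [← h0, ← h1, ← hev]
    exact polyEval_mem_ranL hu L hL.le
  · intro hy
    obtain ⟨u, hu, h1⟩ := exists_orbit_of_mem_ranL
      (fun p hp h0 => LinearPMap.graph_fst_eq_zero_snd S (x := p.1) (x' := p.2) hp h0) L y hy
    rw [hL] at hu
    rw [hev] at h1
    exact mem_ranAt.mpr ⟨(u 0, u (m + 1)), (mem_graph_pow S m _).mpr ⟨u, hu, rfl, rfl⟩, trivial, h1⟩

lemma symmG_pow (S : H →ₗ.[ℂ] H) (h : SymmG S.graph) (m : ℕ) :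
    SymmG (pmapPow S (m + 1)).graph := by
  have key : ∀ k (u v : ℕ → H), IsOrbit S.graph k u → IsOrbit S.graph k v →
      ⟪u k, v 0⟫_ℂ = ⟪u 0, v k⟫_ℂ := by
    intro k
    induction k with
    | zero => intro u v _ _; rfl
    | succ k ih =>
      intro u v hu hv
      have h1 := ih (fun j => u (j + 1)) v (fun j hj => hu (j + 1) (by omega))
        (fun j hj => hv j (by omega))
      rw [h1]
      exact h _ (hu 0 (by omega)) _ (hv k (by omega))
  intro p hp q hq
  obtain ⟨u, hu, h0, h1⟩ := (mem_graph_pow S m p).mp hp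
  obtain ⟨v, hv, h2, h3⟩ := (mem_graph_pow S m q).mp hq
  rw [← h0, ← h1, ← h2, ← h3]
  exact key _ u v hu hv

lemma dense_pow (S : H →ₗ.[ℂ] H) (hd : Dense (S.domain : Set H)) (h : SymmG S.graph)
    (hR : IsClosed (ranAt S.graph Complex.I ⊤ : Set H))
    [FiniteDimensional ℂ (H ⧸ ranAt S.graph Complex.I ⊤)] (m : ℕ) :
    Dense ((pmapPow S (m + 1)).domain : Set H) := by
  induction m with
  | zero => exact hd
  | succ m ih =>
    have hsub : (S.domain : Set H) ⊆ closure ((pmapPow S (m + 2)).domain : Set H) := by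
      intro f hf
      obtain ⟨g, hg⟩ := LinearPMap.mem_domain_iff.mp hf
      have hy := (dense_aux ih hR).2 (g - Complex.I • f) (mem_ranAt.mpr ⟨(f, g), hg, trivial, rfl⟩)
      rw [Metric.mem_closure_iff] at hy ⊢
      intro ε hε
      obtain ⟨y, ⟨hy1, hy2⟩, hy3⟩ := hy ε hε
      obtain ⟨p, hp, -, rfl⟩ := mem_ranAt.mp hy2
      refine ⟨p.1, ?_, ?_⟩
      · obtain ⟨v, hv, hv0⟩ := (mem_domain_pow S m _).mp hy1
        let u : ℕ → H := fun k => Nat.rec p.1 (fun j x => v j + Complex.I • x) k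
        have hus : ∀ k, u (k + 1) = v k + Complex.I • u k := fun k => rfl
        have hu0 : u 0 = p.1 := rfl
        refine (mem_domain_pow S (m + 1) _).mpr ⟨u, ?_, rfl⟩
        intro k
        induction k with
        | zero =>
          intro _
          rw [hus, hv0, hu0, sub_add_cancel]
          exact hp
        | succ k ihk =>
          intro hk
          rw [hus (k + 1)]
          nth_rewrite 1 [hus k]
          exact S.graph.add_mem (hv k (by omega)) (S.graph.smul_mem Complex.I (ihk (by omega)))
      · have hb := h.bound Complex.I (S.graph.sub_mem hg hp)
        rw [dist_eq_norm] at hy3 ⊢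
        refine lt_of_le_of_lt ?_ hy3
        have e : g - Complex.I • f - (p.2 - Complex.I • p.1) =
            ((f, g) - p).2 - Complex.I • ((f, g) - p).1 := by
          rw [Prod.snd_sub, Prod.fst_sub, smul_sub, sub_sub_sub_comm]
        rw [e]
        simpa using hb
    intro x
    exact closure_minimal hsub isClosed_closure (hd x)

/-! ### Deficiency spaces -/

lemma rank_kerAt_s8 (T : H →ₗ.[ℂ] H) (hT : Dense (T.domain : Set H)) (μ ν : ℂ)
    (hμ : (starRingEnd ℂ) μ = ν) (hcl : IsClosed (ranAt T.graph ν ⊤ : Set H)) :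
    Module.rank ℂ (kerAt T.adjoint μ) = Module.rank ℂ (H ⧸ ranAt T.graph ν ⊤) := by
  rw [← rank_orthogonal_eq hcl]
  have : (kerAt T.adjoint μ).map T.adjoint.domain.subtype = (ranAt T.graph ν ⊤)ᗮ := by
    ext y
    rw [Submodule.mem_orthogonal']
    have hform := LinearPMap.adjoint_isFormalAdjoint hT
    constructor
    · rintro ⟨y, hy, rfl⟩ w hw
      obtain ⟨p, hp, -, rfl⟩ := mem_ranAt.mp hw
      obtain ⟨x, hx1, hx2⟩ := (LinearPMap.mem_graph_iff _).mp hp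
      have hy' : T.adjoint y = μ • (y : H) := by
        have : T.adjoint y - μ • (y : H) = 0 := hy
        exact sub_eq_zero.mp this
      have h1 := hform y x
      rw [hy', inner_smul_left, hμ] at h1
      rw [← hx1, ← hx2, inner_sub_right, inner_smul_right]
      change ⟪(y : H), T x⟫_ℂ - ν * ⟪(y : H), (x : H)⟫_ℂ = 0
      rw [← h1, sub_self]
    · intro hy
      have h1 : ∀ x : T.domain, ⟪μ • y, (x : H)⟫_ℂ = ⟪y, T x⟫_ℂ := by
        intro x
        have h2 := hy _ (mem_ranAt.mpr ⟨((x : H), T x), T.mem_graph x, trivial, rfl⟩)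
        rw [inner_sub_right, inner_smul_right, sub_eq_zero] at h2
        rw [inner_smul_left, hμ]
        exact h2.symm
      have hmem : y ∈ T.adjoint.domain := LinearPMap.mem_adjoint_domain_of_exists y ⟨_, h1⟩
      refine ⟨⟨y, hmem⟩, ?_, rfl⟩
      have h3 := LinearPMap.adjoint_apply_eq hT ⟨y, hmem⟩ h1
      change T.adjoint ⟨y, hmem⟩ - μ • y = 0
      rw [h3, sub_self]
  rw [← this]
  exact (Submodule.equivMapOfInjective T.adjoint.domain.subtype
    (Submodule.injective_subtype _) _).rank_eq

lemma symmG_of (S : H →ₗ.[ℂ] H) (hsym : IsSymmP S) : SymmG S.graph := by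
  intro p hp q hq
  obtain ⟨x, hx1, hx2⟩ := (LinearPMap.mem_graph_iff _).mp hp
  obtain ⟨y, hy1, hy2⟩ := (LinearPMap.mem_graph_iff _).mp hq
  rw [← hx1, ← hx2, ← hy1, ← hy2]
  exact hsym x y

lemma isSymmP_of (S : H →ₗ.[ℂ] H) (h : SymmG S.graph) : IsSymmP S := by
  intro f g
  exact h _ (S.mem_graph f) _ (S.mem_graph g)

lemma isClosed_of_ran (T : H →ₗ.[ℂ] H) (h : SymmG T.graph)
    (hR : IsClosed (ranAt T.graph Complex.I ⊤ : Set H)) : T.IsClosed := by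
  change IsClosed (T.graph : Set (H × H))
  refine isClosed_of_closure_subset fun p hp => ?_
  have h1 : shiftMap H Complex.I p ∈ ranAt T.graph Complex.I ⊤ := by
    change _ ∈ (ranAt T.graph Complex.I ⊤ : Set H)
    rw [← hR.closure_eq]
    refine map_mem_closure (shiftMap H Complex.I).continuous hp ?_
    intro q hq
    exact mem_ranAt.mpr ⟨q, hq, trivial, rfl⟩
  obtain ⟨q, hq, -, hqp⟩ := mem_ranAt.mp h1
  rw [shiftMap_apply] at hqp
  have hbd : ∀ r ∈ closure (T.graph : Set (H × H)), ‖(r - q).1‖ ≤ ‖(r - q).2 - Complex.I • (r - q).1‖ := by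
    intro r hr
    have hcl : IsClosed {r : H × H | ‖(r - q).1‖ ≤ ‖(r - q).2 - Complex.I • (r - q).1‖} :=
      isClosed_le (by fun_prop) (by fun_prop)
    refine closure_minimal ?_ hcl hr
    intro r hr
    have := h.bound Complex.I (T.graph.sub_mem hr hq)
    simpa using this
  have h2 := hbd p hp
  have h3 : (p - q).2 - Complex.I • (p - q).1 = 0 := by
    rw [Prod.snd_sub, Prod.fst_sub, smul_sub, sub_sub_sub_comm, hqp, sub_self]
  rw [h3, norm_zero] at h2
  have h4 : (p - q).1 = 0 := norm_le_zero_iff.mp h2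
  rw [h4, smul_zero, sub_zero] at h3
  have : p = q := sub_eq_zero.mp (Prod.ext h4 h3)
  rw [this]; exact hq

/-- If a densely defined, closed, symmetric operator `S` has finite equal deficiency
indices `n₊(S) = n₋(S) = n`, then for every `m ≥ 1` the power `S^m` is densely defined,
symmetric, closed, and `n₊(S^m) = n₋(S^m) = m·n`. -/
theorem powers_equal_deficiency (S : H →ₗ.[ℂ] H)
    (hd : Dense (S.domain : Set H)) (hc : S.IsClosed) (hsym : IsSymmP S)
    (n : ℕ) (hp : nPlus S = (n : Cardinal)) (hm : nMinus S = (n : Cardinal))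
    (m : ℕ) (hm1 : 1 ≤ m) :
    Dense (((pmapPow S m).domain : Submodule ℂ H) : Set H) ∧
    IsSymmP (pmapPow S m) ∧ (pmapPow S m).IsClosed ∧
    nPlus (pmapPow S m) = ((m * n : ℕ) : Cardinal) ∧
    nMinus (pmapPow S m) = ((m * n : ℕ) : Cardinal) := by
  obtain ⟨m, rfl⟩ : ∃ k, m = k + 1 := ⟨m - 1, by omega⟩
  have hG : SymmG S.graph := symmG_of S hsym
  have hI : (Complex.I).im ≠ 0 := by simp
  have hI' : (-Complex.I).im ≠ 0 := by simp
  have hcl : ∀ l : ℂ, l.im ≠ 0 → IsClosed (ranAt S.graph l ⊤ : Set H) := fun l hl =>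
    isClosed_ranAt hG hc hl isClosed_univ
  have hD : Dense ((S.graph.map (LinearMap.fst ℂ H H) : Submodule ℂ H) : Set H) := by
    rw [LinearPMap.graph_map_fst_eq_domain]; exact hd
  have hn1 : Module.rank ℂ (H ⧸ ranAt S.graph (-Complex.I) ⊤) = (n : Cardinal) := by
    rw [← hp, nPlus, rank_kerAt_s8 S hd Complex.I (-Complex.I) (by simp) (hcl _ hI')]
  have hn2 : Module.rank ℂ (H ⧸ ranAt S.graph Complex.I ⊤) = (n : Cardinal) := by
    rw [← hm, nMinus, rank_kerAt_s8 S hd (-Complex.I) Complex.I (by simp) (hcl _ hI)]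
  have hn : ∀ l : ℂ, l.im ≠ 0 → Module.rank ℂ (H ⧸ ranAt S.graph l ⊤) = (n : Cardinal) :=
    fun l hl => codim_all hG hc hn2 hn1 hl
  have hfd : FiniteDimensional ℂ (H ⧸ ranAt S.graph Complex.I ⊤) := by
    rw [FiniteDimensional, ← Module.rank_lt_aleph0_iff, hn2]
    exact Cardinal.natCast_lt_aleph0
  have hdense := dense_pow S hd hG (hcl _ hI) m
  have hsymm := symmG_pow S hG m
  have hran : ∀ z : ℂ, z.im ≠ 0 → z.re = 0 →
      IsClosed (ranAt (pmapPow S (m + 1)).graph z ⊤ : Set H) ∧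
      Module.rank ℂ (H ⧸ ranAt (pmapPow S (m + 1)).graph z ⊤) =
        (((m + 1) * n : ℕ) : Cardinal) := by
    intro z hz _
    obtain ⟨L, hL1, hL2, hL3⟩ := exists_roots (m + 1) hm1 z (by
      intro r hr
      apply hz
      rw [← hr, ← Complex.ofReal_pow, Complex.ofReal_im])
    rw [ranAt_pow S m z L hL1 hL3, ← hL1]
    exact ranL_props hG hc hD hn L hL2
  obtain ⟨hc1, hr1⟩ := hran Complex.I hI (by simp)
  obtain ⟨hc2, hr2⟩ := hran (-Complex.I) hI' (by simp)
  refine ⟨hdense, isSymmP_of _ hsymm, isClosed_of_ran _ hsymm hc1, ?_, ?_⟩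
  · rw [nPlus, rank_kerAt_s8 _ hdense Complex.I (-Complex.I) (by simp) hc2, hr2]
  · rw [nMinus, rank_kerAt_s8 _ hdense (-Complex.I) Complex.I (by simp) hc1, hr1]
end
end

section
/- Let T be a densely defined, closed, symmetric operator in a complex Hilbert space H, and suppose that at least one of its deficiency indices n₊(T) = dim ker(T* − i) or n₋(T) = dim ker(T* + i) is finite. Then D := ⋂_{k ∈ ℕ} dom(T^k) is a core for each power T^n, n ∈ ℕ, n ≥ 1; that is, the closure of the restriction of T^n to D equals T^n. In particular, D (and hence each dom(T^k)) is dense in H. -/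
open scoped InnerProductSpace
open Cardinal

noncomputable section

variable {E F G H : Type*}
  [NormedAddCommGroup E] [InnerProductSpace ℂ E] [CompleteSpace E]
  [NormedAddCommGroup F] [InnerProductSpace ℂ F] [CompleteSpace F]
  [NormedAddCommGroup G] [InnerProductSpace ℂ G] [CompleteSpace G]
  [NormedAddCommGroup H] [InnerProductSpace ℂ H] [CompleteSpace H]

namespace SchmCore

open Filter Topology

/-- The domain of the `n`-th power of the restriction of the total map `A` to `d`. -/
def U (A : H →ₗ[ℂ] H) (d : Submodule ℂ H) (n : ℕ) : Submodule ℂ H :=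
  ⨅ k : Fin n, d.comap (A ^ (k : ℕ))

lemma mem_U {A : H →ₗ[ℂ] H} {d : Submodule ℂ H} {n : ℕ} {f : H} :
    f ∈ U A d n ↔ ∀ k, k < n → (A ^ k) f ∈ d := by
  simp only [U, Submodule.mem_iInf, Submodule.mem_comap]
  exact ⟨fun h k hk => h ⟨k, hk⟩, fun h k => h k k.2⟩

lemma U_anti (A : H →ₗ[ℂ] H) (d : Submodule ℂ H) {m n : ℕ} (h : m ≤ n) : U A d n ≤ U A d m := by
  intro f hf
  rw [mem_U] at *
  exact fun k hk => hf k (hk.trans_le h)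

lemma pow_succ_app (A : H →ₗ[ℂ] H) (n : ℕ) (f : H) : (A ^ (n + 1)) f = A ((A ^ n) f) := by
  rw [pow_succ', Module.End.mul_apply]

lemma pow_succ_app' (A : H →ₗ[ℂ] H) (n : ℕ) (f : H) : (A ^ (n + 1)) f = (A ^ n) (A f) := by
  rw [pow_succ, Module.End.mul_apply]

lemma mem_U_succ {A : H →ₗ[ℂ] H} {d : Submodule ℂ H} {n : ℕ} {f : H} :
    f ∈ U A d (n + 1) ↔ f ∈ d ∧ A f ∈ U A d n := by
  simp only [mem_U]
  constructor
  · intro h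
    refine ⟨by simpa using h 0 (Nat.succ_pos _), fun k hk => ?_⟩
    rw [← pow_succ_app']
    exact h _ (by omega)
  · rintro ⟨h0, h⟩ k hk
    cases k with
    | zero => simpa using h0
    | succ k =>
      rw [pow_succ_app']
      exact h k (by omega)

lemma mem_U_succ' {A : H →ₗ[ℂ] H} {d : Submodule ℂ H} {n : ℕ} {f : H} :
    f ∈ U A d (n + 1) ↔ f ∈ U A d n ∧ (A ^ n) f ∈ d := by
  simp only [mem_U]
  constructor
  · exact fun h => ⟨fun k hk => h k (by omega), h n (by omega)⟩
  · rintro ⟨h, h0⟩ k hk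
    rcases Nat.lt_succ_iff_lt_or_eq.1 hk with h1 | h1
    · exact h k h1
    · exact h1 ▸ h0

lemma U_shift (A B : H →ₗ[ℂ] H) (z : ℂ) (hB : ∀ x, B x = A x + z • x) (d : Submodule ℂ H) (n : ℕ) :
    U A d n ≤ U B d n := by
  induction n with
  | zero => intro f _; rw [mem_U]; intro k hk; omega
  | succ n ih =>
    intro f hf
    have h1 := mem_U_succ.1 hf
    rw [mem_U_succ]
    refine ⟨h1.1, ?_⟩
    rw [hB]
    exact ih (Submodule.add_mem _ h1.2 (Submodule.smul_mem _ _ (U_anti A d (Nat.le_succ n) hf)))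

lemma pow_bound (A B : H →ₗ[ℂ] H) (z : ℂ) (hz : ‖z‖ = 1) (hB : ∀ x, B x = A x + z • x) (n : ℕ) :
    ∀ (u : H) (ε : ℝ), (∀ k ≤ n, ‖(A ^ k) u‖ ≤ ε) → ‖(B ^ n) u‖ ≤ 2 ^ n * ε := by
  induction n with
  | zero => intro u ε h; simpa using h 0 le_rfl
  | succ n ih =>
    intro u ε h
    rw [pow_succ_app', pow_succ, mul_assoc]
    apply ih
    intro k hk
    rw [hB, map_add, map_smul, ← pow_succ_app']
    calc _ ≤ ‖(A ^ (k + 1)) u‖ + ‖z • (A ^ k) u‖ := norm_add_le _ _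
      _ ≤ ε + ε := by
        rw [norm_smul, hz, one_mul]
        exact add_le_add (h _ (by omega)) (h _ (by omega))
      _ = 2 * ε := by ring

/-- A dense subspace meets a closed subspace of finite codimension in a dense subspace of it. -/
lemma dense_inter (d R : Submodule ℂ H) (hd : Dense (d : Set H)) (hR : IsClosed (R : Set H))
    (hf : FiniteDimensional ℂ (H ⧸ R)) (h : H) (hh : h ∈ R) (ε : ℝ) (hε : 0 < ε) :
    ∃ v ∈ R ⊓ d, ‖v - h‖ < ε := by
  have : IsClosed (R : Set H) := hR
  let φ : H →L[ℂ] (H ⧸ R) := R.mkQL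
  have hφ : ∀ x, φ x = 0 ↔ x ∈ R := fun x => Submodule.Quotient.mk_eq_zero R
  let ψ : d →ₗ[ℂ] (H ⧸ R) := R.mkQ.comp d.subtype
  have hψ : LinearMap.range ψ = ⊤ := by
    have h1 : Dense ((LinearMap.range ψ : Submodule ℂ (H ⧸ R)) : Set (H ⧸ R)) := by
      have h2 : DenseRange φ := (Submodule.mkQ_surjective R).denseRange
      have h3 := h2.dense_image φ.continuous hd
      refine h3.mono ?_
      rintro _ ⟨x, hx, rfl⟩
      exact ⟨⟨x, hx⟩, rfl⟩
    have h4 : IsClosed ((LinearMap.range ψ : Submodule ℂ (H ⧸ R)) : Set (H ⧸ R)) :=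
      Submodule.closed_of_finiteDimensional _
    have h5 := h1.closure_eq
    rw [h4.closure_eq] at h5
    exact SetLike.coe_injective h5
  obtain ⟨s, hs⟩ := ψ.exists_rightInverse_of_surjective hψ
  let s' : (H ⧸ R) →L[ℂ] H := LinearMap.toContinuousLinearMap (d.subtype.comp s)
  have hs' : ∀ y, φ (s' y) = y := fun y => LinearMap.congr_fun hs y
  have hsd : ∀ y, s' y ∈ d := fun y => (s y).2
  have hcont : Continuous fun v : H => ‖(v - s' (φ v)) - h‖ := by fun_prop
  have h0 : ‖(h - s' (φ h)) - h‖ < ε := by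
    rw [(hφ h).2 hh]; simpa using hε
  obtain ⟨v, hv, hvd⟩ := hd.exists_mem_open (isOpen_lt hcont continuous_const) ⟨h, h0⟩
  have hv' : v ∈ d ∧ ‖(v - s' (φ v)) - h‖ < ε := by
    exact ⟨hv, hvd⟩
  refine ⟨v - s' (φ v), ⟨?_, d.sub_mem hv'.1 (hsd _)⟩, hv'.2⟩
  rw [SetLike.mem_coe, ← hφ, map_sub, hs', sub_self]

lemma cofg_map (S : H →ₗ[ℂ] H) (d R : Submodule ℂ H) (h1 : FiniteDimensional ℂ (H ⧸ d.map S))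
    (h2 : FiniteDimensional ℂ (H ⧸ R)) : FiniteDimensional ℂ (H ⧸ (R ⊓ d).map S) := by
  set Q := (R ⊓ d).map S with hQ
  let N : Submodule ℂ (H ⧸ Q) := (d.map S).map Q.mkQ
  have hle : Q ≤ d.map S := Submodule.map_mono inf_le_right
  have hN : N.FG := by
    let θ : d →ₗ[ℂ] (H ⧸ Q) := (Q.mkQ.comp S).comp d.subtype
    have hr : N = LinearMap.range θ := by
      rw [LinearMap.range_comp, Submodule.range_subtype, Submodule.map_comp]
    rw [hr, Submodule.range_fg_iff_ker_cofg]
    refine Submodule.CoFG.of_le (S := LinearMap.ker (R.mkQ.comp d.subtype)) ?_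
      (Submodule.CoFG.ker _)
    intro x hx
    have hx' : (x : H) ∈ R := by
      simpa using hx
    have : S x ∈ Q := ⟨x, ⟨hx', x.2⟩, rfl⟩
    simpa [θ] using this
  have : Module.Finite ℂ N := Module.Finite.iff_fg.2 hN
  have : Module.Finite ℂ ((H ⧸ Q) ⧸ N) :=
    Module.Finite.equiv (Submodule.quotientQuotientEquivQuotient Q (d.map S) hle).symm
  exact Module.Finite.of_submodule_quotient N

section core

variable (S : H →ₗ[ℂ] H) (d : Submodule ℂ H)

/-- Sequential closedness of the restriction of `S` to `d`. -/
def SeqCl : Prop := ∀ (x : ℕ → H) (a b : H), (∀ᶠ n in atTop, x n ∈ d) → Tendsto x atTop (𝓝 a) →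
  Tendsto (fun n => S (x n)) atTop (𝓝 b) → a ∈ d ∧ S a = b

variable {S d}

lemma closed_map (hcl : SeqCl S d) (hb : ∀ x ∈ d, ‖x‖ ≤ ‖S x‖) (R : Submodule ℂ H)
    (hR : IsClosed (R : Set H)) : IsClosed (((R ⊓ d).map S : Submodule ℂ H) : Set H) := by
  apply IsSeqClosed.isClosed
  intro y b hy hyb
  choose x hx hxy using hy
  have hxc : CauchySeq x := by
    have hyc := hyb.cauchySeq
    rw [Metric.cauchySeq_iff'] at hyc ⊢
    intro ε hε
    obtain ⟨N, hN⟩ := hyc ε hε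
    refine ⟨N, fun n hn => lt_of_le_of_lt ?_ (hN n hn)⟩
    rw [dist_eq_norm, dist_eq_norm, ← hxy, ← hxy, ← map_sub]
    exact hb _ (d.sub_mem (hx n).2 (hx N).2)
  obtain ⟨a, ha⟩ := cauchySeq_tendsto_of_complete hxc
  have h1 := hcl x a b (Eventually.of_forall fun n => (hx n).2) ha (by simpa only [hxy] using hyb)
  exact ⟨a, ⟨hR.mem_of_tendsto ha (Eventually.of_forall fun n => (hx n).1), h1.1⟩, h1.2⟩

lemma range_succ (n : ℕ) :
    (U S d (n + 1)).map (S ^ (n + 1)) = ((U S d n).map (S ^ n) ⊓ d).map S := by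
  ext y
  constructor
  · rintro ⟨f, hf, rfl⟩
    have := mem_U_succ'.1 hf
    exact ⟨(S ^ n) f, ⟨⟨f, this.1, rfl⟩, this.2⟩, (pow_succ_app S n f).symm⟩
  · rintro ⟨_, ⟨⟨f, hf, rfl⟩, hd⟩, rfl⟩
    exact ⟨f, mem_U_succ'.2 ⟨hf, hd⟩, pow_succ_app S n f⟩

lemma range_good (hcl : SeqCl S d) (hb : ∀ x ∈ d, ‖x‖ ≤ ‖S x‖)
    (hfin : FiniteDimensional ℂ (H ⧸ d.map S)) (n : ℕ) :
    IsClosed (((U S d n).map (S ^ n) : Submodule ℂ H) : Set H) ∧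
      FiniteDimensional ℂ (H ⧸ (U S d n).map (S ^ n)) := by
  induction n with
  | zero =>
    have : (U S d 0).map (S ^ 0) = ⊤ := by
      rw [eq_top_iff]
      intro x _
      exact ⟨x, mem_U.2 (fun k hk => by omega), by simp⟩
    rw [this]
    exact ⟨by simp, inferInstance⟩
  | succ n ih =>
    rw [range_succ]
    exact ⟨closed_map hcl hb _ ih.1, cofg_map _ _ _ hfin ih.2⟩

lemma step (hd : Dense (d : Set H)) (hcl : SeqCl S d) (hb : ∀ x ∈ d, ‖x‖ ≤ ‖S x‖)
    (hfin : FiniteDimensional ℂ (H ⧸ d.map S)) (n : ℕ) (f : H) (hf : f ∈ U S d n) (ε : ℝ)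
    (hε : 0 < ε) : ∃ g ∈ U S d (n + 1), ‖(S ^ n) (g - f)‖ < ε := by
  obtain ⟨h1, h2⟩ := range_good hcl hb hfin n
  obtain ⟨v, ⟨⟨g, hg, rfl⟩, hvd⟩, hv⟩ := dense_inter d _ hd h1 h2 ((S ^ n) f) ⟨f, hf, rfl⟩ ε hε
  exact ⟨g, mem_U_succ'.2 ⟨hg, hvd⟩, by rwa [map_sub]⟩

lemma mono_norm (hb : ∀ x ∈ d, ‖x‖ ≤ ‖S x‖) {N m : ℕ} (hm : m ≤ N) {u : H} (hu : u ∈ U S d N) :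
    ‖(S ^ m) u‖ ≤ ‖(S ^ N) u‖ := by
  induction N, hm using Nat.le_induction with
  | base => exact le_rfl
  | succ N hN ih =>
    have := mem_U_succ'.1 hu
    refine (ih this.1).trans ?_
    rw [pow_succ_app]
    exact hb _ this.2

lemma main_approx (hd : Dense (d : Set H)) (hcl : SeqCl S d) (hb : ∀ x ∈ d, ‖x‖ ≤ ‖S x‖)
    (hfin : FiniteDimensional ℂ (H ⧸ d.map S)) (n : ℕ) (f : H) (hf : f ∈ U S d n) (ε : ℝ)
    (hε : 0 < ε) : ∃ g, (∀ m, g ∈ U S d m) ∧ ∀ k ≤ n, ‖(S ^ k) (f - g)‖ ≤ ε := by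
  choose! nx hnx hnx' using step hd hcl hb hfin
  let F : ℕ → H := fun k => Nat.rec f (fun k y => nx (n + k) y (ε / 2 / 2 ^ k)) k
  have hF0 : F 0 = f := rfl
  have hFs : ∀ k, F (k + 1) = nx (n + k) (F k) (ε / 2 / 2 ^ k) := fun k => rfl
  have hFU : ∀ k, F k ∈ U S d (n + k) := by
    intro k
    induction k with
    | zero => exact hf
    | succ k ih =>
      rw [hFs]
      exact hnx _ _ ih _ (by positivity)
  have hFd : ∀ k, ‖(S ^ (n + k)) (F (k + 1) - F k)‖ ≤ ε / 2 / 2 ^ k := by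
    intro k
    rw [hFs]
    exact (hnx' _ _ (hFU k) _ (by positivity)).le
  have hdist : ∀ m k, m ≤ n + k → dist ((S ^ m) (F k)) ((S ^ m) (F (k + 1))) ≤ ε / 2 / 2 ^ k := by
    intro m k hmk
    rw [dist_comm, dist_eq_norm, ← map_sub]
    exact (mono_norm hb hmk (Submodule.sub_mem _
      (U_anti S d (by omega) (hFU (k + 1))) (hFU k))).trans (hFd k)
  have hlim : ∀ m, ∃ a, Tendsto (fun k => (S ^ m) (F k)) atTop (𝓝 a) := by
    intro m
    have hc : CauchySeq (fun k => (S ^ m) (F (k + m))) := by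
      apply cauchySeq_of_le_geometric_two (C := ε)
      intro k
      have h1 := hdist m (k + m) (by omega)
      rw [show k + 1 + m = k + m + 1 by omega]
      refine h1.trans ?_
      apply div_le_div_of_nonneg_left (by positivity) (by positivity)
      exact pow_le_pow_right₀ (by norm_num) (by omega)
    obtain ⟨a, ha⟩ := cauchySeq_tendsto_of_complete hc
    exact ⟨a, (tendsto_add_atTop_iff_nat m).1 ha⟩
  choose g hg using hlim
  have hgs : ∀ m, g m ∈ d ∧ S (g m) = g (m + 1) := by
    intro m
    refine hcl _ _ _ ?_ (hg m) (by simpa only [pow_succ_app] using hg (m + 1))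
    filter_upwards [eventually_gt_atTop m] with k hk
    exact mem_U.1 (hFU k) m (by omega)
  have hgp : ∀ m, (S ^ m) (g 0) = g m := by
    intro m
    induction m with
    | zero => simp
    | succ m ih => rw [pow_succ_app, ih, (hgs m).2]
  refine ⟨g 0, fun m => mem_U.2 fun k _ => by rw [hgp]; exact (hgs k).1, fun k hk => ?_⟩
  rw [map_sub, hgp, ← dist_eq_norm]
  exact dist_le_of_le_geometric_two_of_tendsto₀ (fun j => hdist k j (by omega)) (hg k)

end core

lemma logconvex (a : ℕ → ℝ) (n : ℕ) (M : ℝ) (ha : ∀ k, 0 ≤ a k)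
    (h : ∀ k, k + 2 ≤ n → a (k + 1) ^ 2 ≤ a k * a (k + 2)) (h0 : a 0 ≤ M) (hn : a n ≤ M) :
    ∀ k ≤ n, a k ≤ M := by
  by_contra! hcon
  obtain ⟨j, hj, hjM⟩ := hcon
  obtain ⟨m, hm, hmax⟩ := Finset.exists_max_image (Finset.range (n + 1)) a ⟨0, by simp⟩
  have hex : ∃ k, k ≤ n ∧ a m ≤ a k := ⟨m, by simpa [Nat.lt_succ_iff] using hm, le_rfl⟩
  classical
  obtain ⟨h1, h2⟩ := Nat.find_spec hex
  have hmin := fun k => Nat.find_min hex (m := k)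
  have hmM : M < a m := hjM.trans_le (hmax j (by simpa [Nat.lt_succ_iff] using hj))
  generalize Nat.find hex = k at *
  have hk0 : k ≠ 0 := by rintro rfl; linarith
  have hkn : k ≠ n := by rintro rfl; linarith
  obtain ⟨k, rfl⟩ := Nat.exists_eq_succ_of_ne_zero hk0
  have h3 := h k (by omega)
  have h4 : a (k + 2) ≤ a m := hmax _ (by simp; omega)
  have h5 : a k < a m := by
    have := hmin k (by omega)
    by_contra! hc
    exact this ⟨by omega, hc⟩
  have h6 : 0 < a m := ((ha 0).trans h0).trans_lt hmM
  simp only [Nat.succ_eq_add_one] at *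
  nlinarith [ha k, ha (k + 2), mul_le_mul_of_nonneg_left h4 (ha k)]

lemma sym_bound (A : H →ₗ[ℂ] H) (d : Submodule ℂ H)
    (hs : ∀ f ∈ d, ∀ g ∈ d, ⟪A f, g⟫_ℂ = ⟪f, A g⟫_ℂ) (n : ℕ) (f : H) (hf : f ∈ U A d n) :
    ∀ k ≤ n, ‖(A ^ k) f‖ ≤ ‖f‖ + ‖(A ^ n) f‖ := by
  refine logconvex (fun k => ‖(A ^ k) f‖) n _ (fun k => norm_nonneg _) ?_ (by simp) (by simp)
  intro k hk
  have hf' := mem_U.1 hf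
  have h1 : ⟪(A ^ (k + 1)) f, (A ^ (k + 1)) f⟫_ℂ = ⟪(A ^ k) f, (A ^ (k + 2)) f⟫_ℂ := by
    rw [pow_succ_app A (k + 1)]
    rw [← hs _ (hf' k (by omega)) _ (hf' (k + 1) (by omega)), ← pow_succ_app]
  have h2 : ‖⟪(A ^ (k + 1)) f, (A ^ (k + 1)) f⟫_ℂ‖ = ‖(A ^ (k + 1)) f‖ ^ 2 := by
    rw [inner_self_eq_norm_sq_to_K]
    simp
  show ‖(A ^ (k + 1)) f‖ ^ 2 ≤ _
  rw [← h2, h1]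
  exact norm_inner_le_norm _ _

lemma pow_closed (A : H →ₗ[ℂ] H) (d : Submodule ℂ H) (hcl : SeqCl A d)
    (hs : ∀ f ∈ d, ∀ g ∈ d, ⟪A f, g⟫_ℂ = ⟪f, A g⟫_ℂ) (n : ℕ) :
    IsClosed {p : H × H | p.1 ∈ U A d n ∧ (A ^ n) p.1 = p.2} := by
  apply IsSeqClosed.isClosed
  intro p q hp hpq
  have h1 : Tendsto (fun j => (p j).1) atTop (𝓝 q.1) := (continuous_fst.tendsto q).comp hpq
  have h2 : Tendsto (fun j => (p j).2) atTop (𝓝 q.2) := (continuous_snd.tendsto q).comp hpq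
  have hlim : ∀ k, ∃ a, k ≤ n → Tendsto (fun j => (A ^ k) (p j).1) atTop (𝓝 a) := by
    intro k
    by_cases hk : k ≤ n
    swap
    · exact ⟨0, fun h => absurd h hk⟩
    have hc : CauchySeq (fun j => (A ^ k) (p j).1) := by
      have c1 := h1.cauchySeq
      have c2 := h2.cauchySeq
      rw [Metric.cauchySeq_iff] at *
      intro ε hε
      obtain ⟨N1, hN1⟩ := c1 (ε / 2) (by positivity)
      obtain ⟨N2, hN2⟩ := c2 (ε / 2) (by positivity)
      refine ⟨max N1 N2, fun i hi j hj => ?_⟩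
      have e1 := hN1 i (le_of_max_le_left hi) j (le_of_max_le_left hj)
      have e2 := hN2 i (le_of_max_le_right hi) j (le_of_max_le_right hj)
      have e3 := sym_bound A d hs n _ (Submodule.sub_mem _ (hp i).1 (hp j).1) k hk
      rw [map_sub, map_sub, (hp i).2, (hp j).2] at e3
      rw [dist_eq_norm] at *
      linarith
    obtain ⟨a, ha⟩ := cauchySeq_tendsto_of_complete hc
    exact ⟨a, fun _ => ha⟩
  choose g hg using hlim
  have hgs : ∀ m, m < n → g m ∈ d ∧ A (g m) = g (m + 1) := by
    intro m hm
    refine hcl _ _ _ (Eventually.of_forall fun j => mem_U.1 (hp j).1 m hm) (hg m hm.le)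
      (by simpa only [pow_succ_app] using hg (m + 1) hm)
  have hg0 : g 0 = q.1 := tendsto_nhds_unique (by simpa using hg 0 (Nat.zero_le _)) h1
  have hgn : g n = q.2 := tendsto_nhds_unique (hg n le_rfl) (by simpa only [(hp _).2] using h2)
  have hgp : ∀ m, m ≤ n → (A ^ m) q.1 = g m := by
    intro m
    induction m with
    | zero => intro _; simp [hg0]
    | succ m ih => intro hm; rw [pow_succ_app, ih (by omega), (hgs m (by omega)).2]
  exact ⟨mem_U.2 fun k hk => by rw [hgp k hk.le]; exact (hgs k hk).1, by rw [hgp n le_rfl, hgn]⟩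

lemma mem_pcomp_graph (T₂ T₁ : H →ₗ.[ℂ] H) (p : H × H) :
    p ∈ (pcomp T₂ T₁).graph ↔ ∃ y, (p.1, y) ∈ T₁.graph ∧ (y, p.2) ∈ T₂.graph := by
  have key : ∀ (x : T₁.domain) (hx : T₁ x ∈ T₂.domain) (hx' : (x : H) ∈ (pcomp T₂ T₁).domain),
      (pcomp T₂ T₁) ⟨x, hx'⟩ = T₂ ⟨T₁ x, hx⟩ := by
    intro x hx hx'
    have : (Submodule.equivMapOfInjective T₁.domain.subtype (Submodule.injective_subtype _)
      (T₂.domain.comap T₁.toFun)).symm ⟨x, hx'⟩ = ⟨x, hx⟩ := by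
      rw [LinearEquiv.symm_apply_eq]
      rfl
    show T₂.toFun ((T₁.toFun.restrict (p := T₂.domain.comap T₁.toFun) (q := T₂.domain)
      fun _ hx => hx) ((Submodule.equivMapOfInjective T₁.domain.subtype
        (Submodule.injective_subtype _) (T₂.domain.comap T₁.toFun)).symm ⟨x, hx'⟩)) = _
    rw [this]
    rfl
  rw [LinearPMap.mem_graph_iff]
  constructor
  · rintro ⟨⟨y, hy⟩, h1, h2⟩
    obtain ⟨x, hx, rfl⟩ := id hy
    have hk := key x hx hy
    refine ⟨T₁ x, ?_, ?_⟩
    · rw [← h1]; exact T₁.mem_graph x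
    · rw [← h2]
      have := T₂.mem_graph ⟨T₁ x, hx⟩
      rw [← hk] at this
      exact this
  · rintro ⟨y, h1, h2⟩
    rw [LinearPMap.mem_graph_iff] at h1 h2
    obtain ⟨x, hx, hxy⟩ := h1
    obtain ⟨w, hw, hwy⟩ := h2
    simp only at hx hxy hw hwy
    have hT : T₁ x ∈ T₂.domain := by rw [hxy, ← hw]; exact w.2
    have hx' : (x : H) ∈ (pcomp T₂ T₁).domain := ⟨x, hT, rfl⟩
    refine ⟨⟨x, hx'⟩, hx, ?_⟩
    rw [key x hT hx', ← hwy]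
    congr 1
    exact Subtype.ext (by rw [hw]; exact hxy)

lemma mem_graph_pow (T : H →ₗ.[ℂ] H) (A : H →ₗ[ℂ] H) (hA : ∀ x : T.domain, A x = T x) (n : ℕ)
    (p : H × H) : p ∈ (pmapPow T (n + 1)).graph ↔
      p.1 ∈ U A T.domain (n + 1) ∧ (A ^ (n + 1)) p.1 = p.2 := by
  have hG : ∀ p : H × H, p ∈ T.graph ↔ p.1 ∈ T.domain ∧ A p.1 = p.2 := by
    intro p
    rw [LinearPMap.mem_graph_iff]
    constructor
    · rintro ⟨y, h1, h2⟩
      rw [← h1, ← h2]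
      exact ⟨y.2, hA y⟩
    · rintro ⟨h1, h2⟩
      exact ⟨⟨p.1, h1⟩, rfl, by rw [← h2, ← hA]⟩
  induction n generalizing p with
  | zero =>
    show p ∈ T.graph ↔ _
    rw [hG]
    simp [mem_U]
  | succ n ih =>
    show p ∈ (pcomp T (pmapPow T (n + 1))).graph ↔ _
    rw [mem_pcomp_graph, mem_U_succ']
    simp only [ih, hG, pow_succ_app A (n + 1)]
    constructor
    · rintro ⟨y, ⟨h1, rfl⟩, h2, h3⟩
      exact ⟨⟨h1, h2⟩, h3⟩
    · rintro ⟨⟨h1, h2⟩, h3⟩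
      exact ⟨_, ⟨h1, rfl⟩, h2, h3⟩

lemma mem_dom_pow (T : H →ₗ.[ℂ] H) (A : H →ₗ[ℂ] H) (hA : ∀ x : T.domain, A x = T x) (n : ℕ) :
    (pmapPow T (n + 1)).domain = U A T.domain (n + 1) := by
  ext f
  rw [LinearPMap.mem_domain_iff]
  simp [mem_graph_pow T A hA]

lemma seqCl_of (T : H →ₗ.[ℂ] H) (hc : T.IsClosed) (A S : H →ₗ[ℂ] H)
    (hA : ∀ x : T.domain, A x = T x) (z : ℂ) (hS : ∀ x, S x = A x + z • x) :
    SeqCl S T.domain := by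
  intro x a b hx hxa hxb
  have h1 : Tendsto (fun n => (x n, S (x n) - z • x n)) atTop (𝓝 (a, b - z • a)) :=
    hxa.prodMk_nhds (hxb.sub (hxa.const_smul z))
  have hm : (a, b - z • a) ∈ T.graph := by
    refine hc.mem_of_tendsto h1 ?_
    filter_upwards [hx] with n hn
    have := T.mem_graph ⟨x n, hn⟩
    rw [← hA] at this
    simpa [hS] using this
  rw [LinearPMap.mem_graph_iff] at hm
  obtain ⟨y, h2, h3⟩ := hm
  simp only at h2 h3
  subst h2
  refine ⟨y.2, ?_⟩
  rw [hS, hA, h3]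
  abel

lemma core_at (T : H →ₗ.[ℂ] H) (hd : Dense (T.domain : Set H)) (hc : T.IsClosed)
    (hsym : IsSymmP T) (z : ℂ) (hz : z = Complex.I ∨ z = -Complex.I)
    (hfin : Module.rank ℂ (kerAt T.adjoint z) < ℵ₀) (A : H →ₗ[ℂ] H)
    (hA : ∀ x : T.domain, A x = T x) (n : ℕ) (f : H) (hf : f ∈ U A T.domain n) (ε : ℝ)
    (hε : 0 < ε) :
    ∃ g, (∀ m, g ∈ U A T.domain m) ∧ ‖f - g‖ ≤ ε ∧ ‖(A ^ n) (f - g)‖ ≤ ε := by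
  let S : H →ₗ[ℂ] H := A + z • LinearMap.id
  have hS : ∀ x, S x = A x + z • x := fun x => rfl
  have hS' : ∀ x, A x = S x + (-z) • x := fun x => by rw [hS]; simp
  have hzn : ‖z‖ = 1 := by rcases hz with rfl | rfl <;> simp
  have hzre : z.re = 0 := by rcases hz with rfl | rfl <;> simp
  have hzc : (starRingEnd ℂ) z = -z := by rcases hz with rfl | rfl <;> simp
  have hcl := seqCl_of T hc A S hA z hS
  have hb : ∀ x ∈ T.domain, ‖x‖ ≤ ‖S x‖ := by
    intro x hx
    have h1 := norm_add_sq (𝕜 := ℂ) (A x) (z • x)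
    have h2 : (⟪A x, x⟫_ℂ).im = 0 := by
      have h := hsym ⟨x, hx⟩ ⟨x, hx⟩
      rw [← hA] at h
      simp only at h
      have h3 := inner_conj_symm (𝕜 := ℂ) (A x) x
      rw [← h] at h3
      exact Complex.conj_eq_iff_im.1 h3
    rw [inner_smul_right, norm_smul, hzn, one_mul] at h1
    have h4 : RCLike.re (z * ⟪A x, x⟫_ℂ) = 0 := by
      show (z * ⟪A x, x⟫_ℂ).re = 0
      rw [Complex.mul_re, hzre, h2]; ring
    rw [h4] at h1
    rw [hS]
    apply le_of_sq_le_sq _ (norm_nonneg _)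
    nlinarith [sq_nonneg ‖A x‖]
  have hfd : FiniteDimensional ℂ (H ⧸ T.domain.map S) := by
    have hcR := closed_map hcl hb ⊤ isClosed_univ
    rw [top_inf_eq] at hcR
    set K := T.domain.map S with hK
    have : CompleteSpace K := hcR.completeSpace_coe
    have : FiniteDimensional ℂ (kerAt T.adjoint z) := Module.rank_lt_aleph0_iff.1 hfin
    have hle : Kᗮ ≤ (kerAt T.adjoint z).map T.adjoint.domain.subtype := by
      intro y hy
      have h1 : ∀ x : T.domain, ⟪z • y, (x : H)⟫_ℂ = ⟪y, T x⟫_ℂ := by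
        intro x
        have h2 := (Submodule.mem_orthogonal' K y).1 hy (S x) ⟨x, x.2, rfl⟩
        rw [hS, inner_add_right, inner_smul_right, hA] at h2
        rw [inner_smul_left, hzc]
        linear_combination -h2
      have hyd := LinearPMap.mem_adjoint_domain_of_exists (T := T) y ⟨z • y, h1⟩
      refine ⟨⟨y, hyd⟩, ?_, rfl⟩
      have h3 := LinearPMap.adjoint_apply_eq hd ⟨y, hyd⟩ h1
      show (T.adjoint.toFun - z • T.adjoint.domain.subtype) ⟨y, hyd⟩ = 0
      rw [LinearMap.sub_apply, sub_eq_zero]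
      exact h3
    have : FiniteDimensional ℂ Kᗮ := Submodule.finiteDimensional_of_le hle
    exact Module.Finite.equiv (Submodule.quotientEquivOfIsCompl K Kᗮ K.isCompl_orthogonal).symm
  obtain ⟨g, hg, hg'⟩ := main_approx hd hcl hb hfd n f (U_shift A S z hS _ n hf) (ε / 2 ^ n)
    (by positivity)
  have hle : ε / 2 ^ n ≤ ε := div_le_self hε.le (one_le_pow₀ (by norm_num))
  refine ⟨g, fun m => U_shift S A (-z) hS' _ m (hg m), ?_, ?_⟩
  · exact (by simpa using hg' 0 (Nat.zero_le _) : ‖f - g‖ ≤ ε / 2 ^ n).trans hle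
  · refine (pow_bound S A (-z) (by rw [norm_neg, hzn]) hS' n _ _ hg').trans ?_
    rw [mul_div_cancel₀]
    positivity

end SchmCore

/-- Schmüdgen's theorem: if `T` is densely defined, closed, symmetric, and at least one
deficiency index is finite, then `D = ⋂_k dom(T^k)` is a core for each `T^n`, `n ≥ 1`
(the closure of the graph of `T^n` restricted to `D` is the graph of `T^n`); in
particular `D`, and hence each `dom(T^k)`, is dense. -/
theorem schmuedgen_core (T : H →ₗ.[ℂ] H)
    (hd : Dense (T.domain : Set H)) (hc : T.IsClosed) (hsym : IsSymmP T)
    (hfin : nPlus T < ℵ₀ ∨ nMinus T < ℵ₀) :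
    (∀ n : ℕ, 1 ≤ n →
      ((pmapPow T n).graph ⊓
        (⨅ k : ℕ, (pmapPow T (k + 1)).domain).prod (⊤ : Submodule ℂ H)).topologicalClosure
        = (pmapPow T n).graph) ∧
    Dense (((⨅ k : ℕ, (pmapPow T (k + 1)).domain : Submodule ℂ H)) : Set H) ∧
    (∀ k : ℕ, 1 ≤ k → Dense (((pmapPow T k).domain : Submodule ℂ H) : Set H)) := by
  
  obtain ⟨A, hA0⟩ := LinearMap.exists_extend T.toFun
  have hA : ∀ x : T.domain, A x = T x := fun x => LinearMap.congr_fun hA0 x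
  have happ : ∀ (n : ℕ) (f : H), f ∈ SchmCore.U A T.domain n → ∀ ε : ℝ, 0 < ε →
      ∃ g, (∀ m, g ∈ SchmCore.U A T.domain m) ∧ ‖f - g‖ ≤ ε ∧ ‖(A ^ n) (f - g)‖ ≤ ε := by
    intro n f hf ε hε
    rcases hfin with h | h
    · exact SchmCore.core_at T hd hc hsym _ (Or.inl rfl) h A hA n f hf ε hε
    · exact SchmCore.core_at T hd hc hsym _ (Or.inr rfl) h A hA n f hf ε hε
  have hD : ∀ g, (∀ m, g ∈ SchmCore.U A T.domain m) →
      g ∈ (⨅ k : ℕ, (pmapPow T (k + 1)).domain) := by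
    intro g hg
    rw [Submodule.mem_iInf]
    intro k
    rw [SchmCore.mem_dom_pow T A hA]
    exact hg _
  have hdense : Dense (((⨅ k : ℕ, (pmapPow T (k + 1)).domain : Submodule ℂ H)) : Set H) := by
    intro f
    rw [Metric.mem_closure_iff]
    intro ε hε
    obtain ⟨g, hg, h1, -⟩ := happ 0 f (SchmCore.mem_U.2 (fun k hk => by omega)) (ε / 2)
      (by positivity)
    exact ⟨g, hD g hg, by rw [dist_eq_norm]; linarith⟩
  refine ⟨?_, hdense, ?_⟩
  · intro n hn
    obtain ⟨n, rfl⟩ : ∃ m, n = m + 1 := ⟨n - 1, by omega⟩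
    have hgr : ((pmapPow T (n + 1)).graph : Set (H × H)) =
        {p : H × H | p.1 ∈ SchmCore.U A T.domain (n + 1) ∧ (A ^ (n + 1)) p.1 = p.2} := by
      ext p
      exact SchmCore.mem_graph_pow T A hA n p
    apply le_antisymm
    · apply Submodule.topologicalClosure_minimal _ inf_le_left
      rw [hgr]
      refine SchmCore.pow_closed A T.domain
        (SchmCore.seqCl_of T hc A A hA 0 (fun x => by simp)) ?_ (n + 1)
      intro f hf g hg
      have := hsym ⟨f, hf⟩ ⟨g, hg⟩
      rwa [← hA, ← hA] at this
    · intro p hp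
      obtain ⟨h1, h2⟩ := (SchmCore.mem_graph_pow T A hA n p).1 hp
      rw [← SetLike.mem_coe, Submodule.topologicalClosure_coe, Metric.mem_closure_iff]
      intro ε hε
      obtain ⟨g, hg, e1, e2⟩ := happ (n + 1) p.1 h1 (ε / 2) (by positivity)
      refine ⟨(g, (A ^ (n + 1)) g), ⟨?_, ?_⟩, ?_⟩
      · exact (SchmCore.mem_graph_pow T A hA n _).2 ⟨hg _, rfl⟩
      · exact ⟨hD g hg, trivial⟩
      · rw [map_sub, h2] at e2
        rw [Prod.dist_eq, dist_eq_norm, dist_eq_norm]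
        exact max_lt (by linarith) (by linarith)
  · intro k hk
    obtain ⟨k, rfl⟩ : ∃ m, k = m + 1 := ⟨k - 1, by omega⟩
    refine hdense.mono ?_
    intro x hx
    exact (Submodule.mem_iInf _).1 hx k
end
end

section
/- Let P be a polynomial of even degree m = 2k (k ≥ 1) with real coefficients, positive leading coefficient, and m distinct real roots, regarded as a polynomial over ℂ. Then there exists ε₀ > 0 such that for all ε ∈ (0, ε₀), each of the polynomials P − iε and P + iε has exactly k roots, counted with multiplicity, in the open upper half-plane ℂ₊ = {z ∈ ℂ : Im z > 0} and exactly k roots, counted with multiplicity, in the open lower half-plane ℂ₋ = {z ∈ ℂ : Im z < 0}, and all of these roots are simple. -/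
open Polynomial

noncomputable section

/-- The number of roots (counted with multiplicity) of `Q` in the open upper half-plane
`ℂ₊ = {z : ℂ | 0 < Im z}`. -/
def countUpper (Q : Polynomial ℂ) : ℕ := (Q.roots.filter fun z => 0 < z.im).card

/-- The number of roots (counted with multiplicity) of `Q` in the open lower half-plane
`ℂ₋ = {z : ℂ | Im z < 0}`. -/
def countLower (Q : Polynomial ℂ) : ℕ := (Q.roots.filter fun z => z.im < 0).card

/-- All roots of `Q` are simple (multiplicity one). -/
def allSimpleRoots (Q : Polynomial ℂ) : Prop := ∀ z ∈ Q.roots, Q.rootMultiplicity z = 1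

open Filter Topology

lemma aux_local (P : Polynomial ℝ) (x s : ℝ) (hs : s ≠ 0) (hx : P.eval x = 0)
    (hd : P.derivative.eval x ≠ 0) :
    ∃ g : ℝ → ℂ, Tendsto g (𝓝[>] 0) (𝓝 (x : ℂ)) ∧ ∀ᶠ ε : ℝ in 𝓝[>] (0 : ℝ),
      (P.map (algebraMap ℝ ℂ)).eval (g ε) = (s : ℂ) * ε * Complex.I ∧
      0 < (g ε).im * (s * P.derivative.eval x) := by
  set d := P.derivative.eval x with hd_def
  set F : ℂ → ℂ := fun z => (P.map (algebraMap ℝ ℂ)).eval z with hF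
  have hev : ∀ (Q : Polynomial ℝ) (y : ℝ), (Q.map (algebraMap ℝ ℂ)).eval (y : ℂ)
      = ((Q.eval y : ℝ) : ℂ) := by
    intro Q y
    have := Polynomial.eval_map_apply (algebraMap ℝ ℂ) y (p := Q)
    simpa using this
  have hFx : F x = 0 := by
    have := hev P x
    rw [hx] at this
    simpa only [Complex.ofReal_zero] using this
  have hder : HasStrictDerivAt F (d : ℂ) (x : ℂ) := by
    have := (P.map (algebraMap ℝ ℂ)).hasStrictDerivAt (x : ℂ)
    rw [Polynomial.derivative_map, hev] at this
    exact this
  have hdC : (d : ℂ) ≠ 0 := by exact_mod_cast hd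
  set G := hder.localInverse F (d : ℂ) (x : ℂ) hdC with hG
  have hG0 : G 0 = x := by
    have := (hder.eventually_left_inverse hdC).self_of_nhds
    rwa [hFx] at this
  have hGd : HasDerivAt G (d : ℂ)⁻¹ 0 := by
    have := (hder.to_localInverse hdC).hasDerivAt
    rwa [hFx] at this
  have hGr : ∀ᶠ w in 𝓝 (0 : ℂ), F (G w) = w := by
    have := hder.eventually_right_inverse hdC
    rwa [hFx] at this
  have hlin : HasDerivAt (fun ε : ℝ => (s : ℂ) * ε * Complex.I) ((s : ℂ) * Complex.I) 0 := by
    have h1 : HasDerivAt (fun ε : ℝ => (ε : ℂ)) 1 (0 : ℝ) := Complex.ofRealCLM.hasDerivAt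
    simpa using (h1.const_mul (s : ℂ)).mul_const Complex.I
  have hlin0 : (s : ℂ) * ((0 : ℝ) : ℂ) * Complex.I = 0 := by simp
  have hcomp : HasDerivAt (fun ε : ℝ => G ((s : ℂ) * ε * Complex.I))
      ((d : ℂ)⁻¹ * ((s : ℂ) * Complex.I)) 0 := by
    have hGd' : HasDerivAt G (d : ℂ)⁻¹ ((s : ℂ) * ((0 : ℝ) : ℂ) * Complex.I) := by
      rw [hlin0]; exact hGd
    exact hGd'.comp (0 : ℝ) hlin
  have him : HasDerivAt (fun ε : ℝ => (G ((s : ℂ) * ε * Complex.I)).im) (d⁻¹ * s) 0 := by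
    have := Complex.imCLM.hasFDerivAt.comp_hasDerivAt (0 : ℝ) hcomp
    have e : Complex.imCLM ((d : ℂ)⁻¹ * ((s : ℂ) * Complex.I)) = d⁻¹ * s := by
      rw [Complex.imCLM_apply, ← Complex.ofReal_inv]
      simp
    rw [e] at this
    exact this
  refine ⟨fun ε => G ((s : ℂ) * ε * Complex.I), ?_, ?_⟩
  · have := hcomp.continuousAt.tendsto
    simp only [hlin0, hG0] at this
    exact this.mono_left nhdsWithin_le_nhds
  · have hl : Tendsto (fun ε : ℝ => (s : ℂ) * ε * Complex.I) (𝓝[>] 0) (𝓝 0) := by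
      have := hlin.continuousAt.tendsto
      rw [hlin0] at this
      exact this.mono_left nhdsWithin_le_nhds
    have hsl : Tendsto (slope (fun ε : ℝ => (G ((s : ℂ) * ε * Complex.I)).im) 0) (𝓝[>] 0)
        (𝓝 (d⁻¹ * s)) :=
      (hasDerivAt_iff_tendsto_slope.1 him).mono_left
        (nhdsWithin_mono _ fun y hy => ne_of_gt hy)
    have hsl2 := hsl.mul_const (s * d)
    have hpos : 0 < d⁻¹ * s * (s * d) := by
      have : d⁻¹ * s * (s * d) = s ^ 2 := by field_simp
      rw [this]; positivity
    filter_upwards [hl.eventually hGr, hsl2.eventually (lt_mem_nhds hpos), self_mem_nhdsWithin]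
      with ε h1 h2 h3
    refine ⟨h1, ?_⟩
    have h3' : 0 < ε := h3
    simp only [slope_def_field, hlin0, hG0, Complex.ofReal_im, sub_zero] at h2
    have := mul_pos h2 h3'
    have e : (G ((s : ℂ) * ε * Complex.I)).im / ε * (s * d) * ε
      = (G ((s : ℂ) * ε * Complex.I)).im * (s * d) := by field_simp
    rwa [e] at this

lemma aux_sign {ι : Type*} [DecidableEq ι] (f : ι → ℝ) (c : ℝ) (t : Finset ι)
    (h : ∀ j ∈ t, f j ≠ c) :
    0 < (-1 : ℝ) ^ (t.filter fun j => c < f j).card * ∏ j ∈ t, (c - f j) := by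
  induction t using Finset.induction_on with
  | empty => simp
  | insert a t ha ih =>
    have ih' := ih fun j hj => h j (Finset.mem_insert_of_mem hj)
    have hac := h a (Finset.mem_insert_self a t)
    rw [Finset.prod_insert ha, Finset.filter_insert]
    split_ifs with hlt
    · rw [Finset.card_insert_of_notMem (by simp [ha]), pow_succ]
      nlinarith [mul_pos ih' (sub_pos.2 hlt)]
    · have : 0 < c - f a := sub_pos.2 (lt_of_le_of_ne (not_lt.1 hlt) hac)
      nlinarith [mul_pos ih' this]

lemma aux_count (k : ℕ) :
    (Finset.univ.filter fun i : Fin (2 * k) => Even i.val).card = k ∧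
    (Finset.univ.filter fun i : Fin (2 * k) => ¬ Even i.val).card = k := by
  have h1 : ((Finset.range (2 * k)).filter fun i => Even i).card = k := by
    induction k with
    | zero => simp
    | succ n ih =>
      rw [show 2 * (n + 1) = 2 * n + 1 + 1 by ring, Finset.range_add_one, Finset.range_add_one,
        Finset.filter_insert, Finset.filter_insert, if_neg (by simp), if_pos (by simp),
        Finset.card_insert_of_notMem (by simp), ih]
  have h2 : (Finset.univ.filter fun i : Fin (2 * k) => Even i.val).card = k := by
    refine Eq.trans ?_ h1
    rw [← Finset.card_map Fin.valEmbedding]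
    congr 1
    ext j
    simp only [Finset.mem_map, Finset.mem_filter, Finset.mem_univ, true_and, Finset.mem_range,
      Fin.valEmbedding_apply]
    constructor
    · rintro ⟨a, ha, rfl⟩
      exact ⟨a.2, ha⟩
    · rintro ⟨hj, he⟩
      exact ⟨⟨j, hj⟩, he, rfl⟩
  refine ⟨h2, ?_⟩
  have := Finset.card_filter_add_card_filter_not (s := (Finset.univ : Finset (Fin (2 * k))))
    (fun i => Even i.val)
  rw [h2, Finset.card_univ, Fintype.card_fin] at this
  omega

lemma aux_final_s10 (Q : Polynomial ℂ) (k : ℕ) (hQ : Q ≠ 0) (hdeg : Q.natDegree = 2 * k)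
    (z : Fin (2 * k) → ℂ) (hz : Function.Injective z) (hroot : ∀ i, Q.eval (z i) = 0)
    (σ : ℝ) (him : ∀ i, 0 < (z i).im * (σ * (-1) ^ (i.val))) :
    countUpper Q = k ∧ countLower Q = k ∧ allSimpleRoots Q := by
  have hnd : (Finset.univ.val.map z).Nodup := Finset.univ.nodup.map hz
  have hle : Finset.univ.val.map z ≤ Q.roots := by
    rw [Multiset.le_iff_subset hnd]
    intro w hw
    obtain ⟨i, -, rfl⟩ := Multiset.mem_map.1 hw
    exact (Polynomial.mem_roots hQ).2 (hroot i)
  have hroots : Finset.univ.val.map z = Q.roots := by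
    apply Multiset.eq_of_le_of_card_le hle
    refine (Polynomial.card_roots' Q).trans ?_
    simp [hdeg]
  have hup : countUpper Q = (Finset.univ.filter fun i => 0 < (z i).im).card := by
    rw [countUpper, ← hroots, Multiset.filter_map, Multiset.card_map]; rfl
  have hlo : countLower Q = (Finset.univ.filter fun i => (z i).im < 0).card := by
    rw [countLower, ← hroots, Multiset.filter_map, Multiset.card_map]; rfl
  obtain ⟨c1, c2⟩ := aux_count k
  have hsimple : allSimpleRoots Q := by
    classical
    intro w hw
    rw [← Polynomial.count_roots]
    rw [hroots] at hnd
    exact Multiset.count_eq_one_of_mem hnd hw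
  rcases lt_trichotomy σ 0 with hσ | hσ | hσ
  · have key : ∀ i, (0 < (z i).im ↔ ¬ Even i.val) ∧ ((z i).im < 0 ↔ Even i.val) := by
      intro i
      have h := him i
      rcases Nat.even_or_odd i.val with he | ho
      · rw [he.neg_one_pow] at h
        have : (z i).im < 0 := by nlinarith
        simp [he, this, this.le]
      · rw [ho.neg_one_pow] at h
        have : 0 < (z i).im := by nlinarith
        simp [Nat.not_even_iff_odd.2 ho, this, this.le]
    simp only [hup, hlo, key]
    exact ⟨c2, c1, hsimple⟩
  · subst hσ
    rcases Nat.eq_zero_or_pos k with rfl | hk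
    · exact ⟨by rw [hup]; simp, by rw [hlo]; simp, hsimple⟩
    · have := him ⟨0, by omega⟩
      simp at this
  · have key : ∀ i, (0 < (z i).im ↔ Even i.val) ∧ ((z i).im < 0 ↔ ¬ Even i.val) := by
      intro i
      have h := him i
      rcases Nat.even_or_odd i.val with he | ho
      · rw [he.neg_one_pow] at h
        have : 0 < (z i).im := by nlinarith
        simp [he, this, this.le]
      · rw [ho.neg_one_pow] at h
        have : (z i).im < 0 := by nlinarith
        simp [Nat.not_even_iff_odd.2 ho, this, this.le]
    simp only [hup, hlo, key]
    exact ⟨c1, c2, hsimple⟩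

lemma aux_deriv (P : Polynomial ℝ) (k : ℕ)
    (hdeg : P.natDegree = 2 * k) (hlead : 0 < P.leadingCoeff)
    (hcard : P.roots.card = 2 * k) (hnodup : P.roots.Nodup) :
    ∃ f : Fin (2 * k) → ℝ, Function.Injective f ∧ (∀ i, P.eval (f i) = 0) ∧
      ∀ i, 0 < P.derivative.eval (f i) * (-1) ^ (i.val + 1) := by
  set S : Finset ℝ := ⟨P.roots, hnodup⟩ with hS
  have hSc : S.card = 2 * k := hcard
  set f := S.orderEmbOfFin hSc with hf
  have hP0 : P ≠ 0 := by rintro rfl; simp at hlead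
  have hPf : P = C P.leadingCoeff * ∏ i, (X - C (f i)) := by
    have h := Polynomial.C_leadingCoeff_mul_prod_multiset_X_sub_C (p := P) (by rw [hcard, hdeg])
    have h2 : (Multiset.map (fun a => X - C a) P.roots).prod = ∏ a ∈ S, (X - C a) := rfl
    rw [h2, ← Finset.map_orderEmbOfFin_univ S hSc, Finset.prod_map] at h
    exact h.symm
  have hr : ∀ i, P.eval (f i) = 0 := fun i =>
    (Polynomial.mem_roots hP0).1 (Finset.orderEmbOfFin_mem S hSc i)
  refine ⟨f, f.injective, hr, fun i => ?_⟩
  have hd : P.derivative.eval (f i)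
      = P.leadingCoeff * ∏ j ∈ Finset.univ.erase i, (f i - f j) := by
    conv_lhs => rw [hPf, ← Finset.mul_prod_erase _ _ (Finset.mem_univ i)]
    simp [Polynomial.eval_prod]
  have hs := aux_sign f (f i) (Finset.univ.erase i)
    (fun j hj => fun h => (Finset.ne_of_mem_erase hj) (f.injective h))
  have hc : ((Finset.univ.erase i).filter fun j => f i < f j) = Finset.Ioi i := by
    ext j
    simp only [Finset.mem_filter, Finset.mem_erase, Finset.mem_univ, and_true, f.lt_iff_lt,
      Finset.mem_Ioi]
    exact ⟨fun h => h.2, fun h => ⟨h.ne', h⟩⟩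
  rw [hc, Fin.card_Ioi] at hs
  have hpar : (-1 : ℝ) ^ (2 * k - 1 - i.val) = (-1) ^ (i.val + 1) := by
    have hi := i.2
    apply neg_one_pow_congr
    simp only [Nat.even_iff]
    omega
  rw [hpar] at hs
  rw [hd]
  nlinarith [mul_pos hlead hs]

lemma aux_main_s10 (P : Polynomial ℝ) (k : ℕ) (hk : 1 ≤ k)
    (hdeg : P.natDegree = 2 * k) (hlead : 0 < P.leadingCoeff)
    (hcard : P.roots.card = 2 * k) (hnodup : P.roots.Nodup) (s : ℝ) (hs : s ≠ 0) :
    ∀ᶠ ε : ℝ in 𝓝[>] (0 : ℝ),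
      countUpper (P.map (algebraMap ℝ ℂ) - C ((s : ℂ) * ε * Complex.I)) = k ∧
      countLower (P.map (algebraMap ℝ ℂ) - C ((s : ℂ) * ε * Complex.I)) = k ∧
      allSimpleRoots (P.map (algebraMap ℝ ℂ) - C ((s : ℂ) * ε * Complex.I)) := by
  obtain ⟨f, hfi, hr, hd⟩ := aux_deriv P k hdeg hlead hcard hnodup
  have hd0 : ∀ i, P.derivative.eval (f i) ≠ 0 := by
    intro i h
    have := hd i
    simp [h] at this
  choose g hg1 hg2 using fun i => aux_local P (f i) s hs (hr i) (hd0 i)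
  have hinj : ∀ᶠ ε : ℝ in 𝓝[>] (0 : ℝ), ∀ i j, i ≠ j → g i ε ≠ g j ε := by
    rw [eventually_all]; intro i
    rw [eventually_all]; intro j
    by_cases hij : i = j
    · simp [hij]
    · have : ((f i : ℝ) : ℂ) ≠ f j := by
        intro h; exact hij (hfi (by exact_mod_cast h))
      have hsub := ((hg1 i).sub (hg1 j)).eventually_ne (sub_ne_zero.2 this)
      filter_upwards [hsub] with ε h _ using sub_ne_zero.1 h
  filter_upwards [hinj, eventually_all.2 hg2] with ε h1 h2
  have hnd : (P.map (algebraMap ℝ ℂ) - C ((s : ℂ) * ε * Complex.I)).natDegree = 2 * k := by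
    rw [Polynomial.natDegree_sub_C, Polynomial.natDegree_map, hdeg]
  refine aux_final_s10 _ k ?_ hnd (fun i => g i ε) ?_ ?_ (-s) ?_
  · intro h
    rw [h] at hnd
    simp at hnd
    omega
  · intro i j hij
    by_contra hne
    exact h1 i j hne hij
  · intro i
    simp [(h2 i).1]
  · intro i
    have a := mul_pos (h2 i).2 (hd i)
    have b : 0 < (P.derivative.eval (f i)) ^ 2 := by have := hd0 i; positivity
    have e : (g i ε).im * (s * P.derivative.eval (f i)) *
        (P.derivative.eval (f i) * (-1) ^ (i.val + 1))
        = ((g i ε).im * (-s * (-1) ^ i.val)) * (P.derivative.eval (f i)) ^ 2 := by ring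
    rw [e] at a
    exact pos_of_mul_pos_left a b.le

/-- For a real polynomial `P` of even degree `m = 2k` with positive leading coefficient
and `m` distinct real roots, for all sufficiently small `ε > 0` both `P - iε` and
`P + iε` have exactly `k` roots (with multiplicity) in the open upper half-plane and
exactly `k` roots in the open lower half-plane, all of them simple. -/
theorem perturbed_roots_even (P : Polynomial ℝ) (k : ℕ) (hk : 1 ≤ k)
    (hdeg : P.natDegree = 2 * k) (hlead : 0 < P.leadingCoeff)
    (hcard : P.roots.card = 2 * k) (hnodup : P.roots.Nodup) :
    ∃ ε₀ : ℝ, 0 < ε₀ ∧ ∀ ε : ℝ, 0 < ε → ε < ε₀ →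
      (countUpper (P.map (algebraMap ℝ ℂ) - Polynomial.C ((ε : ℂ) * Complex.I)) = k ∧
       countLower (P.map (algebraMap ℝ ℂ) - Polynomial.C ((ε : ℂ) * Complex.I)) = k ∧
       allSimpleRoots (P.map (algebraMap ℝ ℂ) - Polynomial.C ((ε : ℂ) * Complex.I))) ∧
      (countUpper (P.map (algebraMap ℝ ℂ) + Polynomial.C ((ε : ℂ) * Complex.I)) = k ∧
       countLower (P.map (algebraMap ℝ ℂ) + Polynomial.C ((ε : ℂ) * Complex.I)) = k ∧
       allSimpleRoots (P.map (algebraMap ℝ ℂ) + Polynomial.C ((ε : ℂ) * Complex.I))) := by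
  have h1 := aux_main_s10 P k hk hdeg hlead hcard hnodup 1 one_ne_zero
  have h2 := aux_main_s10 P k hk hdeg hlead hcard hnodup (-1) (by norm_num)
  obtain ⟨ε₀, h0, h⟩ := mem_nhdsGT_iff_exists_Ioo_subset.1 (h1.and h2)
  refine ⟨ε₀, h0, fun ε hε hlt => ?_⟩
  have := h ⟨hε, hlt⟩
  simpa using this
end
end

section
/- Let S be a densely defined, closed, symmetric operator in a complex Hilbert space H, let m ∈ ℕ, m ≥ 1, and assume S^m is densely defined. Let P(t) = a_m t^m + a_{m−1} t^{m−1} + … + a_1 t + a_0 be a polynomial with real coefficients and a_m > 0, and define the operator P(S) on dom(P(S)) = dom(S^m) by P(S)f = a_m S^m f + a_{m−1} S^{m−1} f + … + a_1 S f + a_0 f. Then the deficiency indices of P(S) coincide with those of S^m: n₊(P(S)) = n₊(S^m) and n₋(P(S)) = n₋(S^m), as cardinals. -/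
open scoped InnerProductSpace
open Cardinal

noncomputable section

variable {E F G H : Type*}
  [NormedAddCommGroup E] [InnerProductSpace ℂ E] [CompleteSpace E]
  [NormedAddCommGroup F] [InnerProductSpace ℂ F] [CompleteSpace F]
  [NormedAddCommGroup G] [InnerProductSpace ℂ G] [CompleteSpace G]
  [NormedAddCommGroup H] [InnerProductSpace ℂ H] [CompleteSpace H]

theorem pd_sq_le {x y : ℝ} (hy : 0 ≤ y) (h : x ^ 2 ≤ y ^ 2) : x ≤ y := by
  nlinarith [abs_le_of_sq_le_sq h hy, le_abs_self x]

theorem pd_mem_pcomp {X : Type*} [NormedAddCommGroup X] [InnerProductSpace ℂ X]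
    (S T : X →ₗ.[ℂ] X) (f : X) (hf : f ∈ (pcomp S T).domain) :
    ∃ (h : f ∈ T.domain) (h' : T ⟨f, h⟩ ∈ S.domain), pcomp S T ⟨f, hf⟩ = S ⟨T ⟨f, h⟩, h'⟩ := by
  have hf' := hf
  obtain ⟨y, hy, hyf⟩ := hf'
  subst hyf
  refine ⟨y.2, hy, ?_⟩
  have key : (Submodule.equivMapOfInjective T.domain.subtype (Submodule.injective_subtype _)
      (S.domain.comap T.toFun)).symm ⟨T.domain.subtype y, hf⟩ = ⟨y, hy⟩ := by
    rw [LinearEquiv.symm_apply_eq]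
    rfl
  change S.toFun ((T.toFun.restrict (p := S.domain.comap T.toFun) (q := S.domain) fun _ hx => hx)
    ((Submodule.equivMapOfInjective T.domain.subtype (Submodule.injective_subtype _)
      (S.domain.comap T.toFun)).symm ⟨T.domain.subtype y, hf⟩)) = _
  rw [key]
  rfl

theorem pd_pow_succ {X : Type*} [NormedAddCommGroup X] [InnerProductSpace ℂ X]
    (S : X →ₗ.[ℂ] X) (n : ℕ) (f : X) (hf : f ∈ (pmapPow S (n + 1)).domain) :
    ∃ (h : f ∈ (pmapPow S n).domain) (h' : pmapPow S n ⟨f, h⟩ ∈ S.domain),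
      pmapPow S (n + 1) ⟨f, hf⟩ = S ⟨pmapPow S n ⟨f, h⟩, h'⟩ := by
  cases n with
  | zero => exact ⟨trivial, hf, rfl⟩
  | succ n => exact pd_mem_pcomp S (pmapPow S (n + 1)) f hf

open Classical in
def pdSeq {X : Type*} [NormedAddCommGroup X] [InnerProductSpace ℂ X]
    (S : X →ₗ.[ℂ] X) (f : X) (j : ℕ) : X :=
  if h : f ∈ (pmapPow S j).domain then pmapPow S j ⟨f, h⟩ else 0

theorem pdSeq_eq {X : Type*} [NormedAddCommGroup X] [InnerProductSpace ℂ X]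
    (S : X →ₗ.[ℂ] X) (f : X) (j : ℕ) (h : f ∈ (pmapPow S j).domain) :
    pdSeq S f j = pmapPow S j ⟨f, h⟩ := by
  simp [pdSeq, h]

theorem pdSeq_zero {X : Type*} [NormedAddCommGroup X] [InnerProductSpace ℂ X]
    (S : X →ₗ.[ℂ] X) (f : X) : pdSeq S f 0 = f :=
  pdSeq_eq S f 0 trivial

theorem pd_dom_mono {X : Type*} [NormedAddCommGroup X] [InnerProductSpace ℂ X]
    (S : X →ₗ.[ℂ] X) (f : X) {j m : ℕ} (hj : j ≤ m) (hf : f ∈ (pmapPow S m).domain) :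
    f ∈ (pmapPow S j).domain := by
  induction m, hj using Nat.le_induction with
  | base => exact hf
  | succ n _ ih => exact ih (pd_pow_succ S n f hf).1

theorem pdSeq_succ {X : Type*} [NormedAddCommGroup X] [InnerProductSpace ℂ X]
    (S : X →ₗ.[ℂ] X) (f : X) {j m : ℕ} (hj : j < m) (hf : f ∈ (pmapPow S m).domain) :
    ∃ h : pdSeq S f j ∈ S.domain, pdSeq S f (j + 1) = S ⟨pdSeq S f j, h⟩ := by
  have h1 : f ∈ (pmapPow S (j + 1)).domain := pd_dom_mono S f hj hf
  obtain ⟨h, h', e⟩ := pd_pow_succ S j f h1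
  refine ⟨by rw [pdSeq_eq S f j h]; exact h', ?_⟩
  rw [pdSeq_eq S f _ h1, e]
  congr 2
  exact (pdSeq_eq S f j h).symm

theorem pdSeq_inner {X : Type*} [NormedAddCommGroup X] [InnerProductSpace ℂ X]
    (S : X →ₗ.[ℂ] X) (hS : IsSymmP S) (f : X) {m : ℕ} (hf : f ∈ (pmapPow S m).domain)
    (k i l : ℕ) (hi : i + k ≤ m) (hl : l + k ≤ m) :
    ⟪pdSeq S f (i + k), pdSeq S f l⟫_ℂ = ⟪pdSeq S f i, pdSeq S f (l + k)⟫_ℂ := by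
  induction k generalizing l with
  | zero => rfl
  | succ k ih =>
    obtain ⟨h1, e1⟩ := pdSeq_succ S f (j := i + k) (m := m) (by omega) hf
    obtain ⟨h2, e2⟩ := pdSeq_succ S f (j := l) (m := m) (by omega) hf
    have := hS ⟨_, h1⟩ ⟨_, h2⟩
    rw [← e1, ← e2] at this
    have h3 := ih (l + 1) (by omega) (by omega)
    rw [show i + (k + 1) = i + k + 1 by ring, this, h3]
    congr 2
    ring

/-- interpolation for log-convex sequences -/
theorem pd_interp (m : ℕ) : ∀ ε : ℝ, 0 < ε → ∃ C : ℝ, 0 ≤ C ∧ ∀ x : ℕ → ℝ, (∀ j, 0 ≤ x j) →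
    (∀ j, j + 2 ≤ m → x (j + 1) ^ 2 ≤ x j * x (j + 2)) →
    ∀ j < m, x j ≤ ε * x m + C * x 0 := by
  induction m with
  | zero => exact fun ε _ => ⟨0, le_rfl, fun x _ _ j hj => absurd hj (Nat.not_lt_zero j)⟩
  | succ m ih =>
    -- the top case `j = m`
    have top : ∀ ε : ℝ, 0 < ε → ∃ C : ℝ, 0 ≤ C ∧ ∀ x : ℕ → ℝ, (∀ j, 0 ≤ x j) →
        (∀ j, j + 2 ≤ m + 1 → x (j + 1) ^ 2 ≤ x j * x (j + 2)) →
        x m ≤ ε * x (m + 1) + C * x 0 := by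
      intro ε hε
      cases m with
      | zero =>
        refine ⟨1, by norm_num, fun x hx _ => ?_⟩
        have := mul_nonneg hε.le (hx (0 + 1))
        linarith
      | succ n =>
        obtain ⟨C, hC, h⟩ := ih (ε / 2) (by positivity)
        refine ⟨1 / ε * C, by positivity, fun x hx hl => ?_⟩
        have h1 := h x hx (fun j hj => hl j (by omega)) n (by omega)
        have h2 := hl n (by omega)
        -- x_{n+1} ≤ (ε/2) x_{n+2} + (1/(2ε)) x_n
        have h3 : x (n + 1) ≤ ε / 2 * x (n + 2) + 1 / (2 * ε) * x n := by
          apply pd_sq_le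
          · have := hx (n + 2); have := hx n; positivity
          · refine h2.trans ?_
            have e : (ε / 2 * x (n + 2) + 1 / (2 * ε) * x n) ^ 2 - x n * x (n + 2)
              = (ε / 2 * x (n + 2) - 1 / (2 * ε) * x n) ^ 2 := by field_simp; ring
            nlinarith [sq_nonneg (ε / 2 * x (n + 2) - 1 / (2 * ε) * x n)]
        have h4 : 1 / (2 * ε) * x n ≤ 1 / (2 * ε) * (ε / 2 * x (n + 1) + C * x 0) :=
          mul_le_mul_of_nonneg_left h1 (by positivity)
        have h5 : 1 / (2 * ε) * (ε / 2 * x (n + 1) + C * x 0)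
          = 1 / 4 * x (n + 1) + 1 / 2 * (1 / ε * C * x 0) := by field_simp; ring
        have h6 : 0 ≤ 1 / ε * C * x 0 := by have := hx 0; positivity
        have h7 := mul_nonneg hε.le (hx (n + 2))
        have : x (n + 1 + 1) = x (n + 2) := rfl
        rw [this]
        nlinarith
    intro ε hε
    obtain ⟨C1, hC1, h1⟩ := top ε hε
    obtain ⟨C2, hC2, h2⟩ := ih 1 one_pos
    refine ⟨C1 + C2, by positivity, fun x hx hl j hj => ?_⟩
    have a1 := h1 x hx hl
    have b0 := mul_nonneg hC2 (hx 0)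
    rcases Nat.lt_succ_iff_lt_or_eq.mp hj with hj | rfl
    · have a2 := h2 x hx (fun j hj => hl j (by omega)) j hj
      nlinarith
    · nlinarith

theorem pd_rank_le {X : Type*} [NormedAddCommGroup X] [InnerProductSpace ℂ X] [CompleteSpace X]
    (D : Submodule ℂ X) (B B' : D →ₗ[ℂ] X) (c : ℝ) (hc0 : 0 ≤ c) (hc : c < 1)
    (h : ∀ f, ‖B f - B' f‖ ≤ c * ‖B f‖) :
    Module.rank ℂ (LinearMap.range B')ᗮ ≤ Module.rank ℂ (LinearMap.range B)ᗮ := by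
  let p : (LinearMap.range B')ᗮ →ₗ[ℂ] (LinearMap.range B)ᗮ :=
    ((LinearMap.range B)ᗮ.orthogonalProjectionOnto : X →ₗ[ℂ] _) ∘ₗ (LinearMap.range B')ᗮ.subtype
  refine LinearMap.rank_le_of_injective p ?_
  rw [← LinearMap.ker_eq_bot, LinearMap.ker_eq_bot']
  intro x hx
  have hx1 : (x : X) ∈ (LinearMap.range B)ᗮᗮ := by
    rw [← Submodule.orthogonalProjectionOnto_eq_zero_iff]
    exact hx
  rw [Submodule.orthogonal_orthogonal_eq_closure] at hx1
  have key : ∀ y ∈ closure ((LinearMap.range B : Submodule ℂ X) : Set X),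
      ‖⟪(x : X), y⟫_ℂ‖ ≤ c * ‖(x : X)‖ * ‖y‖ := by
    intro y hy
    have hcl : IsClosed {y : X | ‖⟪(x : X), y⟫_ℂ‖ ≤ c * ‖(x : X)‖ * ‖y‖} :=
      isClosed_le (by fun_prop) (by fun_prop)
    refine closure_minimal ?_ hcl hy
    rintro _ ⟨f, rfl⟩
    have h0 : ⟪(x : X), B' f⟫_ℂ = 0 :=
      Submodule.inner_left_of_mem_orthogonal (LinearMap.mem_range_self B' f) x.2
    have : ⟪(x : X), B f⟫_ℂ = ⟪(x : X), B f - B' f⟫_ℂ := by rw [inner_sub_right, h0, sub_zero]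
    simp only [Set.mem_setOf_eq]
    rw [this]
    calc _ ≤ ‖(x : X)‖ * ‖B f - B' f‖ := norm_inner_le_norm _ _
      _ ≤ ‖(x : X)‖ * (c * ‖B f‖) := by gcongr; exact h f
      _ = _ := by ring
  have k := key x hx1
  rw [inner_self_eq_norm_sq_to_K] at k
  have k' : ‖(x : X)‖ ^ 2 ≤ c * ‖(x : X)‖ * ‖(x : X)‖ := by simpa using k
  have : ‖(x : X)‖ ^ 2 ≤ 0 := by nlinarith [sq_nonneg ‖(x : X)‖]
  have : ‖(x : X)‖ = 0 := by nlinarith [sq_nonneg ‖(x : X)‖]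
  exact Subtype.ext (norm_eq_zero.mp this)

theorem pd_homotopy {X : Type*} [NormedAddCommGroup X] [InnerProductSpace ℂ X] [CompleteSpace X]
    (D : Submodule ℂ X) (B0 B1 : D →ₗ[ℂ] X) (K : ℝ) (hK0 : 0 ≤ K)
    (h : ∀ t : ℝ, 0 ≤ t → t ≤ 1 → ∀ f, ‖B1 f - B0 f‖ ≤ K * ‖B0 f + (t : ℂ) • (B1 f - B0 f)‖) :
    Module.rank ℂ (LinearMap.range B1)ᗮ = Module.rank ℂ (LinearMap.range B0)ᗮ := by
  let T : ℝ → D →ₗ[ℂ] X := fun t => B0 + (t : ℂ) • (B1 - B0)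
  have step : ∀ s t : ℝ, 0 ≤ t → t ≤ 1 → |t - s| * K < 1 →
      Module.rank ℂ (LinearMap.range (T s))ᗮ ≤ Module.rank ℂ (LinearMap.range (T t))ᗮ := by
    intro s t h0 h1 hst
    refine pd_rank_le D (T t) (T s) (|t - s| * K) (by positivity) hst fun f => ?_
    have e : T t f - T s f = ((t - s : ℝ) : ℂ) • (B1 f - B0 f) := by
      simp only [T, LinearMap.add_apply, LinearMap.smul_apply, LinearMap.sub_apply]
      push_cast
      rw [sub_smul]
      abel
    rw [e, norm_smul, Complex.norm_real, Real.norm_eq_abs, mul_assoc]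
    gcongr
    exact h t h0 h1 f
  obtain ⟨N, hN⟩ := exists_nat_gt K
  have hNpos : (0 : ℝ) < N := lt_of_le_of_lt hK0 hN
  have all : ∀ k : ℕ, k ≤ N → Module.rank ℂ (LinearMap.range (T (k / N)))ᗮ =
      Module.rank ℂ (LinearMap.range (T 0))ᗮ := by
    intro k
    induction k with
    | zero => intro _; rw [Nat.cast_zero, zero_div]
    | succ k ih =>
      intro hk
      rw [← ih (by omega)]
      have hk1 : ((k + 1 : ℕ) : ℝ) ≤ N := by exact_mod_cast hk
      have hk0 : (k : ℝ) ≤ N := by push_cast at hk1; linarith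
      have hd : ((k + 1 : ℕ) : ℝ) / N - k / N = 1 / N := by push_cast; field_simp; ring
      have hs : |1 / (N : ℝ)| * K < 1 := by
        rw [abs_of_pos (by positivity), one_div, inv_mul_lt_iff₀ hNpos]; linarith
      apply le_antisymm
      · refine step _ _ (by positivity) ((div_le_one hNpos).mpr hk0) ?_
        rw [abs_sub_comm, hd]; exact hs
      · refine step _ _ (by positivity) ((div_le_one hNpos).mpr hk1) ?_
        rw [hd]; exact hs
  have := all N le_rfl
  rw [div_self hNpos.ne'] at this
  have e1 : T 1 = B1 := by ext f; simp [T]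
  have e0 : T 0 = B0 := by ext f; simp [T]
  rwa [e1, e0] at this

theorem pd_rank_kerAt {X : Type*} [NormedAddCommGroup X] [InnerProductSpace ℂ X] [CompleteSpace X]
    (A : X →ₗ.[ℂ] X) (hA : Dense (A.domain : Set X)) (μ : ℂ) :
    Module.rank ℂ (kerAt A.adjoint μ) =
      Module.rank ℂ (LinearMap.range (A.toFun - (starRingEnd ℂ μ) • A.domain.subtype))ᗮ := by
  have e : (kerAt A.adjoint μ).map A.adjoint.domain.subtype =
      (LinearMap.range (A.toFun - (starRingEnd ℂ μ) • A.domain.subtype))ᗮ := by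
    ext x
    constructor
    · rintro ⟨y, hy, rfl⟩
      rw [Submodule.mem_orthogonal']
      rintro _ ⟨f, rfl⟩
      have hy' : A.adjoint y - μ • (y : X) = 0 := hy
      have := LinearPMap.adjoint_isFormalAdjoint hA y f
      rw [sub_eq_zero.mp hy', inner_smul_left] at this
      change ⟪(y : X), A f - (starRingEnd ℂ μ) • (f : X)⟫_ℂ = 0
      rw [inner_sub_right, inner_smul_right, ← this, sub_self]
    · intro hx
      rw [Submodule.mem_orthogonal'] at hx
      have h : ∀ f : A.domain, ⟪μ • x, (f : X)⟫_ℂ = ⟪x, A f⟫_ℂ := by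
        intro f
        have := hx _ (LinearMap.mem_range_self _ f)
        change ⟪x, A f - (starRingEnd ℂ μ) • (f : X)⟫_ℂ = 0 at this
        rw [inner_sub_right, inner_smul_right] at this
        rw [inner_smul_left]
        exact (sub_eq_zero.mp this).symm
      have hxd : x ∈ A.adjoint.domain := LinearPMap.mem_adjoint_domain_of_exists x ⟨μ • x, h⟩
      refine ⟨⟨x, hxd⟩, ?_, rfl⟩
      change A.adjoint ⟨x, hxd⟩ - μ • x = 0
      rw [sub_eq_zero]
      exact LinearPMap.adjoint_apply_eq hA ⟨x, hxd⟩ h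
  rw [← e]
  exact (Submodule.equivMapOfInjective A.adjoint.domain.subtype
    (Submodule.injective_subtype _) _).rank_eq

theorem pd_norm {X : Type*} [NormedAddCommGroup X] [InnerProductSpace ℂ X]
    (q f : X) (μ : ℂ) (hμ : μ.re = 0) (hμ1 : ‖μ‖ = 1) (h : ⟪q, f⟫_ℂ = ⟪f, q⟫_ℂ) :
    ‖q‖ ≤ ‖q - μ • f‖ ∧ ‖f‖ ≤ ‖q - μ • f‖ := by
  have him : (⟪q, f⟫_ℂ).im = 0 := by
    have h2 := inner_conj_symm (𝕜 := ℂ) q f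
    rw [← h] at h2
    exact Complex.conj_eq_iff_im.mp h2
  have e : ‖q - μ • f‖ ^ 2 = ‖q‖ ^ 2 + ‖f‖ ^ 2 := by
    rw [norm_sub_sq (𝕜 := ℂ), inner_smul_right, norm_smul, hμ1]
    simp [hμ, him]
  constructor
  · exact pd_sq_le (norm_nonneg _) (by rw [e]; nlinarith [sq_nonneg ‖f‖])
  · exact pd_sq_le (norm_nonneg _) (by rw [e]; nlinarith [sq_nonneg ‖q‖])

theorem pd_estimate {X : Type*} [NormedAddCommGroup X] [InnerProductSpace ℂ X]
    (S : X →ₗ.[ℂ] X) (hS : IsSymmP S) (m : ℕ) (a : ℕ → ℝ) (ham : 0 < a m)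
    (μ : ℂ) (hμ : μ.re = 0) (hμ1 : ‖μ‖ = 1) :
    ∃ K : ℝ, 0 ≤ K ∧ ∀ t : ℝ, 0 ≤ t → t ≤ 1 → ∀ f ∈ (pmapPow S m).domain,
      ‖(∑ j ∈ Finset.range (m + 1), (a j : ℂ) • pdSeq S f j) - pdSeq S f m‖ ≤
      K * ‖pdSeq S f m - μ • f + (t : ℂ) •
        ((∑ j ∈ Finset.range (m + 1), (a j : ℂ) • pdSeq S f j) - pdSeq S f m)‖ := by
  set M : ℝ := ∑ j ∈ Finset.range m, |a j| with hM
  have hM0 : 0 ≤ M := Finset.sum_nonneg fun _ _ => abs_nonneg _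
  set c : ℝ := min 1 (a m) with hcdef
  have hc : 0 < c := lt_min one_pos ham
  have hε : 0 < c / (2 * (M + 1)) := by positivity
  set ε := c / (2 * (M + 1)) with hεdef
  obtain ⟨C, hC, hinterp⟩ := pd_interp m ε hε
  set Y : ℝ := 2 * (1 + M * C) / c with hY
  have hY0 : 0 ≤ Y := by positivity
  refine ⟨|a m - 1| * Y + M * (ε * Y + C), by positivity, ?_⟩
  intro t ht0 ht1 f hf
  set u := pdSeq S f with hu
  have hu0 : u 0 = f := pdSeq_zero S f
  have hx := hinterp (fun j => ‖u j‖) (fun _ => norm_nonneg _) (by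
    intro j hj
    have h1 := pdSeq_inner S hS f hf 1 j (j + 1) (by omega) (by omega)
    have h2 : ‖⟪u (j + 1), u (j + 1)⟫_ℂ‖ = ‖u (j + 1)‖ ^ 2 := by
      rw [inner_self_eq_norm_sq_to_K]; simp
    change ‖u (j + 1)‖ ^ 2 ≤ ‖u j‖ * ‖u (j + 2)‖
    rw [← h2, h1]
    exact norm_inner_le_norm _ _)
  simp only [hu0] at hx
  set L := ∑ j ∈ Finset.range m, (a j : ℂ) • u j with hL
  have hLn : ‖L‖ ≤ M * (ε * ‖u m‖ + C * ‖f‖) := by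
    rw [hM, Finset.sum_mul]
    refine norm_sum_le_of_le _ fun j hj => ?_
    rw [norm_smul, Complex.norm_real, Real.norm_eq_abs]
    gcongr
    exact hx j (Finset.mem_range.mp hj)
  rw [Finset.sum_range_succ, ← hL]
  have sym : ∀ j ≤ m, ⟪u j, f⟫_ℂ = ⟪f, u j⟫_ℂ := by
    intro j hj
    have := pdSeq_inner S hS f hf j 0 0 (by omega) (by omega)
    simpa [← hu, hu0] using this
  have symL : ⟪L, f⟫_ℂ = ⟪f, L⟫_ℂ := by
    rw [hL, sum_inner, inner_sum]
    refine Finset.sum_congr rfl fun j hj => ?_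
    rw [inner_smul_left, inner_smul_right, sym j (Finset.mem_range.mp hj).le, Complex.conj_ofReal]
  set b : ℝ := 1 + t * (a m - 1) with hb
  have hbc : c ≤ b := by
    have h1 : c ≤ 1 := min_le_left _ _
    have h2 : c ≤ a m := min_le_right _ _
    nlinarith
  set q := (b : ℂ) • u m + (t : ℂ) • L with hq
  have eq : u m - μ • f + (t : ℂ) • (L + (a m : ℂ) • u m - u m) = q - μ • f := by
    rw [hq, hb]
    push_cast
    module
  rw [eq]
  have symq : ⟪q, f⟫_ℂ = ⟪f, q⟫_ℂ := by
    rw [hq, inner_add_left, inner_add_right, inner_smul_left, inner_smul_left, inner_smul_right,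
      inner_smul_right, sym m le_rfl, symL, Complex.conj_ofReal, Complex.conj_ofReal]
  obtain ⟨n1, n2⟩ := pd_norm q f μ hμ hμ1 symq
  set y := ‖q - μ • f‖ with hy
  have hb0 : 0 < b := lt_of_lt_of_le hc hbc
  have l1 : b * ‖u m‖ ≤ ‖q‖ + ‖L‖ := by
    have : (b : ℂ) • u m = q - (t : ℂ) • L := by rw [hq]; abel
    have h2 : ‖(b : ℂ) • u m‖ ≤ ‖q‖ + ‖(t : ℂ) • L‖ := by rw [this]; exact norm_sub_le _ _
    rw [norm_smul, norm_smul, Complex.norm_real, Complex.norm_real, Real.norm_eq_abs,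
      Real.norm_eq_abs, abs_of_pos hb0, abs_of_nonneg ht0] at h2
    nlinarith [norm_nonneg L]
  have hMε : M * ε ≤ c / 2 := by
    rw [hεdef, mul_div_assoc', div_le_div_iff₀ (by positivity) (by norm_num)]
    nlinarith
  have l2 : c * ‖u m‖ ≤ b * ‖u m‖ := by gcongr
  have l3 : M * ε * ‖u m‖ ≤ c / 2 * ‖u m‖ := by gcongr
  have l4 : M * C * ‖f‖ ≤ M * C * y := by gcongr
  have l5 : ‖u m‖ ≤ Y * y := by
    rw [hY, div_mul_eq_mul_div, le_div_iff₀ hc]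
    nlinarith
  have e2 : L + (a m : ℂ) • u m - u m = ((a m - 1 : ℝ) : ℂ) • u m + L := by
    push_cast; module
  rw [e2]
  calc _ ≤ ‖((a m - 1 : ℝ) : ℂ) • u m‖ + ‖L‖ := norm_add_le _ _
    _ ≤ |a m - 1| * ‖u m‖ + M * (ε * ‖u m‖ + C * ‖f‖) := by
      rw [norm_smul, Complex.norm_real, Real.norm_eq_abs]; gcongr
    _ ≤ |a m - 1| * (Y * y) + M * (ε * (Y * y) + C * y) := by gcongr
    _ = _ := by ring

/-- For a densely defined, closed, symmetric `S` with `S^m` densely defined, and a real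
polynomial `P(t) = a_m t^m + ⋯ + a_0` with `a_m > 0`, the operator `P(S)` defined on
`dom(S^m)` by `P(S) f = ∑_{j=0}^m a_j S^j f` has the same deficiency indices as `S^m`. -/
theorem polynomial_deficiency_indices (S : H →ₗ.[ℂ] H)
    (hd : Dense (S.domain : Set H)) (hc : S.IsClosed) (hsym : IsSymmP S)
    (m : ℕ) (hm : 1 ≤ m)
    (hdm : Dense (((pmapPow S m).domain : Submodule ℂ H) : Set H))
    (a : ℕ → ℝ) (ham : 0 < a m)
    (A : H →ₗ.[ℂ] H) (hdom : A.domain = (pmapPow S m).domain)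
    (hval : ∀ (f : H) (hf : f ∈ A.domain) (g : ℕ → H),
      (∀ (j : ℕ) (hfj : f ∈ (pmapPow S j).domain), g j = pmapPow S j ⟨f, hfj⟩) →
      A ⟨f, hf⟩ = ∑ j ∈ Finset.range (m + 1), (a j : ℂ) • g j) :
    nPlus A = nPlus (pmapPow S m) ∧ nMinus A = nMinus (pmapPow S m) := by
  obtain ⟨D, B⟩ := A
  simp only at hdom
  subst hdom
  have hB : ∀ f : (pmapPow S m).domain,
      B f = ∑ j ∈ Finset.range (m + 1), (a j : ℂ) • pdSeq S f j := fun f =>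
    hval f f.2 (pdSeq S f) (fun j hj => pdSeq_eq S f j hj)
  have main : ∀ μ : ℂ, μ.re = 0 → ‖μ‖ = 1 →
      Module.rank ℂ (kerAt (LinearPMap.adjoint ⟨(pmapPow S m).domain, B⟩) μ) =
        Module.rank ℂ (kerAt (pmapPow S m).adjoint μ) := by
    intro μ hμ hμ1
    rw [pd_rank_kerAt (pmapPow S m) hdm, pd_rank_kerAt ⟨(pmapPow S m).domain, B⟩ hdm]
    obtain ⟨K, hK0, hK⟩ := pd_estimate S hsym m a ham (starRingEnd ℂ μ) (by simpa using hμ)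
      (by simpa using hμ1)
    refine pd_homotopy (pmapPow S m).domain _ _ K hK0 fun t ht0 ht1 f => ?_
    have h := hK t ht0 ht1 f f.2
    have e : (pmapPow S m).toFun f = pdSeq S f m := (pdSeq_eq S f m f.2).symm
    simp only [LinearMap.sub_apply, LinearMap.smul_apply, Submodule.subtype_apply,
      sub_sub_sub_cancel_right]
    rw [hB f, e]
    exact h
  exact ⟨main _ (by simp) (by simp), main _ (by simp) (by simp)⟩
end
end

section
/- Let T : dom(T) ⊆ H₁ → H₂ be a densely defined, closed operator between complex Hilbert spaces. Then ran(T) is closed in H₂ if and only if there exists c > 0 such that ‖Tf‖ ≥ c‖f‖ for all f ∈ dom(T) that are orthogonal to ker(T) (i.e., for all f ∈ dom(T) ∩ (ker T)^⊥). -/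
open scoped InnerProductSpace
open Cardinal

noncomputable section

variable {E F G H : Type*}
  [NormedAddCommGroup E] [InnerProductSpace ℂ E] [CompleteSpace E]
  [NormedAddCommGroup F] [InnerProductSpace ℂ F] [CompleteSpace F]
  [NormedAddCommGroup G] [InnerProductSpace ℂ G] [CompleteSpace G]
  [NormedAddCommGroup H] [InnerProductSpace ℂ H] [CompleteSpace H]

/-- A densely defined closed operator between complex Hilbert spaces has closed range
if and only if there is `c > 0` with `‖T f‖ ≥ c ‖f‖` for all `f ∈ dom T` orthogonal
to `ker T`. -/
theorem closed_range_iff_bounded_below (T : E →ₗ.[ℂ] F)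
    (hd : Dense (T.domain : Set E)) (hc : T.IsClosed) :
    IsClosed ((LinearMap.range T.toFun : Submodule ℂ F) : Set F) ↔
    ∃ c : ℝ, 0 < c ∧ ∀ f : T.domain,
      (f : E) ∈ ((LinearMap.ker T.toFun).map T.domain.subtype)ᗮ →
      c * ‖(f : E)‖ ≤ ‖T f‖ := by
  classical
  set K : Submodule ℂ E := (LinearMap.ker T.toFun).map T.domain.subtype with hK
  have memK : ∀ x : E, x ∈ K ↔ (x, (0 : F)) ∈ T.graph := by
    intro x
    rw [LinearPMap.mem_graph_iff]
    simp only [hK, Submodule.mem_map, LinearMap.mem_ker]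
    constructor
    · rintro ⟨y, h1, h2⟩
      exact ⟨y, h2, h1⟩
    · rintro ⟨y, h1, h2⟩
      exact ⟨y, h2, h1⟩
  have hgc : IsClosed (T.graph : Set (E × F)) := hc
  have hKc : IsClosed (K : Set E) := by
    have : (K : Set E) = (fun x : E => (x, (0 : F))) ⁻¹' (T.graph : Set (E × F)) := by
      ext x
      exact memK x
    rw [this]
    exact hgc.preimage (by fun_prop)
  have : CompleteSpace K := hKc.completeSpace_coe
  let N : Submodule ℂ (E × F) := T.graph ⊓ Submodule.comap (LinearMap.fst ℂ E F) Kᗮ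
  have hNc : IsClosed (N : Set (E × F)) := by
    have : (N : Set (E × F)) = (T.graph : Set (E × F)) ∩ Prod.fst ⁻¹' (Kᗮ : Set E) := rfl
    rw [this]
    exact hgc.inter (K.isClosed_orthogonal.preimage continuous_fst)
  have : CompleteSpace N := hNc.completeSpace_coe
  let P : N →L[ℂ] F := (ContinuousLinearMap.snd ℂ E F).comp N.subtypeL
  have hP : ∀ z : N, P z = (z : E × F).2 := fun _ => rfl
  have hinj : Function.Injective P := by
    rw [injective_iff_map_eq_zero]
    rintro ⟨⟨x, y⟩, h1, h2⟩ h
    have hy : y = 0 := h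
    subst hy
    have hx : x ∈ K := (memK x).2 h1
    have h2' : x ∈ Kᗮ := h2
    have : x = 0 := by
      have := Submodule.inner_right_of_mem_orthogonal hx h2'
      exact inner_self_eq_zero.1 this
    subst this
    rfl
  have hran : ((LinearMap.range T.toFun : Submodule ℂ F) : Set F) = Set.range P := by
    ext y
    constructor
    · rintro ⟨f, rfl⟩
      have hk : K.starProjection (f : E) ∈ K := K.starProjection_apply_mem _
      have hg : ((f : E), T f) - (K.starProjection (f : E), (0 : F)) ∈ T.graph :=
        T.graph.sub_mem (T.mem_graph f) ((memK _).1 hk)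
      refine ⟨⟨_, hg, ?_⟩, ?_⟩
      · exact K.sub_starProjection_mem_orthogonal _
      · rw [hP]
        simp
    · rintro ⟨⟨⟨x, y⟩, h1, h2⟩, rfl⟩
      obtain ⟨f, hf1, hf2⟩ := (LinearPMap.mem_graph_iff T).1 h1
      exact ⟨f, hf2⟩
  rw [hran]
  constructor
  · intro hcl
    obtain ⟨C, hC⟩ :=
      P.antilipschitz_of_injective_of_isClosed_range hinj hcl
    refine ⟨((C : ℝ) + 1)⁻¹, by positivity, fun f hf => ?_⟩
    have h := hC.le_mul_norm (map_zero P) ⟨((f : E), T f), T.mem_graph f, hf⟩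
    have h1 : ‖(f : E)‖ ≤ C * ‖T f‖ := (norm_fst_le ((f : E), T f)).trans h
    rw [inv_mul_le_iff₀ (by positivity)]
    nlinarith [norm_nonneg (T f)]
  · rintro ⟨c, hc0, hb⟩
    have hanti : AntilipschitzWith (max c⁻¹ 1).toNNReal P := by
      refine AddMonoidHomClass.antilipschitz_of_bound P ?_
      rintro ⟨⟨x, y⟩, h1, h2⟩
      obtain ⟨f, hf1, hf2⟩ := (LinearPMap.mem_graph_iff T).1 h1
      simp only at hf1 hf2
      subst hf1 hf2
      have := hb f h2
      rw [Real.coe_toNNReal _ (by positivity)]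
      change max ‖(f : E)‖ ‖T f‖ ≤ max c⁻¹ 1 * ‖T f‖
      apply max_le
      · have h3 : ‖(f : E)‖ ≤ c⁻¹ * ‖T f‖ := by
          rwa [le_inv_mul_iff₀ hc0]
        exact h3.trans (by gcongr; exact le_max_left _ _)
      · calc ‖T f‖ = 1 * ‖T f‖ := (one_mul _).symm
          _ ≤ _ := by gcongr; exact le_max_right _ _
    exact hanti.isClosed_range P.uniformContinuous
end
end
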